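/- Oppenheim conjecture (theorem of Margulis): Let n ≥ 3 and let Q(x) = xᵀAx be a quadratic form on ℝⁿ given by a nonzero symmetric real n×n matrix A such that Q is nondegenerate (det(A) ≠ 0), indefinite (Q takes both positive and negative values), and Q is not a real scalar multiple of a quadratic form with rational coefficients. Then the image Q(ℤⁿ) = {Q(x) : x ∈ ℤⁿ} is dense in ℝ. -/

import Mathlib

open Matrix

/-!
For `n > 3` the form restricts to an integral triple of vectors on which it is still nondegenerate,
indefinite and not proportional to a rational form, so `n = 3` suffices. Once a ternary form `Q`
takes arbitrarily small nonzero values at integral vectors, completing the square and reducing the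
binary Schur complement gives small values of both signs, and the values `Q (k v) = k² Q v` with
`Q v` small come close to every real number.

If `Q` vanishes at a nonzero integral vector, it is integrally equivalent to a form whose matrix has
vanishing upper left entry, and irrational ratios among the remaining entries produce small values.

Otherwise suppose `ε ≤ |Q|` on the nonzero integral vectors. By Mahler's criterion the closure of
the orbit of `Q` under `SL(3, ℤ)` lifts to a set of `g ∈ SL(3, ℝ)` that is compact modulo
`SL(3, ℤ)`. It contains a minimal set `Y` of the unipotent flow `U` preserving
`J = 2 x₀ x₂ - x₁²`. The set of those `σ` for which `J + σ x₂²` stays bounded away from zero on the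
lattices of `Y` has empty interior, since `J + σ x₂²` vanishes at lattice vectors for a dense set of
`σ`. But if forms of the orbit closure accumulated on a form over `Y`, the polynomial divergence of
trajectories of `U` would fill an interval of such `σ`, unless they all lie on the line
`J + ℝ x₂²`, where the gaps of the set of `σ` prevent it. So the orbit closure has an isolated
point, the orbit is discrete, and the stabilizer of `Q` is cocompact modulo its integral points.
Applying a `ℚ`-linear map `φ : ℝ → ℚ` to the entries of `Q` yields a rational form whose orbit under
the stabilizer of `Q` is therefore bounded. Such a form is proportional to `Q`, so `Q` is
proportional to a rational form.
-/

namespace Oppenheim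

open Filter Topology Set
open scoped MatrixGroups

/-! ### Quadratic forms and integral points -/

section IntegralPoints

variable {ι κ : Type*}

/-- An integral vector, seen as a real vector. -/
def intVec (v : ι → ℤ) : ι → ℝ := fun i => (v i : ℝ)

/-- An integral matrix, seen as a real matrix. -/
def intMat (P : Matrix ι κ ℤ) : Matrix ι κ ℝ := P.map (Int.cast : ℤ → ℝ)

theorem intVec_add (v w : ι → ℤ) : intVec (v + w) = intVec v + intVec w := by
  ext i
  simp [intVec]

theorem intVec_single [DecidableEq ι] (i : ι) (k : ℤ) :
    intVec (Pi.single i k) = Pi.single i (k : ℝ) := by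
  ext j
  rcases eq_or_ne j i with rfl | h <;> simp [intVec, *]

theorem intMat_mulVec_intVec [Fintype κ] (P : Matrix ι κ ℤ) (v : κ → ℤ) :
    intMat P *ᵥ intVec v = intVec (P *ᵥ v) := by
  ext i
  simp [mulVec, dotProduct, intVec, intMat]

end IntegralPoints

section Forms

variable {ι κ μ : Type*} [Fintype ι]

/-- The value at `x` of the quadratic form with matrix `A`. -/
def quadForm (A : Matrix ι ι ℝ) (x : ι → ℝ) : ℝ := x ⬝ᵥ A *ᵥ x

/-- The matrix of the form `x ↦ quadForm A (P *ᵥ x)`. For `P` invertible this is a change of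
variables; in general its entries are the values of the bilinear form of `A` on the columns of
`P`. -/
def pullback (A : Matrix ι ι ℝ) (P : Matrix ι κ ℝ) : Matrix κ κ ℝ := Pᵀ * A * P

theorem pullback_apply (A : Matrix ι ι ℝ) (P : Matrix ι κ ℝ) (i j : κ) :
    pullback A P i j = P.col i ⬝ᵥ A *ᵥ P.col j := by
  rw [pullback, Matrix.mul_assoc]
  rfl

theorem quadForm_pullback [Fintype κ] (A : Matrix ι ι ℝ) (P : Matrix ι κ ℝ) (x : κ → ℝ) :
    quadForm (pullback A P) x = quadForm A (P *ᵥ x) := by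
  simp only [quadForm, pullback, Matrix.mul_assoc]
  rw [← mulVec_mulVec, ← mulVec_mulVec, dotProduct_mulVec, vecMul_transpose]

theorem quadForm_smul (A : Matrix ι ι ℝ) (c : ℝ) (x : ι → ℝ) :
    quadForm A (c • x) = c ^ 2 * quadForm A x := by
  simp only [quadForm, mulVec_smul, smul_dotProduct, dotProduct_smul, smul_eq_mul]
  ring

theorem quadForm_intVec_smul (A : Matrix ι ι ℝ) (k : ℤ) (v : ι → ℤ) :
    quadForm A (intVec (k • v)) = k ^ 2 * quadForm A (intVec v) := by
  rw [← quadForm_smul]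
  congr 1
  ext i
  simp [intVec]

theorem dotProduct_mulVec_comm {A : Matrix ι ι ℝ} (hA : A.IsSymm) (x y : ι → ℝ) :
    x ⬝ᵥ A *ᵥ y = y ⬝ᵥ A *ᵥ x := by
  rw [dotProduct_mulVec, ← mulVec_transpose, hA.eq, dotProduct_comm]

theorem quadForm_add {A : Matrix ι ι ℝ} (hA : A.IsSymm) (x y : ι → ℝ) :
    quadForm A (x + y) = quadForm A x + 2 * (x ⬝ᵥ A *ᵥ y) + quadForm A y := by
  simp only [quadForm, mulVec_add, add_dotProduct, dotProduct_add]
  rw [dotProduct_mulVec_comm hA y x]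
  ring

theorem quadForm_add_left (A B : Matrix ι ι ℝ) (x : ι → ℝ) :
    quadForm (A + B) x = quadForm A x + quadForm B x := by
  simp only [quadForm, add_mulVec, dotProduct_add]

theorem quadForm_smul_left (c : ℝ) (A : Matrix ι ι ℝ) (x : ι → ℝ) :
    quadForm (c • A) x = c * quadForm A x := by
  simp only [quadForm, smul_mulVec, dotProduct_smul, smul_eq_mul]

theorem pullback_mul [Fintype κ] (A : Matrix ι ι ℝ) (P : Matrix ι κ ℝ) (R : Matrix κ μ ℝ) :
    pullback A (P * R) = pullback (pullback A P) R := by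
  simp only [pullback, transpose_mul, Matrix.mul_assoc]

theorem pullback_one [DecidableEq ι] (A : Matrix ι ι ℝ) : pullback A (1 : Matrix ι ι ℝ) = A := by
  simp [pullback]

theorem pullback_add (A B : Matrix ι ι ℝ) (P : Matrix ι κ ℝ) :
    pullback (A + B) P = pullback A P + pullback B P := by
  simp [pullback, Matrix.mul_add, Matrix.add_mul]

theorem pullback_smul (c : ℝ) (A : Matrix ι ι ℝ) (P : Matrix ι κ ℝ) :
    pullback (c • A) P = c • pullback A P := by
  simp [pullback]

theorem pullback_isSymm {A : Matrix ι ι ℝ} (hA : A.IsSymm) (P : Matrix ι κ ℝ) :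
    (pullback A P).IsSymm := by
  simp [pullback, IsSymm, transpose_mul, hA.eq, Matrix.mul_assoc]

theorem det_pullback [DecidableEq ι] (A P : Matrix ι ι ℝ) :
    (pullback A P).det = P.det ^ 2 * A.det := by
  simp only [pullback, det_mul, det_transpose]
  ring

@[fun_prop]
theorem continuous_quadForm {X : Type*} [TopologicalSpace X] {A : X → Matrix ι ι ℝ}
    {x : X → ι → ℝ} (hA : Continuous A) (hx : Continuous x) :
    Continuous fun t => quadForm (A t) (x t) := by
  unfold quadForm
  fun_prop

@[fun_prop]
theorem continuous_pullback {X : Type*} [TopologicalSpace X] {A : X → Matrix ι ι ℝ}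
    {P : X → Matrix ι κ ℝ} (hA : Continuous A) (hP : Continuous P) :
    Continuous fun t => pullback (A t) (P t) := by
  unfold pullback
  fun_prop

theorem quadForm_pullback_intMat [Fintype κ] (A : Matrix ι ι ℝ) (P : Matrix ι κ ℤ) (v : κ → ℤ) :
    quadForm (pullback A (intMat P)) (intVec v) = quadForm A (intVec (P *ᵥ v)) := by
  rw [quadForm_pullback, intMat_mulVec_intVec]

end Forms

theorem exists_smul_eq_intVec {ι : Type*} [Finite ι] (q : ι → ℚ) :
    ∃ N : ℤ, 0 < N ∧ ∃ v : ι → ℤ, (N : ℝ) • (fun i => (q i : ℝ)) = intVec v := by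
  obtain ⟨b, hb⟩ := IsLocalization.exist_integer_multiples_of_finite (nonZeroDivisors ℤ) q
  choose v hv using hb
  have hb0 : (b : ℤ) ≠ 0 := nonZeroDivisors.coe_ne_zero b
  refine ⟨b * b, mul_self_pos.2 hb0, (b : ℤ) • v, funext fun i => ?_⟩
  have hvi : (v i : ℝ) = (b : ℤ) * (q i : ℝ) := by
    have h := hv i
    simp only [algebraMap_int_eq, eq_intCast, zsmul_eq_mul] at h
    exact_mod_cast h
  simp [intVec, hvi, mul_assoc]

theorem exists_intVec_mem_of_isOpen_cone {ι : Type*} [Finite ι] {W : Set (ι → ℝ)}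
    (hW : IsOpen W) (hne : W.Nonempty)
    (hcone : ∀ w ∈ W, ∀ c : ℝ, 0 < c → c • w ∈ W) : ∃ v : ι → ℤ, intVec v ∈ W := by
  have hdense : DenseRange (Pi.map fun (_ : ι) (q : ℚ) => (q : ℝ)) :=
    DenseRange.piMap fun _ => Rat.denseRange_cast
  obtain ⟨q, hq⟩ := hdense.exists_mem_open hW hne
  obtain ⟨N, hN, v, hv⟩ := exists_smul_eq_intVec q
  exact ⟨v, hv ▸ hcone _ hq N (by exact_mod_cast hN)⟩

theorem quadForm_fin_three {A : Matrix (Fin 3) (Fin 3) ℝ} (hA : A.IsSymm) (x : Fin 3 → ℝ) :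
    quadForm A x = A 0 0 * x 0 ^ 2 + A 1 1 * x 1 ^ 2 + A 2 2 * x 2 ^ 2
      + 2 * A 0 1 * x 0 * x 1 + 2 * A 0 2 * x 0 * x 2 + 2 * A 1 2 * x 1 * x 2 := by
  simp only [quadForm, dotProduct, mulVec, Fin.sum_univ_three, hA.apply 0 1, hA.apply 0 2,
    hA.apply 1 2]
  ring

section SpecialLinear

variable {ι : Type*} [Fintype ι] [DecidableEq ι]

/-- The right action of `SL(n, ℝ)` on matrices of quadratic forms by change of variables. -/
def translate (A : Matrix ι ι ℝ) (g : SpecialLinearGroup ι ℝ) : Matrix ι ι ℝ :=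
  pullback A (g : Matrix ι ι ℝ)

theorem translate_one (A : Matrix ι ι ℝ) : translate A 1 = A := pullback_one A

theorem translate_mul (A : Matrix ι ι ℝ) (g h : SpecialLinearGroup ι ℝ) :
    translate A (g * h) = translate (translate A g) h := pullback_mul A _ _

theorem translate_inv_translate (A : Matrix ι ι ℝ) (g : SpecialLinearGroup ι ℝ) :
    translate (translate A g⁻¹) g = A := by
  rw [← translate_mul, inv_mul_cancel, translate_one]

theorem translate_translate_inv (A : Matrix ι ι ℝ) (g : SpecialLinearGroup ι ℝ) :
    translate (translate A g) g⁻¹ = A := by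
  rw [← translate_mul, mul_inv_cancel, translate_one]

theorem translate_add (A B : Matrix ι ι ℝ) (g : SpecialLinearGroup ι ℝ) :
    translate (A + B) g = translate A g + translate B g := pullback_add A B _

theorem translate_smul (c : ℝ) (A : Matrix ι ι ℝ) (g : SpecialLinearGroup ι ℝ) :
    translate (c • A) g = c • translate A g := pullback_smul c A _

theorem translate_isSymm {A : Matrix ι ι ℝ} (hA : A.IsSymm) (g : SpecialLinearGroup ι ℝ) :
    (translate A g).IsSymm := pullback_isSymm hA _

theorem det_translate (A : Matrix ι ι ℝ) (g : SpecialLinearGroup ι ℝ) :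
    (translate A g).det = A.det := by
  rw [translate, det_pullback, g.det_coe, one_pow, one_mul]

theorem quadForm_translate (A : Matrix ι ι ℝ) (g : SpecialLinearGroup ι ℝ) (x : ι → ℝ) :
    quadForm (translate A g) x = quadForm A ((g : Matrix ι ι ℝ) *ᵥ x) := quadForm_pullback A _ x

@[fun_prop]
theorem continuous_translate {X : Type*} [TopologicalSpace X] {A : X → Matrix ι ι ℝ}
    {g : X → SpecialLinearGroup ι ℝ} (hA : Continuous A) (hg : Continuous g) :
    Continuous fun t => translate (A t) (g t) :=
  continuous_pullback hA (continuous_subtype_val.comp hg)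

theorem SL_mul_mulVec (g h : SpecialLinearGroup ι ℝ) (x : ι → ℝ) :
    ((g * h : SpecialLinearGroup ι ℝ) : Matrix ι ι ℝ) *ᵥ x =
      (g : Matrix ι ι ℝ) *ᵥ (h : Matrix ι ι ℝ) *ᵥ x := (mulVec_mulVec _ _ _).symm

theorem SL_mulVec_inv_mulVec (g : SpecialLinearGroup ι ℝ) (x : ι → ℝ) :
    (g : Matrix ι ι ℝ) *ᵥ ((g⁻¹ : SpecialLinearGroup ι ℝ) : Matrix ι ι ℝ) *ᵥ x = x := by
  have h : (g : Matrix ι ι ℝ) * ((g⁻¹ : SpecialLinearGroup ι ℝ) : Matrix ι ι ℝ) = 1 :=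
    congrArg Subtype.val (mul_inv_cancel g)
  rw [mulVec_mulVec, h, one_mulVec]

theorem SL_mulVec_intVec (γ : SpecialLinearGroup ι ℤ) (v : ι → ℤ) :
    ((γ : SpecialLinearGroup ι ℝ) : Matrix ι ι ℝ) *ᵥ intVec v =
      intVec ((γ : Matrix ι ι ℤ) *ᵥ v) := intMat_mulVec_intVec _ v

theorem SL_mulVec_ne_zero (γ : SpecialLinearGroup ι ℤ) {v : ι → ℤ} (hv : v ≠ 0) :
    (γ : Matrix ι ι ℤ) *ᵥ v ≠ 0 := fun h =>
  hv (eq_zero_of_mulVec_eq_zero (by simp) h)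

end SpecialLinear

/-! ### Mahler's compactness criterion -/

section Reduction

variable {ι : Type*} [Fintype ι]

/-- A Minkowski-type reduction condition, up to an error `δ`, on the Gram matrix `G` of a lattice
basis: replacing the basis vector `b m` by `b m + ∑_{i ≠ m} x i • b i` with integers `x i` does not
shorten it by more than `δ`. -/
def IsAlmostReduced (δ : ℝ) (G : Matrix ι ι ℝ) : Prop :=
  ∀ (m : ι) (x : ι → ℤ), x m = 1 → G m m ≤ quadForm G (intVec x) + δ

theorem IsAlmostReduced.submatrix {δ : ℝ} {G : Matrix ι ι ℝ} (h : IsAlmostReduced δ G)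
    (e : Equiv.Perm ι) : IsAlmostReduced δ (G.submatrix e e) := fun m x hx => by
  have hq : quadForm (G.submatrix e e) (intVec x) = quadForm G (intVec (x ∘ e.symm)) := by
    simp only [quadForm, submatrix_mulVec_equiv]
    exact (comp_equiv_symm_dotProduct (intVec x) _ e).symm
  rw [hq]
  exact h (e m) (x ∘ e.symm) (by simp [hx])

theorem quadForm_single [DecidableEq ι] (G : Matrix ι ι ℝ) (i : ι) (c : ℝ) :
    quadForm G (Pi.single i c) = c ^ 2 * G i i := by
  simp [quadForm]
  ring

theorem IsAlmostReduced.two_mul_abs_le {δ : ℝ} {G : Matrix ι ι ℝ} (h : IsAlmostReduced δ G)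
    (hG : G.IsSymm) {i j : ι} (hij : i ≠ j) : 2 * |G i j| ≤ G i i + δ := by
  classical
  have key : ∀ k : ℤ, 0 ≤ k ^ 2 * G i i + 2 * k * G i j + δ := fun k => by
    have hk := h j (Pi.single i k + Pi.single j 1) (by simp [hij.symm])
    rw [intVec_add, quadForm_add hG, intVec_single, intVec_single, quadForm_single,
      quadForm_single, mulVec_single, single_dotProduct] at hk
    simp at hk
    linarith
  have h₁ := key 1
  have h₂ := key (-1)
  push_cast at h₁ h₂
  rcases abs_cases (G i j) with h | h <;> linarith

variable [DecidableEq ι]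

theorem trace_pullback_updateCol (G : Matrix ι ι ℝ) (m : ι) (x : ι → ℤ) :
    (pullback G (intMat (updateCol 1 m x))).trace =
      G.trace - G m m + quadForm G (intVec x) := by
  have hdiag : (pullback G (intMat (updateCol 1 m x))).diag =
      Function.update G.diag m (quadForm G (intVec x)) := by
    ext j
    rw [diag_apply, pullback_apply, ← quadForm]
    rcases eq_or_ne j m with rfl | hj
    · have : (intMat (updateCol 1 j x)).col j = intVec x := by ext; simp [intMat, intVec, col]
      rw [this, Function.update_self]
    · have : (intMat (updateCol 1 m x)).col j = Pi.single j 1 := by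
        ext i
        simp [intMat, col, hj, one_apply, Pi.single_apply]
      rw [this, Function.update_of_ne hj, quadForm_single, one_pow, one_mul, diag_apply]
  rw [trace, trace, hdiag, Finset.sum_update_of_mem (Finset.mem_univ m),
    Finset.sum_eq_add_sum_sdiff_singleton_of_mem (Finset.mem_univ m) G.diag, diag_apply]
  ring

theorem quadForm_one (x : ι → ℝ) : quadForm 1 x = ∑ i, x i ^ 2 := by
  simp [quadForm, dotProduct, sq]

/-- Minimise the sum of the squared lengths of the basis vectors, up to `δ`. -/
theorem exists_isAlmostReduced (g : SpecialLinearGroup ι ℝ) {δ : ℝ} (hδ : 0 < δ) :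
    ∃ γ : SpecialLinearGroup ι ℤ,
      IsAlmostReduced δ (translate 1 (g * (γ : SpecialLinearGroup ι ℝ))) := by
  set f : SpecialLinearGroup ι ℤ → ℝ := fun γ =>
    (translate 1 (g * (γ : SpecialLinearGroup ι ℝ))).trace
  have hf : BddBelow (range f) := by
    refine ⟨0, ?_⟩
    rintro _ ⟨γ, rfl⟩
    refine Finset.sum_nonneg fun j _ => ?_
    rw [diag_apply, translate, pullback_apply, ← quadForm, quadForm_one]
    positivity
  obtain ⟨_, ⟨γ, rfl⟩, hγ⟩ := exists_lt_of_csInf_lt (range_nonempty f)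
    (lt_add_of_pos_right (sInf (range f)) hδ)
  refine ⟨γ, fun m x hx => ?_⟩
  set η : SpecialLinearGroup ι ℤ :=
    ⟨updateCol 1 m x, by rw [← cramer_apply, cramer_one, Module.End.one_apply, hx]⟩
  have hη : f (γ * η) = f γ - translate 1 (g * (γ : SpecialLinearGroup ι ℝ)) m m +
      quadForm (translate 1 (g * (γ : SpecialLinearGroup ι ℝ))) (intVec x) := by
    rw [← trace_pullback_updateCol]
    simp only [f, map_mul, ← mul_assoc]
    rw [translate_mul]
    rfl
  linarith [csInf_le hf ⟨γ * η, rfl⟩]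

end Reduction

theorem exists_completing_square {a b p : ℝ} (q r c : ℝ) (hΔ : a * b - p ^ 2 ≠ 0) :
    ∃ x y : ℝ, a * x + p * y = q ∧ p * x + b * y = r ∧
      (c - (q * x + r * y)) * (a * b - p ^ 2) =
        a * b * c + 2 * p * q * r - a * r ^ 2 - b * q ^ 2 - c * p ^ 2 := by
  obtain ⟨Δ, hΔ_eq⟩ : ∃ Δ, Δ = a * b - p ^ 2 := ⟨_, rfl⟩
  rw [← hΔ_eq] at hΔ ⊢
  refine ⟨(q * b - r * p) / Δ, (r * a - q * p) / Δ, ?_, ?_, ?_⟩ <;>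
  · field_simp
    rw [hΔ_eq]
    ring

theorem binary_form_le_of_abs_le_half {a b p s t : ℝ} (ha : 0 ≤ a) (hb : 0 ≤ b)
    (hs : |s| ≤ 1 / 2) (ht : |t| ≤ 1 / 2) :
    a * s ^ 2 + 2 * p * s * t + b * t ^ 2 ≤ (a + 2 * |p| + b) / 4 := by
  have hs' : a * s ^ 2 ≤ a * (1 / 2) ^ 2 := by rw [← sq_abs]; gcongr
  have ht' : b * t ^ 2 ≤ b * (1 / 2) ^ 2 := by rw [← sq_abs t]; gcongr
  have hst : p * s * t ≤ |p| * (1 / 2) * (1 / 2) :=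
    calc p * s * t ≤ |p * s * t| := le_abs_self _
      _ = |p| * |s| * |t| := by rw [abs_mul, abs_mul]
      _ ≤ |p| * (1 / 2) * (1 / 2) := by gcongr
  linarith

/-- Completing the square in the last variable leaves the coefficient `1 / (a b - p²)`; if `c` is
large, rounding the centre `(x, y)` of the square to integers gives a shorter third vector. -/
theorem gram_diag_le {ε a b c p q r : ℝ} (hε : 0 < ε) (ha : ε ≤ a) (hb : ε ≤ b)
    (hac : a ≤ c) (hbc : b ≤ c) (hpa : 2 * |p| ≤ a + ε / 10) (hpb : 2 * |p| ≤ b + ε / 10)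
    (hred : ∀ k l : ℤ,
      0 ≤ a * k ^ 2 + 2 * p * k * l + b * l ^ 2 + 2 * q * k + 2 * r * l + ε / 10)
    (hdet : a * b * c + 2 * p * q * r - a * r ^ 2 - b * q ^ 2 - c * p ^ 2 = 1) :
    c ≤ 20 / ε ^ 2 := by
  have hp : p ^ 2 ≤ 0.3025 * (a * b) := by
    have := mul_le_mul (show |p| ≤ 0.55 * a by linarith) (show |p| ≤ 0.55 * b by linarith)
      (abs_nonneg p) (by linarith)
    rw [← sq_abs]
    linarith
  have hab : ε * ε ≤ a * b := mul_le_mul ha hb hε.le (hε.le.trans ha)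
  have hΔ : 0.69 * (ε * ε) ≤ a * b - p ^ 2 := by linarith [mul_pos hε hε]
  obtain ⟨x, y, hq, hr, hxy⟩ := exists_completing_square q r c
    ((show 0 < 0.69 * (ε * ε) by positivity).trans_le hΔ).ne'
  have hcentre : q * x + r * y ≤ 0.875 * c := by
    have hround := hred (-round x) (-round y)
    have hle := binary_form_le_of_abs_le_half (p := p) (hε.le.trans ha) (hε.le.trans hb)
      (abs_sub_round x) (abs_sub_round y)
    have hshift : a * round x ^ 2 + 2 * p * round x * round y + b * round y ^ 2
        - 2 * q * round x - 2 * r * round y = a * (x - round x) ^ 2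
        + 2 * p * (x - round x) * (y - round y) + b * (y - round y) ^ 2 - (q * x + r * y) := by
      rw [← hq, ← hr]
      ring
    push_cast at hround
    linarith
  have hle_one : 0.125 * c * (0.69 * (ε * ε)) ≤ 1 := by
    rw [← hdet, ← hxy]
    exact mul_le_mul (by linarith) hΔ (by positivity) (by linarith)
  rw [le_div_iff₀ (by positivity)]
  linarith

theorem IsAlmostReduced.diag_le_fin_three {ε : ℝ} (hε : 0 < ε) {G : Matrix (Fin 3) (Fin 3) ℝ}
    (hG : G.IsSymm) (hdet : G.det = 1) (hdiag : ∀ i, ε ≤ G i i)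
    (hred : IsAlmostReduced (ε / 10) G) (i : Fin 3) : G i i ≤ 20 / ε ^ 2 := by
  wlog hmax : ∀ j, G j j ≤ G 2 2 generalizing G i
  · obtain ⟨m, hm⟩ := Finite.exists_max fun j => G j j
    have := this (G := G.submatrix (Equiv.swap m 2) (Equiv.swap m 2)) (hG.submatrix _)
      (by rwa [det_submatrix_equiv_self]) (fun j => hdiag _) (hred.submatrix _) 2
      (fun j => by simpa using hm _)
    simp only [submatrix_apply, Equiv.swap_apply_right] at this
    exact (hm i).trans this
  refine (hmax i).trans <| gram_diag_le hε (hdiag 0) (hdiag 1) (hmax 0) (hmax 1)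
    (hred.two_mul_abs_le hG (by decide)) (hG.apply 0 1 ▸ hred.two_mul_abs_le hG (by decide))
    (fun k l => ?_) (q := G 0 2) (r := G 1 2) ?_
  · have := hred 2 ![k, l, 1] rfl
    simp [quadForm_fin_three hG, intVec] at this
    linarith
  · rw [← hdet, det_fin_three, hG.apply 0 1, hG.apply 0 2, hG.apply 1 2]
    ring

theorem IsAlmostReduced.diag_le_fin_two {ε : ℝ} (hε : 0 < ε) {G : Matrix (Fin 2) (Fin 2) ℝ}
    (hG : G.IsSymm) (hdet : G.det = 1) (hdiag : ∀ i, ε ≤ G i i)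
    (hred : IsAlmostReduced (ε / 10) G) (i : Fin 2) : G i i ≤ 2 / ε := by
  have h₀ : |G 0 1| ≤ 0.55 * G 0 0 := by
    linarith [hred.two_mul_abs_le hG (show (0 : Fin 2) ≠ 1 by decide), hdiag 0]
  have h₁ : |G 0 1| ≤ 0.55 * G 1 1 := by
    rw [← hG.apply 0 1]
    linarith [hred.two_mul_abs_le hG (show (1 : Fin 2) ≠ 0 by decide), hdiag 1]
  have hsq : G 0 1 ^ 2 ≤ (0.55 * G 0 0) * (0.55 * G 1 1) := by
    rw [← sq_abs, sq]
    exact mul_le_mul h₀ h₁ (abs_nonneg _) ((abs_nonneg _).trans h₀)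
  rw [det_fin_two, hG.apply 0 1] at hdet
  rw [le_div_iff₀ hε]
  have hle (j : Fin 2) (hj : G i i * G j j ≤ 2) : G i i * ε ≤ 2 :=
    (mul_le_mul_of_nonneg_left (hdiag j) (hε.le.trans (hdiag i))).trans hj
  fin_cases i
  · exact hle 1 (by dsimp; linarith)
  · exact hle 0 (by dsimp; linarith)

section Mahler

variable {ι : Type*} [Fintype ι] [DecidableEq ι]

theorem isCompact_setOf_entries_le (C : ℝ) :
    IsCompact {g : SpecialLinearGroup ι ℝ | ∀ i j, |(g : Matrix ι ι ℝ) i j| ≤ C} := by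
  have hbox : IsCompact {M : ι → ι → ℝ | ∀ i j, |M i j| ≤ C} := by
    have hpi : {M : ι → ι → ℝ | ∀ i j, |M i j| ≤ C} =
        univ.pi fun _ => univ.pi fun _ => Icc (-C) C := by
      ext M
      simp only [abs_le, mem_ofPred_eq, mem_univ_pi, mem_Icc]
    rw [hpi]
    exact isCompact_univ_pi fun _ => isCompact_univ_pi fun _ => isCompact_Icc
  exact SpecialLinearGroup.isClosedEmbedding_val.isCompact_preimage hbox

theorem exists_isCompact_of_diag_le {ε δ C : ℝ} (hδ : 0 < δ)
    (hC : ∀ G : Matrix ι ι ℝ, G.IsSymm → G.det = 1 → (∀ i, ε ≤ G i i) → IsAlmostReduced δ G →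
      ∀ i, G i i ≤ C) :
    ∃ K : Set (SpecialLinearGroup ι ℝ), IsCompact K ∧ ∀ g : SpecialLinearGroup ι ℝ,
      (∀ v : ι → ℤ, v ≠ 0 → ε ≤ quadForm (translate 1 g) (intVec v)) →
      ∃ γ : SpecialLinearGroup ι ℤ, g * (γ : SpecialLinearGroup ι ℝ) ∈ K := by
  refine ⟨_, isCompact_setOf_entries_le √C, fun g hg => ?_⟩
  obtain ⟨γ, hγ⟩ := exists_isAlmostReduced g hδ
  refine ⟨γ, fun i j => Real.abs_le_sqrt ?_⟩
  have hdiag : ∀ j, ε ≤ translate 1 (g * (γ : SpecialLinearGroup ι ℝ)) j j := fun j => by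
    have h := hg _ (SL_mulVec_ne_zero γ (v := Pi.single j 1) (by simp))
    rwa [← SL_mulVec_intVec, ← quadForm_translate, ← translate_mul, intVec_single,
      quadForm_single, Int.cast_one, one_pow, one_mul] at h
  refine le_trans ?_ (hC _ (translate_isSymm isSymm_one _) (by rw [det_translate, det_one])
    hdiag hγ j)
  rw [translate, pullback_apply, ← quadForm, quadForm_one]
  exact Finset.single_le_sum (f := fun i => (g * (γ : SpecialLinearGroup ι ℝ)).1 i j ^ 2)
    (fun _ _ => sq_nonneg _) (Finset.mem_univ i)

end Mahler

theorem exists_isCompact_forall_mul_mem_fin_three {ε : ℝ} (hε : 0 < ε) :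
    ∃ K : Set SL(3, ℝ), IsCompact K ∧ ∀ g : SL(3, ℝ),
      (∀ v : Fin 3 → ℤ, v ≠ 0 → ε ≤ quadForm (translate 1 g) (intVec v)) →
      ∃ γ : SL(3, ℤ), g * (γ : SL(3, ℝ)) ∈ K :=
  exists_isCompact_of_diag_le (by positivity) fun _ hG hdet hdiag hred =>
    hred.diag_le_fin_three hε hG hdet hdiag

theorem exists_isCompact_forall_mul_mem_fin_two {ε : ℝ} (hε : 0 < ε) :
    ∃ K : Set SL(2, ℝ), IsCompact K ∧ ∀ g : SL(2, ℝ),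
      (∀ v : Fin 2 → ℤ, v ≠ 0 → ε ≤ quadForm (translate 1 g) (intVec v)) →
      ∃ γ : SL(2, ℤ), g * (γ : SL(2, ℝ)) ∈ K :=
  exists_isCompact_of_diag_le (by positivity) fun _ hG hdet hdiag hred =>
    hred.diag_le_fin_two hε hG hdet hdiag

/-! ### The unipotent flow and its minimal sets -/

/-- The matrix of the form `2 x₀ x₂ - x₁²`. -/
def J : Matrix (Fin 3) (Fin 3) ℝ := !![0, 0, 1; 0, -1, 0; 1, 0, 0]

/-- The matrix of the form `x₂²`. Together with `J` it spans the symmetric matrices fixed by `U`. -/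
def E : Matrix (Fin 3) (Fin 3) ℝ := !![0, 0, 0; 0, 0, 0; 0, 0, 1]

/-- The one-parameter unipotent group preserving `J`. -/
noncomputable def U (t : ℝ) : SL(3, ℝ) :=
  ⟨!![1, t, t ^ 2 / 2; 0, 1, t; 0, 0, 1], by simp [det_fin_three]⟩

theorem coe_U (t : ℝ) :
    (U t : Matrix (Fin 3) (Fin 3) ℝ) = !![1, t, t ^ 2 / 2; 0, 1, t; 0, 0, 1] := rfl

theorem J_isSymm : J.IsSymm := by
  ext i j
  fin_cases i <;> fin_cases j <;> rfl

theorem E_isSymm : E.IsSymm := by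
  ext i j
  fin_cases i <;> fin_cases j <;> rfl

theorem quadForm_J (x : Fin 3 → ℝ) : quadForm J x = 2 * x 0 * x 2 - x 1 ^ 2 := by
  rw [quadForm_fin_three J_isSymm]
  simp [J]
  ring

theorem quadForm_E (x : Fin 3 → ℝ) : quadForm E x = x 2 ^ 2 := by
  rw [quadForm_fin_three E_isSymm]
  simp [E]

theorem U_add (s t : ℝ) : U (s + t) = U s * U t := by
  ext i j
  fin_cases i <;> fin_cases j <;> simp [coe_U, mul_apply, Fin.sum_univ_three] <;> ring

theorem U_zero : U 0 = 1 := by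
  ext i j
  fin_cases i <;> fin_cases j <;> simp [coe_U]

theorem U_inv (t : ℝ) : (U t)⁻¹ = U (-t) :=
  (eq_inv_of_mul_eq_one_left (by rw [← U_add, neg_add_cancel, U_zero])).symm

theorem translate_J_U (t : ℝ) : translate J (U t) = J := by
  ext i j
  fin_cases i <;> fin_cases j <;>
    simp [translate, pullback, coe_U, J, mul_apply, Fin.sum_univ_three]
  ring

theorem translate_E_U (t : ℝ) : translate E (U t) = E := by
  ext i j
  fin_cases i <;> fin_cases j <;>
    simp [translate, pullback, coe_U, E, mul_apply, Fin.sum_univ_three]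

theorem translate_J_add_smul_E_U (σ t : ℝ) : translate (J + σ • E) (U t) = J + σ • E := by
  rw [translate_add, translate_smul, translate_J_U, translate_E_U]

/-- Closed subsets of `SL(3, ℝ)` invariant under `U` on the left and `SL(3, ℤ)` on the right, i.e.
closed sets of the flow of `U` on `SL(3, ℝ) ⧸ SL(3, ℤ)`. -/
structure IsFlowInvariant (Y : Set SL(3, ℝ)) : Prop where
  isClosed : IsClosed Y
  U_mul_mem : ∀ t, ∀ y ∈ Y, U t * y ∈ Y
  mul_mem : ∀ γ : SL(3, ℤ), ∀ y ∈ Y, y * (γ : SL(3, ℝ)) ∈ Y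

/-- Minimal sets of the flow of `U` on `SL(3, ℝ) ⧸ SL(3, ℤ)`. -/
def IsMinimalSet (Y : Set SL(3, ℝ)) : Prop :=
  Minimal (fun Y => IsFlowInvariant Y ∧ Y.Nonempty) Y

/-- `Y` is compact modulo `SL(3, ℤ)`: each of its cosets meets the compact set `K`. -/
structure CompactlyCovers (K Y : Set SL(3, ℝ)) : Prop where
  isCompact : IsCompact K
  exists_mul_mem : ∀ y ∈ Y, ∃ γ : SL(3, ℤ), y * (γ : SL(3, ℝ)) ∈ K

theorem CompactlyCovers.nonempty_iInter {K Y : Set SL(3, ℝ)} (hK : CompactlyCovers K Y)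
    {ι : Type*} [Nonempty ι] {S : ι → Set SL(3, ℝ)} (hdir : Directed (· ⊇ ·) S)
    (hclosed : ∀ i, IsClosed (S i)) (hne : ∀ i, (S i).Nonempty) (hsub : ∀ i, S i ⊆ Y)
    (hmul : ∀ i, ∀ γ : SL(3, ℤ), ∀ y ∈ S i, y * (γ : SL(3, ℝ)) ∈ S i) :
    (⋂ i, S i).Nonempty := by
  have h := IsCompact.nonempty_iInter_of_directed_nonempty_isCompact_isClosed
    (fun i => S i ∩ K)
    (hdir.mono_comp (g := (· ∩ K)) _ fun _ _ => inter_subset_inter_left K)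
    (fun i => by
      obtain ⟨y, hy⟩ := hne i
      obtain ⟨γ, hγ⟩ := hK.exists_mul_mem y (hsub i hy)
      exact ⟨_, hmul i γ y hy, hγ⟩)
    (fun i => hK.isCompact.inter_left (hclosed i))
    (fun i => (hclosed i).inter hK.isCompact.isClosed)
  exact h.mono (iInter_mono fun i => inter_subset_left)

theorem IsFlowInvariant.iInter {ι : Sort*} {S : ι → Set SL(3, ℝ)}
    (h : ∀ i, IsFlowInvariant (S i)) : IsFlowInvariant (⋂ i, S i) where
  isClosed := isClosed_iInter fun i => (h i).isClosed
  U_mul_mem t y hy := mem_iInter.2 fun i => (h i).U_mul_mem t y (mem_iInter.1 hy i)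
  mul_mem γ y hy := mem_iInter.2 fun i => (h i).mul_mem γ y (mem_iInter.1 hy i)

theorem exists_isMinimalSet {Y₀ K : Set SL(3, ℝ)} (h₀ : IsFlowInvariant Y₀) (hne : Y₀.Nonempty)
    (hK : CompactlyCovers K Y₀) : ∃ Y ⊆ Y₀, IsMinimalSet Y := by
  obtain ⟨Y, hY₀, hY⟩ := zorn_superset_nonempty
    {Y | (IsFlowInvariant Y ∧ Y.Nonempty) ∧ Y ⊆ Y₀} (fun c hc hchain hcne => by
      have := hcne.to_subtype
      refine ⟨⋂ s : c, s, ⟨⟨.iInter fun s : c => (hc s.2).1.1, ?_⟩, ?_⟩, fun s hs =>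
        iInter_subset (fun s : c => (s : Set SL(3, ℝ))) ⟨s, hs⟩⟩
      · have hdir : Directed (· ⊇ ·) fun s : c => (s : Set SL(3, ℝ)) := fun a b =>
          (hchain.total a.2 b.2).elim (fun h => ⟨a, subset_rfl, h⟩) (fun h => ⟨b, h, subset_rfl⟩)
        exact hK.nonempty_iInter hdir
          (fun s => (hc s.2).1.1.isClosed) (fun s => (hc s.2).1.2) (fun s => (hc s.2).2)
          (fun s => (hc s.2).1.1.mul_mem)
      · obtain ⟨s, hs⟩ := hcne
        exact (iInter_subset _ ⟨s, hs⟩).trans (hc hs).2)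
    Y₀ ⟨⟨h₀, hne⟩, subset_rfl⟩
  exact ⟨Y, hY₀, hY.prop.1, fun Y' hY' hsub => hY.2 ⟨hY', hsub.trans hY₀⟩ hsub⟩

/-- The orbit of `y` modulo `SL(3, ℤ)` from time `T` on. -/
def orbitTail (y : SL(3, ℝ)) (T : ℝ) : Set SL(3, ℝ) :=
  {g | ∃ t ≥ T, ∃ γ : SL(3, ℤ), g = U t * y * (γ : SL(3, ℝ))}

theorem orbitTail_anti (y : SL(3, ℝ)) : Antitone (orbitTail y) := by
  rintro T T' h _ ⟨t, ht, γ, rfl⟩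
  exact ⟨t, h.trans ht, γ, rfl⟩

theorem U_mul_mem_closure_orbitTail {y g : SL(3, ℝ)} {T : ℝ} (hg : g ∈ closure (orbitTail y T))
    (s : ℝ) : U s * g ∈ closure (orbitTail y (s + T)) := by
  refine map_mem_closure (continuous_const_mul (U s)) hg ?_
  rintro _ ⟨t, ht, γ, rfl⟩
  exact ⟨s + t, by linarith, γ, by rw [U_add, mul_assoc, mul_assoc, mul_assoc]⟩

theorem mul_mem_closure_orbitTail {y g : SL(3, ℝ)} {T : ℝ} (hg : g ∈ closure (orbitTail y T))
    (γ : SL(3, ℤ)) : g * (γ : SL(3, ℝ)) ∈ closure (orbitTail y T) := by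
  refine map_mem_closure (f := (· * (γ : SL(3, ℝ)))) (continuous_mul_const _) hg ?_
  rintro _ ⟨t, ht, η, rfl⟩
  exact ⟨t, ht, η * γ, by simp only [map_mul, mul_assoc]⟩

theorem isFlowInvariant_iInter_closure_orbitTail (y : SL(3, ℝ)) :
    IsFlowInvariant (⋂ T, closure (orbitTail y T)) where
  isClosed := isClosed_iInter fun _ => isClosed_closure
  U_mul_mem s g hg := mem_iInter.2 fun T => by
    simpa using U_mul_mem_closure_orbitTail (mem_iInter.1 hg (T - s)) s
  mul_mem γ g hg := mem_iInter.2 fun T => mul_mem_closure_orbitTail (mem_iInter.1 hg T) γ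

theorem IsMinimalSet.exists_return {Y K : Set SL(3, ℝ)} (hY : IsMinimalSet Y)
    (hK : CompactlyCovers K Y) {y : SL(3, ℝ)} (hy : y ∈ Y) (T : ℝ) {V : Set SL(3, ℝ)}
    (hV : V ∈ 𝓝 y) : ∃ t ≥ T, ∃ γ : SL(3, ℤ), U t * y * (γ : SL(3, ℝ)) ∈ V := by
  have hsub : ∀ T, closure (orbitTail y T) ⊆ Y := fun T => by
    refine closure_minimal ?_ hY.prop.1.isClosed
    rintro _ ⟨t, -, γ, rfl⟩
    exact hY.prop.1.mul_mem _ _ (hY.prop.1.U_mul_mem _ _ hy)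
  have hanti : Antitone fun T => closure (orbitTail y T) := fun T T' h =>
    closure_mono (orbitTail_anti y h)
  have hne : (⋂ T, closure (orbitTail y T)).Nonempty :=
    hK.nonempty_iInter hanti.directed_ge (fun _ => isClosed_closure)
      (fun T => ⟨_, subset_closure ⟨T, le_rfl, 1, rfl⟩⟩) hsub
      (fun _ γ _ hg => mul_mem_closure_orbitTail hg γ)
  have hy' : y ∈ closure (orbitTail y T) := mem_iInter.1
    (hY.2 ⟨isFlowInvariant_iInter_closure_orbitTail y, hne⟩ ((iInter_subset _ 0).trans (hsub 0)) hy)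
    T
  obtain ⟨_, hgV, t, ht, γ, rfl⟩ := mem_closure_iff_nhds.1 hy' V hV
  exact ⟨t, ht, γ, hgV⟩

/-! ### Families of forms with a gap at zero -/

/-- A closed `SL(3, ℤ)`-invariant set of symmetric matrices of determinant one whose forms are
bounded away from zero by `ε` at nonzero integral vectors. A counterexample to the theorem has such
a set as the closure of its orbit under `SL(3, ℤ)`. -/
structure IsGapFamily (ε : ℝ) (Z : Set (Matrix (Fin 3) (Fin 3) ℝ)) : Prop where
  pos : 0 < ε
  isClosed : IsClosed Z
  translate_mem : ∀ γ : SL(3, ℤ), ∀ M ∈ Z, translate M (γ : SL(3, ℝ)) ∈ Z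
  isSymm : ∀ M ∈ Z, M.IsSymm
  det_eq_one : ∀ M ∈ Z, M.det = 1
  le_abs : ∀ M ∈ Z, ∀ v : Fin 3 → ℤ, v ≠ 0 → ε ≤ |quadForm M (intVec v)|

theorem abs_quadForm_J_le (x : Fin 3 → ℝ) : |quadForm J x| ≤ quadForm 1 x := by
  rw [quadForm_J, quadForm_one, Fin.sum_univ_three, abs_le]
  constructor <;> nlinarith [sq_nonneg (x 0 + x 2), sq_nonneg (x 0 - x 2), sq_nonneg (x 1)]

section GapFamily

variable {ε : ℝ} {Z : Set (Matrix (Fin 3) (Fin 3) ℝ)}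

theorem IsGapFamily.exists_compactlyCovers (hZ : IsGapFamily ε Z) :
    ∃ K, CompactlyCovers K {g | translate J g ∈ Z} := by
  obtain ⟨K, hK, hcov⟩ := exists_isCompact_forall_mul_mem_fin_three hZ.pos
  refine ⟨K, hK, fun g hg => hcov g fun v hv => (hZ.le_abs _ hg v hv).trans ?_⟩
  rw [quadForm_translate, quadForm_translate]
  exact abs_quadForm_J_le _

theorem IsGapFamily.isFlowInvariant (hZ : IsGapFamily ε Z) :
    IsFlowInvariant {g | translate J g ∈ Z} where
  isClosed := hZ.isClosed.preimage (by fun_prop)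
  U_mul_mem t y hy := by rwa [mem_ofPred_eq, translate_mul, translate_J_U]
  mul_mem γ y hy := by
    rw [mem_ofPred_eq, translate_mul]
    exact hZ.translate_mem γ _ hy

/-- The parameters `σ` such that moving from `J` to `J + σ • E` keeps the forms over `Y` in `Z`. -/
def shiftSet (Z : Set (Matrix (Fin 3) (Fin 3) ℝ)) (Y : Set SL(3, ℝ)) : Set ℝ :=
  {σ | ∀ y ∈ Y, translate (J + σ • E) y ∈ Z}

theorem isClosed_shiftSet (hZ : IsGapFamily ε Z) (Y : Set SL(3, ℝ)) :
    IsClosed (shiftSet Z Y) := by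
  have : shiftSet Z Y = ⋂ y ∈ Y, {σ | translate (J + σ • E) y ∈ Z} := by
    ext σ
    simp [shiftSet]
  rw [this]
  exact isClosed_biInter fun y _ => hZ.isClosed.preimage (by fun_prop)

theorem IsGapFamily.mem_shiftSet (hZ : IsGapFamily ε Z) {Y : Set SL(3, ℝ)} (hY : IsMinimalSet Y)
    {y : SL(3, ℝ)} (hy : y ∈ Y) {σ : ℝ} (hσ : translate (J + σ • E) y ∈ Z) :
    σ ∈ shiftSet Z Y := by
  have hinv : IsFlowInvariant {y ∈ Y | translate (J + σ • E) y ∈ Z} :=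
    { isClosed := hY.prop.1.isClosed.inter (hZ.isClosed.preimage (by fun_prop))
      U_mul_mem := fun t y ⟨hy, hσ⟩ => ⟨hY.prop.1.U_mul_mem t y hy, by
        rwa [translate_mul, translate_J_add_smul_E_U]⟩
      mul_mem := fun γ y ⟨hy, hσ⟩ => ⟨hY.prop.1.mul_mem γ y hy, by
        rw [translate_mul]
        exact hZ.translate_mem γ _ hσ⟩ }
  exact fun y' hy' => (hY.2 ⟨hinv, y, hy, hσ⟩ (fun _ h => h.1) hy').2

theorem quadForm_translate_J_add_smul_E (σ : ℝ) (y : SL(3, ℝ)) (x : Fin 3 → ℝ) :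
    quadForm (translate (J + σ • E) y) x =
      quadForm J ((y : Matrix (Fin 3) (Fin 3) ℝ) *ᵥ x)
        + σ * ((y : Matrix (Fin 3) (Fin 3) ℝ) *ᵥ x) 2 ^ 2 := by
  rw [quadForm_translate, quadForm_add_left, quadForm_smul_left, quadForm_E]

/-- The `σ` for which `J + σ • E` vanishes at some vector of the lattice `y ℤ³` are dense. -/
theorem IsGapFamily.interior_shiftSet (hZ : IsGapFamily ε Z) {Y : Set SL(3, ℝ)}
    (hY : Y.Nonempty) : interior (shiftSet Z Y) = ∅ := by
  obtain ⟨y, hy⟩ := hY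
  by_contra! hne
  obtain ⟨τ, hτ⟩ := hne
  set f : (Fin 3 → ℝ) → ℝ := fun x => -quadForm J x / x 2 ^ 2
  set W : Set (Fin 3 → ℝ) := {x | x 2 ≠ 0} ∩ f ⁻¹' interior (shiftSet Z Y)
  have hW : IsOpen W := ContinuousOn.isOpen_inter_preimage
    (ContinuousOn.div (by fun_prop) (by fun_prop) fun x hx => pow_ne_zero 2 hx)
    (isOpen_ne_fun (by fun_prop) (by fun_prop)) isOpen_interior
  obtain ⟨v, hv₂, hvσ⟩ := exists_intVec_mem_of_isOpen_cone
    (W := ((y : Matrix (Fin 3) (Fin 3) ℝ) *ᵥ ·) ⁻¹' W) (hW.preimage (by fun_prop))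
    ⟨((y⁻¹ : SL(3, ℝ)) : Matrix (Fin 3) (Fin 3) ℝ) *ᵥ ![-τ / 2, 0, 1], by
      rw [mem_preimage, SL_mulVec_inv_mulVec]
      simpa [W, f, quadForm_J, mul_div_cancel₀] using hτ⟩
    (fun x ⟨hx₂, hxσ⟩ c hc => by
      have hf : f (c • ((y : Matrix (Fin 3) (Fin 3) ℝ) *ᵥ x)) =
          f ((y : Matrix (Fin 3) (Fin 3) ℝ) *ᵥ x) := by
        simp only [f, quadForm_smul, Pi.smul_apply, smul_eq_mul, mul_pow, ← mul_neg]
        exact mul_div_mul_left _ _ (pow_ne_zero 2 hc.ne')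
      rw [mem_preimage, mulVec_smul]
      exact ⟨mul_ne_zero hc.ne' hx₂, by rwa [mem_preimage, hf]⟩)
  have hv : v ≠ 0 := by
    rintro rfl
    exact hv₂ (by simp [show intVec (0 : Fin 3 → ℤ) = 0 by ext; simp [intVec]])
  have hgap := hZ.le_abs _ (interior_subset hvσ y hy) v hv
  rw [quadForm_translate_J_add_smul_E, div_mul_cancel₀ _ (pow_ne_zero 2 hv₂), add_neg_cancel,
    abs_zero] at hgap
  exact hgap.not_gt hZ.pos

end GapFamily

/-! ### Forms near the plane spanned by `J` and `E` -/

section Renormalization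

variable {k : ℕ}

theorem exists_norm_pow_mul_eq_one {u : Fin k → ℝ} (hu : u ≠ 0) :
    ∃ t > 0, ‖fun i : Fin k => t ^ (i + 1 : ℕ) * u i‖ = 1 := by
  obtain ⟨i, hi⟩ := Function.ne_iff.1 hu
  have hi : 0 < |u i| := abs_pos.2 hi
  set f : ℝ → ℝ := fun t => ‖fun i : Fin k => t ^ (i + 1 : ℕ) * u i‖
  have hf : Continuous f := by fun_prop
  have hf₀ : f 0 = 0 := by simp [f, ← Pi.zero_def]
  set T : ℝ := max 1 |u i|⁻¹
  have hfT : 1 ≤ f T := calc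
    1 = |u i|⁻¹ * |u i| := (inv_mul_cancel₀ hi.ne').symm
    _ ≤ T ^ (i + 1 : ℕ) * |u i| := by
      gcongr
      exact (le_max_right _ _).trans (le_self_pow₀ (le_max_left _ _) (Nat.succ_ne_zero _))
    _ = ‖T ^ (i + 1 : ℕ) * u i‖ := by
      have hT : 0 ≤ T := by positivity
      rw [norm_mul, Real.norm_of_nonneg (pow_nonneg hT _), Real.norm_eq_abs]
    _ ≤ f T := norm_le_pi_norm (fun i : Fin k => T ^ (i + 1 : ℕ) * u i) i
  obtain ⟨t, ht, hft⟩ := intermediate_value_Icc (by positivity : 0 ≤ T) hf.continuousOn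
    (show (1 : ℝ) ∈ Icc (f 0) (f T) from ⟨by rw [hf₀]; exact zero_le_one, hfT⟩)
  refine ⟨t, ht.1.lt_of_ne ?_, hft⟩
  rintro rfl
  exact zero_ne_one (hf₀.symm.trans hft)

theorem norm_pow_mul_le {t R : ℝ} (ht : 0 ≤ t) (htR : t ≤ R) (hR : 1 ≤ R) (u : Fin k → ℝ) :
    ‖fun i : Fin k => t ^ (i + 1 : ℕ) * u i‖ ≤ R ^ k * ‖u‖ := by
  refine (pi_norm_le_iff_of_nonneg (by positivity)).2 fun i => ?_
  rw [norm_mul, norm_pow, Real.norm_of_nonneg ht]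
  gcongr
  · exact (pow_le_pow_left₀ ht htR _).trans (pow_le_pow_right₀ hR i.is_lt)
  · exact norm_le_pi_norm u i

theorem exists_tendsto_pow_mul {u : ℕ → Fin k → ℝ} (hu : Tendsto u atTop (𝓝 0))
    (hne : ∀ n, u n ≠ 0) :
    ∃ (φ : ℕ → ℕ) (t : ℕ → ℝ) (w : Fin k → ℝ), StrictMono φ ∧ Tendsto t atTop atTop ∧ w ≠ 0 ∧
      Tendsto (fun n (i : Fin k) => t n ^ (i + 1 : ℕ) * u (φ n) i) atTop (𝓝 w) := by
  choose t ht₀ ht using fun n => exists_norm_pow_mul_eq_one (hne n)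
  obtain ⟨w, hw, φ, hφ, hlim⟩ := (isCompact_sphere (0 : Fin k → ℝ) 1).tendsto_subseq
    fun n => mem_sphere_zero_iff_norm.2 (ht n)
  have htop : Tendsto t atTop atTop := by
    refine tendsto_atTop.2 fun R => ?_
    have hsmall : Tendsto (fun n => max 1 R ^ k * ‖u n‖) atTop (𝓝 0) := by
      simpa using hu.norm.const_mul (max 1 R ^ k)
    filter_upwards [hsmall.eventually_lt_const one_pos] with n hn
    by_contra! hlt
    exact hn.not_ge <| (ht n).symm.le.trans <|
      norm_pow_mul_le (ht₀ n).le (hlt.le.trans (le_max_right _ _)) (le_max_left _ _) (u n)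
  refine ⟨φ, t ∘ φ, w, hφ, htop.comp hφ.tendsto_atTop, ?_, hlim⟩
  exact norm_ne_zero_iff.1 (by rw [mem_sphere_zero_iff_norm.1 hw]; exact one_ne_zero)

theorem tendsto_pow_mul_zero_of_lt {α : Type*} {l : Filter α} {t d : α → ℝ} {a : ℝ} {m j : ℕ}
    (ht : Tendsto t l atTop) (hd : Tendsto (fun n => t n ^ m * d n) l (𝓝 a)) (hj : j < m) :
    Tendsto (fun n => t n ^ j * d n) l (𝓝 0) := by
  refine (hd.div_atTop ((tendsto_pow_atTop (Nat.sub_ne_zero_of_lt hj)).comp ht)).congr' ?_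
  filter_upwards [ht.eventually_gt_atTop 0] with n hn
  rw [Function.comp_apply, div_eq_iff (pow_pos hn _).ne', mul_right_comm, ← pow_add,
    Nat.add_sub_cancel' hj.le]

end Renormalization

/-- The coordinates of `D` transverse to the span of `J` and `E` in the symmetric matrices; under
`translate · (U t)`, coordinate `i` contributes to the corner entry in order `t ^ (i + 1)`. -/
def transverse (D : Matrix (Fin 3) (Fin 3) ℝ) : Fin 4 → ℝ :=
  ![D 1 2, D 0 2 + D 1 1, D 0 1, D 0 0]

/-- The coefficient of `E` picked up along the flow `U` by a form with transverse part `w`. -/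
noncomputable def drift (w : Fin 4 → ℝ) (r : ℝ) : ℝ :=
  2 * r * w 0 + r ^ 2 * w 1 + r ^ 3 * w 2 + r ^ 4 / 4 * w 3

theorem continuous_drift (w : Fin 4 → ℝ) : Continuous (drift w) := by
  unfold drift
  fun_prop

theorem transverse_sub_J_add_smul_E (M : Matrix (Fin 3) (Fin 3) ℝ) (c : ℝ) :
    transverse (M - (J + c • E)) = transverse M := by
  ext i
  fin_cases i <;> simp [transverse, J, E]

theorem eq_J_add_smul_E {M : Matrix (Fin 3) (Fin 3) ℝ} (hM : M.IsSymm) (hdet : M.det = 1)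
    (h : transverse M = 0) : M = J + M 2 2 • E := by
  have h₁₂ : M 1 2 = 0 := congrFun h 0
  have h₁₁ : M 1 1 = -M 0 2 := (neg_eq_of_add_eq_zero_right (congrFun h 1)).symm
  have h₀₁ : M 0 1 = 0 := congrFun h 2
  have h₀₀ : M 0 0 = 0 := congrFun h 3
  have h₁₀ : M 1 0 = 0 := (hM.apply 0 1).trans h₀₁
  have h₂₁ : M 2 1 = 0 := (hM.apply 1 2).trans h₁₂
  have h₀₂ : M 0 2 = 1 := by
    rw [det_fin_three, hM.apply 0 2, h₁₀, h₂₁, h₀₀, h₀₁, h₁₂, h₁₁] at hdet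
    exact (Odd.strictMono_pow (by decide : Odd 3)).injective (by linarith : M 0 2 ^ 3 = 1 ^ 3)
  have h₂₀ : M 2 0 = 1 := (hM.apply 0 2).trans h₀₂
  ext i j
  fin_cases i <;> fin_cases j <;> simp [J, E, *]

theorem translate_U_eq {D : Matrix (Fin 3) (Fin 3) ℝ} (hD : D.IsSymm) (t : ℝ) :
    translate D (U t) =
      let a := t * D 0 0 + D 0 1
      let b := t ^ 2 / 2 * D 0 0 + t * D 0 1 + D 0 2
      let c := t ^ 3 / 2 * D 0 0 + 3 * t ^ 2 / 2 * D 0 1 + t * (D 0 2 + D 1 1) + D 1 2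
      !![D 0 0, a, b;
        a, t ^ 2 * D 0 0 + 2 * t * D 0 1 + D 1 1, c;
        b, c, drift (transverse D) t + D 2 2] := by
  ext i j
  fin_cases i <;> fin_cases j <;>
    simp [translate, pullback, coe_U, drift, transverse, mul_apply, Fin.sum_univ_three,
      hD.apply 0 1, hD.apply 0 2, hD.apply 1 2] <;> ring

theorem tendsto_translate_U {D : ℕ → Matrix (Fin 3) (Fin 3) ℝ} {t : ℕ → ℝ} {w : Fin 4 → ℝ}
    (hsymm : ∀ n, (D n).IsSymm) (hD : Tendsto D atTop (𝓝 0)) (ht : Tendsto t atTop atTop)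
    (hw : Tendsto (fun n (i : Fin 4) => t n ^ (i + 1 : ℕ) * transverse (D n) i) atTop (𝓝 w))
    (r : ℝ) : Tendsto (fun n => translate (D n) (U (r * t n))) atTop (𝓝 (drift w r • E)) := by
  have hD' (i j : Fin 3) : Tendsto (fun n => D n i j) atTop (𝓝 0) :=
    tendsto_pi_nhds.1 (tendsto_pi_nhds.1 hD i) j
  have hw₀ : Tendsto (fun n => t n ^ 1 * D n 1 2) atTop (𝓝 (w 0)) := tendsto_pi_nhds.1 hw 0
  have hw₁ : Tendsto (fun n => t n ^ 2 * (D n 0 2 + D n 1 1)) atTop (𝓝 (w 1)) :=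
    tendsto_pi_nhds.1 hw 1
  have hw₂ : Tendsto (fun n => t n ^ 3 * D n 0 1) atTop (𝓝 (w 2)) := tendsto_pi_nhds.1 hw 2
  have hw₃ : Tendsto (fun n => t n ^ 4 * D n 0 0) atTop (𝓝 (w 3)) := tendsto_pi_nhds.1 hw 3
  have h₀₀ (j) (hj : j < 4) := tendsto_pow_mul_zero_of_lt ht hw₃ hj
  have h₀₁ (j) (hj : j < 3) := tendsto_pow_mul_zero_of_lt ht hw₂ hj
  have ha := ((h₀₀ 1 (by simp)).const_mul r).add (h₀₁ 0 (by simp))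
  have hb := (((h₀₀ 2 (by simp)).const_mul (r ^ 2 / 2)).add
    ((h₀₁ 1 (by simp)).const_mul r)).add (hD' 0 2)
  have hc := ((((h₀₀ 3 (by simp)).const_mul (r ^ 3 / 2)).add
    ((h₀₁ 2 (by simp)).const_mul (3 * r ^ 2 / 2))).add
    ((tendsto_pow_mul_zero_of_lt ht hw₁ (by simp : 1 < 2)).const_mul r)).add (hD' 1 2)
  have hm := (((h₀₀ 2 (by simp)).const_mul (r ^ 2)).add
    ((h₀₁ 1 (by simp)).const_mul (2 * r))).add (hD' 1 1)
  have hcorner := ((((hw₀.const_mul (2 * r)).add (hw₁.const_mul (r ^ 2))).add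
    (hw₂.const_mul (r ^ 3))).add (hw₃.const_mul (r ^ 4 / 4))).add (hD' 2 2)
  simp only [mul_zero, add_zero] at ha hb hc hm hcorner
  replace ha := ha.congr fun n => (by ring : _ = r * t n * D n 0 0 + D n 0 1)
  replace hb := hb.congr fun n =>
    (by ring : _ = (r * t n) ^ 2 / 2 * D n 0 0 + r * t n * D n 0 1 + D n 0 2)
  replace hc := hc.congr fun n => (by ring : _ = (r * t n) ^ 3 / 2 * D n 0 0 +
    3 * (r * t n) ^ 2 / 2 * D n 0 1 + r * t n * (D n 0 2 + D n 1 1) + D n 1 2)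
  replace hm := hm.congr fun n =>
    (by ring : _ = (r * t n) ^ 2 * D n 0 0 + 2 * (r * t n) * D n 0 1 + D n 1 1)
  replace hcorner : Tendsto (fun n => drift (transverse (D n)) (r * t n) + D n 2 2) atTop
      (𝓝 (drift w r)) :=
    (hcorner.congr fun n => by simp [drift, transverse]; ring)
  simp only [translate_U_eq (hsymm _)]
  refine tendsto_pi_nhds.2 fun i => tendsto_pi_nhds.2 fun j => ?_
  fin_cases i <;> fin_cases j <;> simp [E, hD' 0 0, ha, hb, hc, hm, hcorner]

theorem tendsto_translate {M : ℕ → Matrix (Fin 3) (Fin 3) ℝ} {N : Matrix (Fin 3) (Fin 3) ℝ}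
    {g : ℕ → SL(3, ℝ)} {h : SL(3, ℝ)} (hM : Tendsto M atTop (𝓝 N)) (hg : Tendsto g atTop (𝓝 h)) :
    Tendsto (fun n => translate (M n) (g n)) atTop (𝓝 (translate N h)) := by
  have hcont : Continuous fun p : Matrix (Fin 3) (Fin 3) ℝ × SL(3, ℝ) => translate p.1 p.2 := by
    fun_prop
  have := (hcont.tendsto (N, h)).comp (hM.prodMk_nhds hg)
  exact this

theorem CompactlyCovers.mono {K Y Y' : Set SL(3, ℝ)} (h : CompactlyCovers K Y) (hY : Y' ⊆ Y) :
    CompactlyCovers K Y' :=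
  ⟨h.isCompact, fun y hy => h.exists_mul_mem y (hY hy)⟩

instance {ι : Type*} [Countable ι] : FirstCountableTopology (Matrix ι ι ℝ) :=
  inferInstanceAs (FirstCountableTopology (ι → ι → ℝ))

instance {ι : Type*} [Fintype ι] [DecidableEq ι] :
    FirstCountableTopology (SpecialLinearGroup ι ℝ) :=
  SpecialLinearGroup.isClosedEmbedding_val.isInducing.firstCountableTopology

section MinimalSet

variable {ε : ℝ} {Z : Set (Matrix (Fin 3) (Fin 3) ℝ)} {Y : Set SL(3, ℝ)} {y : SL(3, ℝ)}

/-- Applying `U (t n)` to `M n` pushes the point `y` to `U (-t n) * y`, which returns to a compact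
set modulo `SL(3, ℤ)`. -/
theorem IsGapFamily.mem_shiftSet_of_tendsto (hZ : IsGapFamily ε Z) (hY : IsMinimalSet Y)
    (hYZ : Y ⊆ {g | translate J g ∈ Z}) (hy : y ∈ Y) {M : ℕ → Matrix (Fin 3) (Fin 3) ℝ}
    (hMZ : ∀ n, translate (M n) y ∈ Z) {t : ℕ → ℝ} {σ : ℝ}
    (hlim : Tendsto (fun n => translate (M n) (U (t n))) atTop (𝓝 (J + σ • E))) :
    σ ∈ shiftSet Z Y := by
  obtain ⟨K, hK⟩ := hZ.exists_compactlyCovers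
  have hmem (n) : U (-t n) * y ∈ Y := hY.prop.1.U_mul_mem _ _ hy
  choose γ hγ using fun n => (hK.mono hYZ).exists_mul_mem _ (hmem n)
  obtain ⟨y', -, φ, hφ, hy'⟩ := hK.isCompact.tendsto_subseq hγ
  have hy'Y : y' ∈ Y := hY.prop.1.isClosed.mem_of_tendsto hy' <|
    Eventually.of_forall fun n => hY.prop.1.mul_mem _ _ (hmem _)
  refine hZ.mem_shiftSet hY hy'Y <| hZ.isClosed.mem_of_tendsto
    (tendsto_translate (hlim.comp hφ.tendsto_atTop) hy') (Eventually.of_forall fun n => ?_)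
  simp only [Function.comp_apply]
  rw [← translate_mul, ← mul_assoc, ← mul_assoc, ← U_add, add_neg_cancel, U_zero, one_mul,
    translate_mul]
  exact hZ.translate_mem _ _ (hMZ _)

theorem eq_of_continuous_of_range_subset {f : ℝ → ℝ} {S : Set ℝ} (hf : Continuous f)
    (hS : interior S = ∅) (hfS : range f ⊆ S) (a b : ℝ) : f a = f b := by
  by_contra hab
  wlog h : f a < f b generalizing a b
  · exact this b a (Ne.symm hab) ((Ne.symm hab).lt_of_le (not_lt.1 h))
  have hsub : Ioo (f a) (f b) ⊆ S := Ioo_subset_Icc_self.trans <|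
    ((isPreconnected_range hf).Icc_subset (mem_range_self a) (mem_range_self b)).trans hfS
  obtain ⟨c, hc⟩ := exists_between h
  exact notMem_empty c (hS ▸ interior_maximal hsub isOpen_Ioo hc)

theorem eq_zero_of_forall_drift_eq_zero {w : Fin 4 → ℝ} (h : ∀ r, drift w r = 0) : w = 0 := by
  have h₁ := h 1
  have h₂ := h (-1)
  have h₃ := h 2
  have h₄ := h (-2)
  simp only [drift] at h₁ h₂ h₃ h₄
  ext i
  fin_cases i <;> simp <;> linarith

theorem IsGapFamily.exists_transverse_eq_zero (hZ : IsGapFamily ε Z) (hY : IsMinimalSet Y)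
    (hYZ : Y ⊆ {g | translate J g ∈ Z}) (hy : y ∈ Y) {M : ℕ → Matrix (Fin 3) (Fin 3) ℝ} {c : ℝ}
    (hM : Tendsto M atTop (𝓝 (J + c • E))) (hsymm : ∀ n, (M n).IsSymm)
    (hMZ : ∀ n, translate (M n) y ∈ Z) : ∃ n, transverse (M n) = 0 := by
  by_contra! hne
  set D : ℕ → Matrix (Fin 3) (Fin 3) ℝ := fun n => M n - (J + c • E)
  have hD : Tendsto D atTop (𝓝 0) := by simpa using hM.sub_const (J + c • E)
  have hDsymm (n) : (D n).IsSymm := (hsymm n).sub (J_isSymm.add (E_isSymm.smul c))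
  have htD : Tendsto (fun n => transverse (D n)) atTop (𝓝 0) := by
    have hcont : Continuous transverse := by
      unfold transverse
      fun_prop
    have hzero : transverse 0 = 0 := by
      ext i
      fin_cases i <;> simp [transverse]
    exact hzero ▸ (hcont.tendsto 0).comp hD
  obtain ⟨φ, t, w, hφ, ht, hw, hlim⟩ := exists_tendsto_pow_mul htD fun n => by
    simpa only [D, transverse_sub_J_add_smul_E] using hne n
  have hshift (r : ℝ) : c + drift w r ∈ shiftSet Z Y := by
    refine hZ.mem_shiftSet_of_tendsto hY hYZ hy (fun n => hMZ (φ n)) (t := fun n => r * t n) ?_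
    have := (tendsto_translate_U (fun n => hDsymm (φ n)) (hD.comp hφ.tendsto_atTop) ht hlim
      r).const_add (J + c • E)
    rw [add_assoc, ← add_smul] at this
    refine this.congr fun n => ?_
    rw [← translate_J_add_smul_E_U c (r * t n), ← translate_add, add_sub_cancel]
  refine hw (eq_zero_of_forall_drift_eq_zero fun r => ?_)
  have := eq_of_continuous_of_range_subset ((continuous_drift w).const_add c)
    (hZ.interior_shiftSet hY.prop.2) (range_subset_iff.2 hshift) r 0
  simpa [drift] using this

theorem IsGapFamily.eventually_eq_J_add_smul_E (hZ : IsGapFamily ε Z) (hY : IsMinimalSet Y)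
    (hYZ : Y ⊆ {g | translate J g ∈ Z}) (hy : y ∈ Y) {M : ℕ → Matrix (Fin 3) (Fin 3) ℝ} {c : ℝ}
    (hM : Tendsto M atTop (𝓝 (J + c • E))) (hMZ : ∀ n, translate (M n) y ∈ Z) :
    ∀ᶠ n in atTop, M n = J + M n 2 2 • E := by
  have hsymm (n) : (M n).IsSymm := by
    simpa only [translate_translate_inv] using translate_isSymm (hZ.isSymm _ (hMZ n)) y⁻¹
  have hdet (n) : (M n).det = 1 := (det_translate _ y).symm.trans (hZ.det_eq_one _ (hMZ n))
  by_contra hcon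
  obtain ⟨φ, hφ, hne⟩ := extraction_of_frequently_atTop (not_eventually.1 hcon)
  obtain ⟨n, hn⟩ := hZ.exists_transverse_eq_zero hY hYZ hy (hM.comp hφ.tendsto_atTop)
    (fun n => hsymm _) (fun n => hMZ _)
  exact hne n (eq_J_add_smul_E (hsymm _) (hdet _) hn)

theorem exists_intVec_fixed {γ : SL(3, ℤ)} {g y : SL(3, ℝ)}
    (h : y * (γ : SL(3, ℝ)) = g * y) (hdet : (g.1 - 1).det = 0) :
    ∃ v : Fin 3 → ℤ, v ≠ 0 ∧ g.1 *ᵥ y.1 *ᵥ intVec v = y.1 *ᵥ intVec v := by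
  set P : Matrix (Fin 3) (Fin 3) ℝ := y.1
  set G : Matrix (Fin 3) (Fin 3) ℝ := (γ : SL(3, ℝ)).1
  have hPG : P * G = g.1 * P := congrArg Subtype.val h
  have hG : (G - 1).det = 0 := by
    have hconj : P * (G - 1) = (g.1 - 1) * P := by
      rw [Matrix.mul_sub, Matrix.sub_mul, hPG, mul_one, one_mul]
    have := congrArg det hconj
    rwa [det_mul, det_mul, hdet, zero_mul, y.det_coe, one_mul] at this
  have hγ : ((γ : Matrix (Fin 3) (Fin 3) ℤ) - 1).det = 0 := by
    have hcast : G - 1 = (Int.castRingHom ℝ).mapMatrix ((γ : Matrix (Fin 3) (Fin 3) ℤ) - 1) := by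
      rw [map_sub, map_one]
      rfl
    rw [hcast, ← RingHom.map_det] at hG
    exact Int.cast_eq_zero.1 hG
  obtain ⟨v, hv, hγv⟩ := exists_mulVec_eq_zero_iff.2 hγ
  rw [sub_mulVec, one_mulVec, sub_eq_zero] at hγv
  refine ⟨v, hv, ?_⟩
  rw [mulVec_mulVec, ← hPG, ← mulVec_mulVec, SL_mulVec_intVec, hγv]

theorem IsGapFamily.mul_ne_U_mul (hZ : IsGapFamily ε Z) (hy : translate J y ∈ Z) (γ : SL(3, ℤ))
    {t : ℝ} (ht : t ≠ 0) : y * (γ : SL(3, ℝ)) ≠ U t * y := by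
  intro h
  obtain ⟨v, hv, hfix⟩ := exists_intVec_fixed h (by simp [coe_U, det_fin_three])
  have hgap := hZ.le_abs _ hy v hv
  rw [quadForm_translate, quadForm_J] at hgap
  set x := (y : Matrix (Fin 3) (Fin 3) ℝ) *ᵥ intVec v
  have hx₂ : x 2 = 0 := by
    simpa [coe_U, mulVec_eq_sum, Fin.sum_univ_three, ht] using congrFun hfix 1
  have hx₁ : x 1 = 0 := by
    simpa [coe_U, mulVec_eq_sum, Fin.sum_univ_three, ht, hx₂] using congrFun hfix 0
  rw [hx₁, hx₂] at hgap
  exact hZ.pos.not_ge (by simpa using hgap)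

theorem exists_tendsto_one_mul_mem (hZ : IsGapFamily ε Z) (hY : IsMinimalSet Y)
    (hYZ : Y ⊆ {g | translate J g ∈ Z}) (hy : y ∈ Y) :
    ∃ g : ℕ → SL(3, ℝ), Tendsto g atTop (𝓝 1) ∧ (∀ n, g n * y ∈ Y) ∧ ∀ n s, g n ≠ U s := by
  obtain ⟨K, hK⟩ := hZ.exists_compactlyCovers
  obtain ⟨b, hb⟩ := (𝓝 (1 : SL(3, ℝ))).exists_antitone_basis
  have hV : {g : SL(3, ℝ) | (g : Matrix (Fin 3) (Fin 3) ℝ) 0 1 < 1} ∈ 𝓝 1 :=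
    (isOpen_lt (by fun_prop) continuous_const).mem_nhds (by simp)
  have hdiv : Tendsto (· * y⁻¹) (𝓝 y) (𝓝 1) := by
    simpa using (continuous_mul_const y⁻¹).tendsto y
  have key (n : ℕ) : ∃ g ∈ b n, g * y ∈ Y ∧ ∀ s, g ≠ U s := by
    obtain ⟨t, ht, γ, hb, hlt⟩ := hY.exists_return (hK.mono hYZ) hy 1
      (hdiv (inter_mem (hb.1.mem_of_mem (i := n) trivial) hV))
    refine ⟨_, hb, ?_, fun s hs => ?_⟩
    · rw [inv_mul_cancel_right]
      exact hY.prop.1.mul_mem _ _ (hY.prop.1.U_mul_mem _ _ hy)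
    · have hs₁ : s < 1 := by simpa [hs, coe_U] using hlt
      refine hZ.mul_ne_U_mul (hYZ hy) γ (sub_ne_zero.2 (hs₁.trans_le ht).ne) (t := s - t) ?_
      rw [sub_eq_neg_add, U_add, ← U_inv, ← hs]
      group
  choose g hgb hgY hgU using key
  exact ⟨g, hb.tendsto hgb, hgY, hgU⟩

end MinimalSet

/-! ### Rigidity of the shift set and isolated forms -/

section Gaps

variable {S : Set ℝ}

theorem exists_gap (hS : IsClosed S) (hint : interior S = ∅) {a b : ℝ} (ha : a ∈ S) (hb : b ∈ S)
    (hab : a < b) : ∃ p ∈ S, ∃ q ∈ S, p < q ∧ ∀ x ∈ Ioo p q, x ∉ S := by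
  obtain ⟨m, ⟨ham, hmb⟩, hmS⟩ : ∃ m ∈ Ioo a b, m ∉ S := by
    by_contra! hsub
    obtain ⟨c, hc⟩ := exists_between hab
    exact notMem_empty c (hint ▸ interior_maximal hsub isOpen_Ioo hc)
  have hbdd : BddAbove (S ∩ Iic m) := bddAbove_Iic.mono inter_subset_right
  have hbdd' : BddBelow (S ∩ Ici m) := bddBelow_Ici.mono inter_subset_right
  have hp := (hS.inter isClosed_Iic).csSup_mem ⟨a, ha, ham.le⟩ hbdd
  have hq := (hS.inter isClosed_Ici).csInf_mem ⟨b, hb, hmb.le⟩ hbdd'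
  refine ⟨_, hp.1, _, hq.1, ?_, fun x hx hxS => ?_⟩
  · exact (hp.2.lt_of_ne fun h => hmS (by rw [← h]; exact hp.1)).trans_le hq.2
  · rcases le_total x m with h | h
    · exact hx.1.not_ge (le_csSup hbdd ⟨hxS, h⟩)
    · exact hx.2.not_ge (csInf_le hbdd' ⟨hxS, h⟩)

/-- The image of a gap is a gap, and distinct gaps are disjoint. -/
theorem eventually_fix_gap {p q : ℝ} (hp : p ∈ S) (hq : q ∈ S) (hpq : p < q)
    (hgap : ∀ x ∈ Ioo p q, x ∉ S) {T : ℕ → ℝ ≃o ℝ} (hTS : ∀ n x, T n x ∈ S ↔ x ∈ S)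
    (hT : ∀ x, Tendsto (fun n => T n x) atTop (𝓝 x)) : ∀ᶠ n in atTop, T n p = p ∧ T n q = q := by
  have hle {x : ℝ} (hx : x ∈ S) (hxq : x < q) : x ≤ p := by
    by_contra! h
    exact hgap x ⟨h, hxq⟩ hx
  have hge {x : ℝ} (hx : x ∈ S) (hxp : p < x) : q ≤ x := by
    by_contra! h
    exact hgap x ⟨hxp, h⟩ hx
  have hsymm (n x) : (T n).symm x ∈ S ↔ x ∈ S := by simp [← hTS n ((T n).symm x)]
  filter_upwards [(hT p).eventually_lt_const hpq, (hT q).eventually_const_lt hpq] with n hn₁ hn₂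
  constructor
  · refine (hle ((hTS n p).2 hp) hn₁).antisymm ((T n).symm_apply_le.1 (hle ((hsymm n p).2 hp) ?_))
    exact (T n).symm_apply_lt.2 hn₂
  · refine ((T n).le_symm_apply.1 (hge ((hsymm n q).2 hq) ?_)).antisymm (hge ((hTS n q).2 hq) hn₂)
    exact (T n).lt_symm_apply.2 hn₁

theorem eventually_eq_one_and_eq_zero (hS : IsClosed S) (hint : interior S = ∅)
    (hnt : S.Nontrivial) {l r : ℕ → ℝ} (hl₀ : ∀ n, 0 < l n) (hl : Tendsto l atTop (𝓝 1))
    (hr : Tendsto r atTop (𝓝 0)) (hinv : ∀ n x, l n * x + r n ∈ S ↔ x ∈ S) :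
    ∀ᶠ n in atTop, l n = 1 ∧ r n = 0 := by
  obtain ⟨a, ha, b, hb, hab⟩ := hnt.exists_lt
  obtain ⟨p, hp, q, hq, hpq, hgap⟩ := exists_gap hS hint ha hb hab
  have hfix := eventually_fix_gap hp hq hpq hgap
    (T := fun n => (OrderIso.mulLeft₀ (l n) (hl₀ n)).trans (OrderIso.addRight (r n))) hinv
    fun x => by simpa using (hl.mul_const x).add hr
  filter_upwards [hfix] with n ⟨hnp, hnq⟩
  simp only [OrderIso.trans_apply, OrderIso.mulLeft₀_apply, OrderIso.addRight_apply] at hnp hnq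
  have hln : l n = 1 := mul_right_cancel₀ (sub_ne_zero.2 hpq.ne') (by linarith : _ = 1 * (q - p))
  refine ⟨hln, ?_⟩
  rw [hln] at hnp
  linarith

end Gaps

theorem translate_E_apply_diag (g : SL(3, ℝ)) (i : Fin 3) : translate E g i i = g 2 i ^ 2 := by
  fin_cases i <;> simp [translate, pullback, E, mul_apply, Fin.sum_univ_three, pow_two]

theorem translate_E_of_row {g : SL(3, ℝ)} (h₀ : g 2 0 = 0) (h₁ : g 2 1 = 0) :
    translate E g = g 2 2 ^ 2 • E := by
  ext i j
  fin_cases i <;> fin_cases j <;>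
    simp [translate, pullback, E, mul_apply, Fin.sum_univ_three, h₀, h₁, pow_two]

theorem translate_J_apply (g : SL(3, ℝ)) (i j : Fin 3) :
    translate J g i j = g 0 i * g 2 j - g 1 i * g 1 j + g 2 i * g 0 j := by
  simp [translate, pullback, J, mul_apply, Fin.sum_univ_three]
  ring

theorem eq_U_of_translate_J_eq {g : SL(3, ℝ)} (hg : translate J g = J) (h₀ : g 2 0 = 0)
    (h₁ : g 2 1 = 0) (h₂ : g 2 2 = 1) : g = U (g 0 1) := by
  have hdet := g.det_coe
  have hentry (i j : Fin 3) : g 0 i * g 2 j - g 1 i * g 1 j + g 2 i * g 0 j = J i j := by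
    rw [← translate_J_apply, hg]
  have g₁₀ : g 1 0 = 0 := by simpa [h₀, J] using hentry 0 0
  have g₀₀ : g 0 0 = 1 := by simpa [h₀, h₂, g₁₀, J] using hentry 0 2
  have g₁₁ : g 1 1 = 1 := by
    simpa only [det_fin_three, h₀, h₁, h₂, g₁₀, g₀₀, mul_zero, zero_mul, mul_one, one_mul,
      sub_zero, add_zero] using hdet
  have g₁₂ : g 0 1 = g 1 2 := by simpa [h₁, h₂, g₁₁, J, sub_eq_zero] using hentry 1 2
  have g₀₂ : g 0 2 = g 0 1 ^ 2 / 2 := by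
    have h := hentry 2 2
    rw [h₂, ← g₁₂, show J 2 2 = 0 from rfl] at h
    linarith
  ext i j
  fin_cases i <;> fin_cases j <;> simp [coe_U, *]

/-- The difference of the two relations makes `translate E g` a multiple of `E`. -/
theorem row_eq_zero_of_translate {g : SL(3, ℝ)} {b c d : ℝ} (hb : b ≠ 0)
    (hJ : translate J g = J + c • E) (hbE : translate (J + b • E) g = J + d • E) :
    g 2 0 = 0 ∧ g 2 1 = 0 := by
  rw [translate_add, translate_smul, hJ] at hbE
  have key (i : Fin 3) (hi : E i i = 0) : g 2 i = 0 := by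
    have := congrFun (congrFun hbE i) i
    simpa [hi, hb, translate_E_apply_diag] using this
  exact ⟨key 0 rfl, key 1 rfl⟩

theorem translate_J_add_smul_E_of_row {g : SL(3, ℝ)} {c : ℝ} (hJ : translate J g = J + c • E)
    (h₀ : g 2 0 = 0) (h₁ : g 2 1 = 0) (σ : ℝ) :
    translate (J + σ • E) g = J + (g 2 2 ^ 2 * σ + c) • E := by
  rw [translate_add, translate_smul, translate_E_of_row h₀ h₁, hJ, smul_smul, mul_comm σ, add_smul,
    add_assoc, add_comm (c • E)]

section MinimalSet

variable {ε : ℝ} {Z : Set (Matrix (Fin 3) (Fin 3) ℝ)} {Y : Set SL(3, ℝ)} {y g : SL(3, ℝ)}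

theorem zero_mem_shiftSet (hYZ : Y ⊆ {g | translate J g ∈ Z}) : 0 ∈ shiftSet Z Y := fun y hy => by
  simpa using hYZ hy

theorem IsGapFamily.mem_shiftSet_iff (hZ : IsGapFamily ε Z) (hY : IsMinimalSet Y) (hy : y ∈ Y)
    (hgy : g * y ∈ Y) {σ τ : ℝ} (hg : translate (J + σ • E) g = J + τ • E) :
    τ ∈ shiftSet Z Y ↔ σ ∈ shiftSet Z Y := by
  have h : translate (J + σ • E) (g * y) = translate (J + τ • E) y := by rw [translate_mul, hg]
  exact ⟨fun hτ => hZ.mem_shiftSet hY hgy (h ▸ hτ y hy),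
    fun hσ => hZ.mem_shiftSet hY hy (h ▸ hσ _ hgy)⟩

theorem IsGapFamily.eventually_translate_eq (hZ : IsGapFamily ε Z) (hY : IsMinimalSet Y)
    (hYZ : Y ⊆ {g | translate J g ∈ Z}) (hy : y ∈ Y) {g : ℕ → SL(3, ℝ)}
    (hg : Tendsto g atTop (𝓝 1)) (hgY : ∀ n, g n * y ∈ Y) {c : ℝ} (hc : c ∈ shiftSet Z Y) :
    ∀ᶠ n in atTop, translate (J + c • E) (g n) = J + translate (J + c • E) (g n) 2 2 • E := by
  refine hZ.eventually_eq_J_add_smul_E (c := c) hY hYZ hy ?_ fun n => ?_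
  · simpa only [translate_one] using tendsto_translate tendsto_const_nhds hg
  · rw [← translate_mul]
    exact hc _ (hgY n)

theorem IsGapFamily.shiftSet_subsingleton (hZ : IsGapFamily ε Z) (hY : IsMinimalSet Y)
    (hYZ : Y ⊆ {g | translate J g ∈ Z}) : (shiftSet Z Y).Subsingleton := by
  by_contra hnt
  have hnt := not_subsingleton_iff.1 hnt
  obtain ⟨b, hb, hb₀⟩ := hnt.exists_ne 0
  obtain ⟨y, hy⟩ := hY.prop.2
  obtain ⟨g, hg, hgY, hgU⟩ := exists_tendsto_one_mul_mem hZ hY hYZ hy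
  set l : ℕ → ℝ := fun n => g n 2 2 ^ 2
  set r : ℕ → ℝ := fun n => translate J (g n) 2 2
  have hg₂₂ : Tendsto (fun n => g n 2 2) atTop (𝓝 1) := by
    have hcont : Continuous fun h : SL(3, ℝ) => h 2 2 := by fun_prop
    have := (hcont.tendsto 1).comp hg
    simpa [Function.comp_def] using this
  have hr : Tendsto r atTop (𝓝 0) := by
    have := tendsto_translate (tendsto_const_nhds (x := J)) hg
    rw [translate_one] at this
    exact tendsto_pi_nhds.1 (tendsto_pi_nhds.1 this 2) 2
  have hev := (hZ.eventually_translate_eq hY hYZ hy hg hgY (zero_mem_shiftSet hYZ)).and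
    ((hZ.eventually_translate_eq hY hYZ hy hg hgY hb).and (hg₂₂.eventually_const_lt one_pos))
  simp only [zero_smul, add_zero] at hev
  obtain ⟨N, hN⟩ := eventually_atTop.1 hev
  have hrow (n) := row_eq_zero_of_translate hb₀ (hN (n + N) (N.le_add_left n)).1
    (hN (n + N) (N.le_add_left n)).2.1
  have hfix := eventually_eq_one_and_eq_zero (isClosed_shiftSet hZ Y)
    (hZ.interior_shiftSet hY.prop.2) hnt (l := fun n => l (n + N)) (r := fun n => r (n + N))
    (fun n => pow_pos (hN (n + N) (N.le_add_left n)).2.2 2)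
    ((tendsto_add_atTop_iff_nat N).2 (by simpa using hg₂₂.pow 2))
    ((tendsto_add_atTop_iff_nat N).2 hr)
    (fun n σ => hZ.mem_shiftSet_iff hY hy (hgY _) <| translate_J_add_smul_E_of_row
      (hN (n + N) (N.le_add_left n)).1 (hrow n).1 (hrow n).2 σ)
  obtain ⟨n, hl₁, hr₀⟩ := hfix.exists
  obtain ⟨hJ, -, hpos⟩ := hN (n + N) (N.le_add_left n)
  refine hgU (n + N) _ (eq_U_of_translate_J_eq ?_ (hrow n).1 (hrow n).2 ?_)
  · rw [hJ, show translate J (g (n + N)) 2 2 = 0 from hr₀, zero_smul, add_zero]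
  · exact (pow_eq_one_iff_of_nonneg hpos.le two_ne_zero).1 hl₁

theorem IsGapFamily.eventually_eq_translate (hZ : IsGapFamily ε Z) (hY : IsMinimalSet Y)
    (hYZ : Y ⊆ {g | translate J g ∈ Z}) (hy : y ∈ Y) :
    ∀ᶠ M in 𝓝 (translate J y), M ∈ Z → M = translate J y := by
  by_contra hcon
  obtain ⟨M, hM, hMne⟩ := exists_seq_forall_of_frequently (not_eventually.1 hcon)
  simp only [Classical.not_imp] at hMne
  have hlim : Tendsto (fun n => translate (M n) y⁻¹) atTop (𝓝 (J + (0 : ℝ) • E)) := by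
    simpa only [translate_translate_inv, zero_smul, add_zero] using
      tendsto_translate hM (tendsto_const_nhds (x := y⁻¹))
  obtain ⟨n, hn⟩ := (hZ.eventually_eq_J_add_smul_E hY hYZ hy hlim fun n => by
    simpa only [translate_inv_translate] using (hMne n).1).exists
  have hM' : M n = translate (J + translate (M n) y⁻¹ 2 2 • E) y := by
    rw [← hn, translate_inv_translate]
  have hσ : translate (M n) y⁻¹ 2 2 ∈ shiftSet Z Y :=
    hZ.mem_shiftSet hY hy (hM' ▸ (hMne n).1)
  rw [hZ.shiftSet_subsingleton hY hYZ hσ (zero_mem_shiftSet hYZ), zero_smul, add_zero] at hM'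
  exact (hMne n).2 hM'

end MinimalSet

/-! ### Discrete orbits and rationality -/

/-- Proportionality of the form of `A` to a form with rational coefficients. -/
def IsRationalMultiple {ι : Type*} (A : Matrix ι ι ℝ) : Prop :=
  ∃ c : ℝ, c ≠ 0 ∧ ∀ i j, ∃ q : ℚ, c * A i j = (q : ℝ)

/-- The matrices of the forms integrally equivalent to that of `A`. -/
def integralOrbit (A : Matrix (Fin 3) (Fin 3) ℝ) : Set (Matrix (Fin 3) (Fin 3) ℝ) :=
  range fun γ : SL(3, ℤ) => translate A (γ : SL(3, ℝ))

theorem self_mem_integralOrbit (A : Matrix (Fin 3) (Fin 3) ℝ) : A ∈ integralOrbit A :=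
  ⟨1, by simp only [map_one, translate_one]⟩

theorem translate_mem_integralOrbit {A M : Matrix (Fin 3) (Fin 3) ℝ} (hM : M ∈ integralOrbit A)
    (γ : SL(3, ℤ)) : translate M (γ : SL(3, ℝ)) ∈ integralOrbit A := by
  obtain ⟨η, rfl⟩ := hM
  exact ⟨η * γ, by simp only [map_mul, translate_mul]⟩

section Orbit

variable {ε : ℝ} {A : Matrix (Fin 3) (Fin 3) ℝ} {g₀ : SL(3, ℝ)}

theorem isGapFamily_closure_integralOrbit (hε : 0 < ε) (hA : A.IsSymm) (hdet : A.det = 1)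
    (hgap : ∀ v : Fin 3 → ℤ, v ≠ 0 → ε ≤ |quadForm A (intVec v)|) :
    IsGapFamily ε (closure (integralOrbit A)) where
  pos := hε
  isClosed := isClosed_closure
  translate_mem γ M hM := by
    refine map_mem_closure (f := fun M => translate M (γ : SL(3, ℝ))) (by fun_prop) hM ?_
    exact fun M hM => translate_mem_integralOrbit hM γ
  isSymm M hM := by
    refine closure_minimal (t := {M | Mᵀ = M}) ?_ ?_ hM
    · rintro _ ⟨γ, rfl⟩
      exact translate_isSymm hA _
    · exact isClosed_eq (by fun_prop) continuous_id
  det_eq_one M hM := by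
    refine closure_minimal (t := {M | M.det = 1}) ?_ ?_ hM
    · rintro _ ⟨γ, rfl⟩
      exact (det_translate _ _).trans hdet
    · exact isClosed_eq (by fun_prop) continuous_const
  le_abs M hM v hv := by
    refine closure_minimal (t := {M | ε ≤ |quadForm M (intVec v)|}) ?_ ?_ hM
    · rintro _ ⟨γ, rfl⟩
      rw [mem_ofPred_eq, quadForm_translate, SL_mulVec_intVec]
      exact hgap _ (SL_mulVec_ne_zero γ hv)
    · exact isClosed_le continuous_const (continuous_quadForm continuous_id continuous_const).abs

theorem mem_of_mem_closure_of_eventually_eq {X : Type*} [TopologicalSpace X] {s : Set X} {x : X}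
    (hx : x ∈ closure s) (h : ∀ᶠ y in 𝓝 x, y ∈ closure s → y = x) : x ∈ s := by
  obtain ⟨y, hy, hys⟩ := mem_closure_iff_nhds.1 hx _ h
  exact hy (subset_closure hys) ▸ hys

theorem IsGapFamily.eventually_eq_translate_of_eventually_eq
    {Z : Set (Matrix (Fin 3) (Fin 3) ℝ)} (hZ : IsGapFamily ε Z) {X : Matrix (Fin 3) (Fin 3) ℝ}
    (hX : ∀ᶠ M in 𝓝 X, M ∈ Z → M = X) (γ : SL(3, ℤ)) :
    ∀ᶠ M in 𝓝 (translate X (γ : SL(3, ℝ))), M ∈ Z → M = translate X (γ : SL(3, ℝ)) := by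
  have hcont : Continuous fun M => translate M ((γ : SL(3, ℝ))⁻¹) := by fun_prop
  have hlim := hcont.tendsto (translate X (γ : SL(3, ℝ)))
  rw [translate_translate_inv] at hlim
  filter_upwards [hlim.eventually hX] with M hM hMZ
  have hmem := hZ.translate_mem γ⁻¹ M hMZ
  rw [map_inv] at hmem
  rw [← hM hmem, translate_inv_translate]

theorem exists_isolated_translate_J {Z : Set (Matrix (Fin 3) (Fin 3) ℝ)} (hZ : IsGapFamily ε Z)
    (hne : ∃ g, translate J g ∈ Z) :
    ∃ y, translate J y ∈ Z ∧ ∀ {Z'}, IsGapFamily ε Z' → Z ⊆ Z' →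
      ∀ᶠ M in 𝓝 (translate J y), M ∈ Z' → M = translate J y := by
  obtain ⟨K, hK⟩ := hZ.exists_compactlyCovers
  obtain ⟨Y, hYZ, hY⟩ := exists_isMinimalSet hZ.isFlowInvariant hne hK
  obtain ⟨y, hy⟩ := hY.prop.2
  exact ⟨y, hYZ hy, fun hZ' hsub => hZ'.eventually_eq_translate hY (hYZ.trans fun _ h => hsub h) hy⟩

theorem eventually_eq_of_mem_integralOrbit
    (hZ : IsGapFamily ε (closure (integralOrbit (translate J g₀))))
    {X : Matrix (Fin 3) (Fin 3) ℝ} (hX : X ∈ integralOrbit (translate J g₀)) :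
    ∀ᶠ M in 𝓝 X, M ∈ closure (integralOrbit (translate J g₀)) → M = X := by
  obtain ⟨y, hy, hiso⟩ :=
    exists_isolated_translate_J hZ ⟨g₀, subset_closure (self_mem_integralOrbit _)⟩
  replace hiso := hiso hZ subset_rfl
  obtain ⟨η, hη⟩ := mem_of_mem_closure_of_eventually_eq hy hiso
  obtain ⟨γ, rfl⟩ := hX
  have := hZ.eventually_eq_translate_of_eventually_eq hiso (η⁻¹ * γ)
  rwa [← hη, ← translate_mul, ← map_mul, mul_inv_cancel_left] at this

theorem isClosed_closure_diff_of_eventually_eq {X : Type*} [TopologicalSpace X] {s : Set X}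
    (h : ∀ x ∈ s, ∀ᶠ y in 𝓝 x, y ∈ closure s → y = x) : IsClosed (closure s \ s) := by
  refine closure_subset_iff_isClosed.1 fun x hx => ?_
  refine ⟨closure_minimal sdiff_subset isClosed_closure hx, fun hxs => ?_⟩
  obtain ⟨y, hy, hys⟩ := mem_closure_iff_nhds.1 hx _ (h x hxs)
  exact hys.2 (hy hys.1 ▸ hxs)

theorem mem_integralOrbit_of_mem_closure
    (hZ : IsGapFamily ε (closure (integralOrbit (translate J g₀)))) {g : SL(3, ℝ)}
    (hg : translate J g ∈ closure (integralOrbit (translate J g₀))) :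
    translate J g ∈ integralOrbit (translate J g₀) := by
  by_contra hgO
  have hZ' : IsGapFamily ε
      (closure (integralOrbit (translate J g₀)) \ integralOrbit (translate J g₀)) :=
    { pos := hZ.pos
      isClosed := isClosed_closure_diff_of_eventually_eq fun X =>
        eventually_eq_of_mem_integralOrbit hZ
      translate_mem := fun γ M hM => ⟨hZ.translate_mem γ M hM.1, fun h => hM.2 <| by
        have := translate_mem_integralOrbit h γ⁻¹
        rwa [map_inv, translate_translate_inv] at this⟩
      isSymm := fun M hM => hZ.isSymm M hM.1
      det_eq_one := fun M hM => hZ.det_eq_one M hM.1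
      le_abs := fun M hM => hZ.le_abs M hM.1 }
  obtain ⟨y, hy, hiso⟩ := exists_isolated_translate_J hZ' ⟨g, hg, hgO⟩
  exact hy.2 (mem_of_mem_closure_of_eventually_eq hy.1 (hiso hZ sdiff_subset))

theorem finite_translate_image_inter_closure
    (hZ : IsGapFamily ε (closure (integralOrbit (translate J g₀)))) {K : Set SL(3, ℝ)}
    (hK : IsCompact K) : (translate J '' K ∩ closure (integralOrbit (translate J g₀))).Finite := by
  have hC : IsCompact (translate J '' K ∩ closure (integralOrbit (translate J g₀))) :=
    (hK.image (continuous_translate continuous_const continuous_id)).inter_right isClosed_closure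
  obtain ⟨t, -, hcover⟩ := hC.elim_nhds_subcover
    (fun X => {M | M ∈ closure (integralOrbit (translate J g₀)) → M = X}) (by
      rintro _ ⟨⟨k, -, rfl⟩, hk⟩
      exact eventually_eq_of_mem_integralOrbit hZ (mem_integralOrbit_of_mem_closure hZ hk))
  refine t.finite_toSet.subset fun X hX => ?_
  obtain ⟨x, hx, hXx⟩ := mem_iUnion₂.1 (hcover hX)
  exact hXx hX.2 ▸ hx

end Orbit

section Stabilizer

variable {P : Matrix (Fin 3) (Fin 3) ℝ} {C : Set (Matrix (Fin 3) (Fin 3) ℝ)}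

theorem eq_zero_of_forall_abs_drift_add_le {w : Fin 4 → ℝ} {d B : ℝ}
    (h : ∀ t, |drift w t + d| ≤ B) : w = 0 := by
  set p : Polynomial ℝ := .C 2 * .X * .C (w 0) + .X ^ 2 * .C (w 1) + .X ^ 3 * .C (w 2)
    + .X ^ 4 * .C (w 3 / 4) + .C d with hp
  have heval (t) : p.eval t = drift w t + d := by
    simp [hp, drift]
    ring
  have hdeg : p.degree ≤ 0 := p.isBoundedUnder_abs_atTop_iff.1
    (isBoundedUnder_of ⟨B, fun t => (congrArg abs (heval t)).trans_le (h t)⟩)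
  refine eq_zero_of_forall_drift_eq_zero fun t => ?_
  have hconst : p.eval t = p.eval 0 := by
    rw [Polynomial.eq_C_of_degree_le_zero hdeg, Polynomial.eval_C, Polynomial.eval_C]
  rw [heval, heval] at hconst
  simpa [drift] using hconst

theorem transverse_eq_zero_of_isCompact (hP : P.IsSymm) (hC : IsCompact C)
    (h : ∀ t, translate P (U t) ∈ C) : transverse P = 0 := by
  have hcont : Continuous fun M : Matrix (Fin 3) (Fin 3) ℝ => M 2 2 := by fun_prop
  obtain ⟨B, hB⟩ := hC.exists_bound_of_continuousOn hcont.continuousOn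
  refine eq_zero_of_forall_abs_drift_add_le (d := P 2 2) (B := B) fun t => ?_
  simpa [translate_U_eq hP] using hB _ (h t)

theorem det_J : J.det = 1 := by simp [J, det_fin_three]

theorem J_mul_J : J * J = 1 := by
  ext i j
  fin_cases i <;> fin_cases j <;> simp [J, mul_apply, Fin.sum_univ_three]

/-- Boundedness along the polynomial orbits of `U`, and of its conjugate by the matrix `J`, which
itself stabilizes the form, leaves only the multiples of `J`. -/
theorem eq_smul_J_of_isCompact (hP : P.IsSymm) (hC : IsCompact C)
    (h : ∀ g, translate J g = J → translate P g ∈ C) : P = P 0 2 • J := by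
  set s : SL(3, ℝ) := ⟨J, det_J⟩
  have hs : translate J s = J := by
    rw [translate, pullback, J_isSymm, J_mul_J, one_mul]
  have hPs : translate P s = J * P * J := by rw [translate, pullback, J_isSymm]
  have hw := transverse_eq_zero_of_isCompact hP hC fun t => h _ (translate_J_U t)
  have hws := transverse_eq_zero_of_isCompact (translate_isSymm hP s) hC fun t => by
    rw [← translate_mul]
    exact h _ (by rw [translate_mul, hs, translate_J_U])
  have h₂₂ : P 2 2 = 0 := by
    have := congrFun hws 3
    rw [hPs] at this
    simpa [transverse, J, mul_apply, vecMul, dotProduct, Fin.sum_univ_three] using this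
  have h₁₂ : P 1 2 = 0 := congrFun hw 0
  have h₁₁ : P 1 1 = -P 0 2 := (neg_eq_of_add_eq_zero_right (congrFun hw 1)).symm
  have h₀₁ : P 0 1 = 0 := congrFun hw 2
  have h₀₀ : P 0 0 = 0 := congrFun hw 3
  have h₁₀ : P 1 0 = 0 := (hP.apply 0 1).trans h₀₁
  have h₂₁ : P 2 1 = 0 := (hP.apply 1 2).trans h₁₂
  have h₂₀ : P 2 0 = P 0 2 := hP.apply 0 2
  ext i j
  fin_cases i <;> fin_cases j <;> simp [J, *]

end Stabilizer

section Rational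

theorem translate_map_linearMap (φ : ℝ →ₗ[ℚ] ℚ) (M : Matrix (Fin 3) (Fin 3) ℝ) (γ : SL(3, ℤ)) :
    translate (M.map fun x => (φ x : ℝ)) (γ : SL(3, ℝ)) =
      (translate M (γ : SL(3, ℝ))).map fun x => (φ x : ℝ) := by
  have hmul (m n : ℤ) (x : ℝ) : φ (m * x * n) = m * φ x * n := by
    rw [← zsmul_eq_mul, mul_comm, ← zsmul_eq_mul, map_zsmul, map_zsmul, zsmul_eq_mul, zsmul_eq_mul,
      mul_comm]
  ext i j
  simp [translate, pullback, mul_apply, Finset.sum_mul, hmul]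

variable {g₀ : SL(3, ℝ)} {ε : ℝ}

/-- An element `h` of the stabilizer of `J` acts on `translate P g₀⁻¹` as an element of `SL(3, ℤ)`
acts on `P`, up to a compact set; there are only finitely many relevant translates by `SL(3, ℤ)`. -/
theorem exists_isCompact_translate_mem
    (hZ : IsGapFamily ε (closure (integralOrbit (translate J g₀)))) (φ : ℝ →ₗ[ℚ] ℚ) :
    ∃ C, IsCompact C ∧ ∀ h, translate J h = J →
      translate (translate ((translate J g₀).map fun x => (φ x : ℝ)) g₀⁻¹) h ∈ C := by
  obtain ⟨K, hK⟩ := hZ.exists_compactlyCovers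
  set F := translate J '' K ∩ closure (integralOrbit (translate J g₀))
  have hF : F.Finite := finite_translate_image_inter_closure hZ hK.isCompact
  have hcont : Continuous fun p : Matrix (Fin 3) (Fin 3) ℝ × SL(3, ℝ) => translate p.1 p.2⁻¹ :=
    by fun_prop
  refine ⟨_, ((hF.image fun M => M.map fun x => (φ x : ℝ)).isCompact.prod hK.isCompact).image hcont,
    fun h hJ => ?_⟩
  have hJ' : translate J h⁻¹ = J := by
    conv_lhs => rw [← hJ]
    exact translate_translate_inv J h
  obtain ⟨γ, hγ⟩ := hK.exists_mul_mem (h⁻¹ * g₀) <| by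
    rw [mem_ofPred_eq, translate_mul, hJ']
    exact subset_closure (self_mem_integralOrbit _)
  refine ⟨(_, h⁻¹ * g₀ * γ), ⟨⟨translate (translate J g₀) γ, ⟨⟨_, hγ, ?_⟩, ?_⟩, rfl⟩, hγ⟩, ?_⟩
  · rw [translate_mul, translate_mul, hJ']
  · exact subset_closure ⟨γ, rfl⟩
  · change translate ((translate (translate J g₀) γ).map fun x => (φ x : ℝ))
      (h⁻¹ * g₀ * γ : SL(3, ℝ))⁻¹ = _
    rw [← translate_map_linearMap, ← translate_mul, ← translate_mul]
    congr 1
    group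

theorem isRationalMultiple_translate_J (hε : 0 < ε)
    (hgap : ∀ v : Fin 3 → ℤ, v ≠ 0 → ε ≤ |quadForm (translate J g₀) (intVec v)|) :
    IsRationalMultiple (translate J g₀) := by
  set A := translate J g₀
  have hsymm : A.IsSymm := translate_isSymm J_isSymm g₀
  have hdet : A.det = 1 := (det_translate J g₀).trans det_J
  have hZ := isGapFamily_closure_integralOrbit hε hsymm hdet hgap
  obtain ⟨i, j, hij⟩ : ∃ i j, A i j ≠ 0 := by
    by_contra! h
    rw [show A = 0 from ext h] at hdet
    simp at hdet
  obtain ⟨φ, hφ⟩ : ∃ φ : ℝ →ₗ[ℚ] ℚ, φ (A i j) ≠ 0 := by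
    contrapose! hij
    exact (Module.forall_dual_apply_eq_zero_iff ℚ (A i j)).1 hij
  set P := A.map fun x => (φ x : ℝ)
  obtain ⟨C, hC, hmem⟩ := exists_isCompact_translate_mem hZ φ
  have hPJ := eq_smul_J_of_isCompact (translate_isSymm (hsymm.map _) g₀⁻¹) hC hmem
  set m := translate P g₀⁻¹ 0 2
  have hPA : P = m • A := by
    rw [← translate_inv_translate P g₀, hPJ, translate_smul]
  have hentry (i j) : m * A i j = φ (A i j) := (congrFun (congrFun hPA i) j).symm
  refine ⟨m, fun hm => hφ ?_, fun i j => ⟨_, hentry i j⟩⟩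
  have := hentry i j
  rw [hm, zero_mul] at this
  exact_mod_cast this.symm

end Rational

/-! ### Normal form of indefinite ternary forms -/

section NormalForm

theorem exists_isotropic {ι : Type*} [Fintype ι] {A : Matrix ι ι ℝ}
    (hpos : ∃ x, 0 < quadForm A x) (hneg : ∃ x, quadForm A x < 0) :
    ∃ x, x ≠ 0 ∧ quadForm A x = 0 := by
  obtain ⟨p, hp⟩ := hpos
  obtain ⟨q, hq⟩ := hneg
  have hcont : ContinuousOn (fun t : ℝ => quadForm A (t • p + (1 - t) • q)) (Icc 0 1) := by
    fun_prop
  obtain ⟨t, -, ht⟩ := intermediate_value_Icc zero_le_one hcont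
    (show (0 : ℝ) ∈ _ by simp [hp.le, hq.le])
  refine ⟨t • p + (1 - t) • q, fun h0 => ?_, ht⟩
  have hsq : t ^ 2 * quadForm A p = (1 - t) ^ 2 * quadForm A q := by
    rw [← quadForm_smul, ← quadForm_smul, eq_neg_of_add_eq_zero_left h0, ← neg_one_smul ℝ,
      quadForm_smul]
    norm_num
  have h₁ : 0 ≤ t ^ 2 * quadForm A p := mul_nonneg (sq_nonneg t) hp.le
  have h₂ : (1 - t) ^ 2 * quadForm A q ≤ 0 := mul_nonpos_of_nonneg_of_nonpos (sq_nonneg _) hq.le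
  have ht₀ : t = 0 := by
    simpa [hp.ne'] using (show t ^ 2 * quadForm A p = 0 by linarith)
  subst ht₀
  linarith

theorem exists_isotropic_dotProduct_eq_one {ι : Type*} [Fintype ι] [DecidableEq ι]
    {A : Matrix ι ι ℝ} (hA : A.IsSymm) (hdet : A.det ≠ 0) {x : ι → ℝ} (hx : x ≠ 0)
    (hQx : quadForm A x = 0) : ∃ y, quadForm A y = 0 ∧ x ⬝ᵥ A *ᵥ y = 1 := by
  have hAx : A *ᵥ x ≠ 0 := fun h => hx (eq_zero_of_mulVec_eq_zero hdet h)
  obtain ⟨w, hxw⟩ : ∃ w, x ⬝ᵥ A *ᵥ w = 1 := by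
    refine ⟨((A *ᵥ x) ⬝ᵥ (A *ᵥ x))⁻¹ • (A *ᵥ x), ?_⟩
    rw [dotProduct_mulVec_comm hA, smul_dotProduct, smul_eq_mul, inv_mul_cancel₀]
    exact fun h => hAx (dotProduct_self_eq_zero.1 h)
  refine ⟨w + (-(quadForm A w / 2)) • x, ?_, ?_⟩
  · rw [quadForm_add hA, quadForm_smul, hQx, mulVec_smul, dotProduct_smul,
      dotProduct_mulVec_comm hA, hxw]
    simp only [smul_eq_mul]
    ring
  · rw [mulVec_add, dotProduct_add, hxw, mulVec_smul, dotProduct_smul, ← quadForm, hQx,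
      smul_zero, add_zero]

theorem exists_pullback_eq_hyperbolic {A : Matrix (Fin 3) (Fin 3) ℝ} (hA : A.IsSymm)
    (hdet : A.det ≠ 0) (hpos : ∃ x, 0 < quadForm A x) (hneg : ∃ x, quadForm A x < 0) :
    ∃ P : Matrix (Fin 3) (Fin 3) ℝ, P.det ≠ 0 ∧
      ∃ m, m ≠ 0 ∧ pullback A P = !![0, 0, 1; 0, m, 0; 1, 0, 0] := by
  obtain ⟨x, hx, hQx⟩ := exists_isotropic hpos hneg
  obtain ⟨y, hQy, hxy⟩ := exists_isotropic_dotProduct_eq_one hA hdet hx hQx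
  obtain ⟨z, hz, hz₀⟩ := exists_mulVec_eq_zero_iff.2
    (show (of ![A *ᵥ x, A *ᵥ y, 0]).det = 0 from det_eq_zero_of_row_eq_zero 2 fun _ => rfl)
  have hzx : z ⬝ᵥ A *ᵥ x = 0 := by rw [dotProduct_comm]; exact congrFun hz₀ 0
  have hzy : z ⬝ᵥ A *ᵥ y = 0 := by rw [dotProduct_comm]; exact congrFun hz₀ 1
  have hxz := (dotProduct_mulVec_comm hA x z).trans hzx
  have hyz := (dotProduct_mulVec_comm hA y z).trans hzy
  have hyx := (dotProduct_mulVec_comm hA y x).trans hxy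
  set P : Matrix (Fin 3) (Fin 3) ℝ := (of ![x, z, y])ᵀ
  have hP : pullback A P = !![0, 0, 1; 0, quadForm A z, 0; 1, 0, 0] := by
    ext i j
    rw [pullback_apply]
    fin_cases i <;> fin_cases j <;> first | assumption | rfl
  have hPdet : P.det ≠ 0 := fun h => by
    obtain ⟨t, ht, hPt⟩ := exists_mulVec_eq_zero_iff.2 h
    have hNt : !![0, 0, 1; 0, quadForm A z, 0; 1, 0, 0] *ᵥ t = 0 := by
      rw [← hP, pullback, ← mulVec_mulVec, hPt, mulVec_zero]
    have ht₂ : t 2 = 0 := by simpa [mulVec, dotProduct, Fin.sum_univ_three] using congrFun hNt 0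
    have ht₀ : t 0 = 0 := by simpa [mulVec, dotProduct, Fin.sum_univ_three] using congrFun hNt 2
    have ht₁ : t 1 • z = 0 := by
      rw [← hPt]
      ext i
      simp [P, mulVec, dotProduct, Fin.sum_univ_three, ht₀, ht₂, mul_comm]
    refine ht (funext fun i => ?_)
    fin_cases i
    exacts [ht₀, (smul_eq_zero.1 ht₁).resolve_right hz, ht₂]
  refine ⟨P, hPdet, quadForm A z, fun hQz => ?_, hP⟩
  refine mul_ne_zero (pow_ne_zero 2 hPdet) hdet ?_
  rw [← det_pullback, hP, hQz]
  simp [det_fin_three]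

theorem exists_eq_smul_translate_of_pullback_eq {A B P : Matrix (Fin 3) (Fin 3) ℝ}
    (hP : P.det ≠ 0) {c : ℝ} (hc : c ≠ 0) (h : pullback A P = c • B) :
    ∃ c : ℝ, c ≠ 0 ∧ ∃ g : SL(3, ℝ), A = c • translate B g := by
  obtain ⟨r, hr⟩ : ∃ r : ℝ, r ^ 3 = P.det := by
    have hle : |P.det| ≤ (1 + |P.det|) ^ 3 := by
      have := abs_nonneg P.det
      nlinarith [pow_nonneg this 3]
    refine mem_range_of_exists_le_of_exists_ge (continuous_pow 3) ⟨-(1 + |P.det|), ?_⟩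
      ⟨1 + |P.det|, (le_abs_self _).trans hle⟩
    rw [Odd.neg_pow (by decide)]
    exact (neg_le_neg hle).trans (neg_abs_le _)
  have hr₀ : r ≠ 0 := by
    rintro rfl
    exact hP (by simpa using hr.symm)
  refine ⟨c * r⁻¹ ^ 2, by positivity, ⟨r • P⁻¹, ?_⟩, ?_⟩
  · rw [det_smul, Fintype.card_fin, hr, det_nonsing_inv, Ring.mul_inverse_cancel _ hP.isUnit]
  · change A = (c * r⁻¹ ^ 2) • pullback B (r • P⁻¹)
    have hA : A = c • pullback B P⁻¹ := by
      rw [← pullback_smul, ← h, ← pullback_mul, mul_nonsing_inv _ hP.isUnit, pullback_one]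
    rw [hA]
    simp only [pullback, transpose_smul, Matrix.smul_mul, Matrix.mul_smul, smul_smul]
    congr 1
    field_simp

theorem exists_eq_smul_translate_J {A : Matrix (Fin 3) (Fin 3) ℝ} (hA : A.IsSymm)
    (hdet : A.det ≠ 0) (hpos : ∃ x, 0 < quadForm A x) (hneg : ∃ x, quadForm A x < 0) :
    ∃ c : ℝ, c ≠ 0 ∧ ∃ g : SL(3, ℝ), A = c • translate J g := by
  obtain ⟨P, hP, m, hm, hAP⟩ := exists_pullback_eq_hyperbolic hA hdet hpos hneg
  refine exists_eq_smul_translate_of_pullback_eq (P := P * diagonal ![-m, 1, 1])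
    (by simpa [Fin.prod_univ_three] using ⟨hP, hm⟩) (neg_ne_zero.2 hm) ?_
  rw [pullback_mul, hAP]
  ext i j
  fin_cases i <;> fin_cases j <;> simp [pullback, J, mul_apply, Fin.sum_univ_three]

theorem IsRationalMultiple.smul {ι : Type*} {A : Matrix ι ι ℝ} (h : IsRationalMultiple A) {c : ℝ}
    (hc : c ≠ 0) : IsRationalMultiple (c • A) := by
  obtain ⟨d, hd, hA⟩ := h
  refine ⟨d / c, by positivity, fun i j => ?_⟩
  obtain ⟨q, hq⟩ := hA i j
  exact ⟨q, by rw [← hq, Matrix.smul_apply, smul_eq_mul]; field_simp⟩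

theorem isRationalMultiple_of_le_abs_quadForm {A : Matrix (Fin 3) (Fin 3) ℝ} (hA : A.IsSymm)
    (hdet : A.det ≠ 0) (hpos : ∃ x, 0 < quadForm A x) (hneg : ∃ x, quadForm A x < 0) {ε : ℝ}
    (hε : 0 < ε) (hgap : ∀ v : Fin 3 → ℤ, v ≠ 0 → ε ≤ |quadForm A (intVec v)|) :
    IsRationalMultiple A := by
  obtain ⟨c, hc, g, rfl⟩ := exists_eq_smul_translate_J hA hdet hpos hneg
  refine (isRationalMultiple_translate_J (ε := ε / |c|) (by positivity) fun v hv => ?_).smul hc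
  rw [div_le_iff₀' (abs_pos.2 hc), ← abs_mul, ← quadForm_smul_left]
  exact hgap v hv

end NormalForm

/-! ### Integral changes of variables -/

section IntegralBases

theorem exists_eq_smul_mulVec_single_fin_two (v : Fin 2 → ℤ) :
    ∃ (h : ℤ) (γ : SL(2, ℤ)), v = h • ((γ : Matrix (Fin 2) (Fin 2) ℤ) *ᵥ Pi.single 0 1) := by
  rcases Nat.eq_zero_or_pos (Int.gcd (v 0) (v 1)) with h | h
  · rw [Int.gcd_eq_zero_iff] at h
    refine ⟨0, 1, ?_⟩
    ext i
    fin_cases i <;> simp [h]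
  · obtain ⟨a, b, hab, ha, hb⟩ := Int.exists_gcd_one h
    obtain ⟨γ, h0, h1⟩ := (Int.isCoprime_iff_gcd_eq_one.2 hab).exists_SL2_col 0
    refine ⟨Int.gcd (v 0) (v 1), γ, ?_⟩
    ext i
    fin_cases i <;> simp [h0, h1, mul_comm, ← ha, ← hb]

theorem exists_eq_smul_mulVec_single_fin_three (v : Fin 3 → ℤ) :
    ∃ (h : ℤ) (γ : SL(3, ℤ)), v = h • ((γ : Matrix (Fin 3) (Fin 3) ℤ) *ᵥ Pi.single 0 1) := by
  obtain ⟨k, γ, hγ⟩ := exists_eq_smul_mulVec_single_fin_two ![v 0, v 1]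
  obtain ⟨h, δ, hδ⟩ := exists_eq_smul_mulVec_single_fin_two ![k, v 2]
  have hγdet := γ.det_coe
  have hδdet := δ.det_coe
  rw [det_fin_two] at hγdet hδdet
  refine ⟨h, ⟨!![γ 0 0 * δ 0 0, γ 0 1, γ 0 0 * δ 0 1; γ 1 0 * δ 0 0, γ 1 1, γ 1 0 * δ 0 1;
    δ 1 0, 0, δ 1 1], ?_⟩, ?_⟩
  · simp [det_fin_three]
    linear_combination (γ 0 0 * γ 1 1 - γ 0 1 * γ 1 0) * hδdet + hγdet
  · have hγ0 : v 0 = k * γ 0 0 := by simpa using congrFun hγ 0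
    have hγ1 : v 1 = k * γ 1 0 := by simpa using congrFun hγ 1
    have hδ0 : k = h * δ 0 0 := by simpa using congrFun hδ 0
    have hδ1 : v 2 = h * δ 1 0 := by simpa using congrFun hδ 1
    ext i
    fin_cases i
    · simp [hγ0, hδ0]
      ring
    · simp [hγ1, hδ0]
      ring
    · simp [hδ1]

variable {ι κ : Type*} [Fintype ι]

theorem IsRationalMultiple.pullback_intMat {A : Matrix ι ι ℝ} (h : IsRationalMultiple A)
    (P : Matrix ι κ ℤ) : IsRationalMultiple (pullback A (intMat P)) := by
  obtain ⟨c, hc, hA⟩ := h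
  choose B hB using hA
  refine ⟨c, hc, fun i j => ⟨((P.map (Int.cast : ℤ → ℚ))ᵀ * of B * P.map (Int.cast : ℤ → ℚ)) i j,
    ?_⟩⟩
  have hcA : c • A = (of B).map (Rat.castHom ℝ) := by
    ext i j
    exact hB i j
  have hP : intMat P = (P.map (Int.cast : ℤ → ℚ)).map (Rat.castHom ℝ) := by
    ext i j
    simp [intMat]
  rw [← smul_eq_mul, ← Matrix.smul_apply, ← pullback_smul, hcA, hP, pullback, ← transpose_map,
    ← Matrix.map_mul, ← Matrix.map_mul]
  rfl

theorem translate_eq_pullback_intMat [DecidableEq ι] (A : Matrix ι ι ℝ)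
    (γ : SpecialLinearGroup ι ℤ) :
    translate A (γ : SpecialLinearGroup ι ℝ) = pullback A (intMat γ.1) := rfl

theorem translate_apply_self [DecidableEq ι] (A : Matrix ι ι ℝ) (γ : SpecialLinearGroup ι ℤ)
    (i : ι) : translate A (γ : SpecialLinearGroup ι ℝ) i i =
      quadForm A (intVec ((γ : Matrix ι ι ℤ) *ᵥ Pi.single i 1)) := by
  rw [← quadForm_pullback_intMat, intVec_single, Int.cast_one, quadForm_single, one_pow, one_mul,
    translate_eq_pullback_intMat]

theorem isRationalMultiple_of_translate [DecidableEq ι] {A : Matrix ι ι ℝ}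
    {γ : SpecialLinearGroup ι ℤ}
    (h : IsRationalMultiple (translate A (γ : SpecialLinearGroup ι ℝ))) :
    IsRationalMultiple A := by
  have hA := h.pullback_intMat (γ⁻¹).1
  rwa [← translate_eq_pullback_intMat, map_inv, translate_translate_inv] at hA

end IntegralBases

section SmallValues

variable {ι κ : Type*} [Fintype ι] [Fintype κ]

/-- The form takes arbitrarily small nonzero values at integral vectors. -/
def HasSmallValues (A : Matrix ι ι ℝ) : Prop :=
  ∀ ε > 0, ∃ v : ι → ℤ, quadForm A (intVec v) ≠ 0 ∧ |quadForm A (intVec v)| < ε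

theorem HasSmallValues.of_pullback_intMat {A : Matrix ι ι ℝ} {P : Matrix ι κ ℤ}
    (h : HasSmallValues (pullback A (intMat P))) : HasSmallValues A := fun ε hε => by
  obtain ⟨v, hv⟩ := h ε hε
  exact ⟨P *ᵥ v, by rwa [quadForm_pullback_intMat] at hv⟩

theorem HasSmallValues.of_translate [DecidableEq ι] {A : Matrix ι ι ℝ}
    {γ : SpecialLinearGroup ι ℤ}
    (h : HasSmallValues (translate A (γ : SpecialLinearGroup ι ℝ))) : HasSmallValues A :=
  h.of_pullback_intMat (P := γ.1)

theorem HasSmallValues.of_smul {A : Matrix ι ι ℝ} {c : ℝ} (hc : c ≠ 0)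
    (h : HasSmallValues (c • A)) : HasSmallValues A := fun ε hε => by
  obtain ⟨v, hv0, hv⟩ := h (|c| * ε) (by positivity)
  rw [quadForm_smul_left] at hv0 hv
  rw [abs_mul] at hv
  exact ⟨v, right_ne_zero_of_mul hv0, lt_of_mul_lt_mul_left hv (abs_nonneg c)⟩

theorem exists_int_mul_add_mem_Ioo {a b : ℝ} (hab : Irrational (a / b)) {s t : ℝ} (hst : s < t) :
    ∃ m n : ℤ, m * a + n * b ∈ Ioo s t := by
  obtain ⟨x, hx, hmem⟩ := (dense_addSubgroupClosure_pair_iff.2 hab).exists_mem_open isOpen_Ioo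
    (nonempty_Ioo.2 hst)
  obtain ⟨m, n, rfl⟩ := AddSubgroup.mem_closure_pair.1 hx
  exact ⟨m, n, by simpa using hmem⟩

variable {A : Matrix (Fin 3) (Fin 3) ℝ}

theorem hasSmallValues_of_irrational (hA : A.IsSymm) (h00 : A 0 0 = 0)
    (hirr : Irrational (A 0 1 / A 0 2)) : HasSmallValues A := fun ε hε => by
  obtain ⟨m, n, hpos, hlt⟩ := exists_int_mul_add_mem_Ioo hirr (half_pos hε)
  set L := m * A 0 1 + n * A 0 2
  obtain ⟨x, ⟨hx0, hx1⟩, -⟩ := existsUnique_add_zsmul_mem_Ioc (show 0 < 2 * L by linarith)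
    (A 1 1 * m ^ 2 + A 2 2 * n ^ 2 + 2 * A 1 2 * m * n) 0
  have hval : quadForm A (intVec ![x, m, n]) =
      A 1 1 * m ^ 2 + A 2 2 * n ^ 2 + 2 * A 1 2 * m * n + x • (2 * L) := by
    rw [quadForm_fin_three hA]
    simp [intVec, h00, L]
    ring
  refine ⟨![x, m, n], ?_, ?_⟩ <;> rw [hval]
  · exact hx0.ne'
  · rw [abs_of_pos hx0]
    linarith

theorem exists_int_linear_eq_zero_of_not_irrational {a b : ℝ} (h : ¬ Irrational (a / b)) :
    ∃ v : Fin 2 → ℤ, v ≠ 0 ∧ a * v 0 + b * v 1 = 0 := by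
  obtain ⟨q, hq⟩ := not_not.1 h
  rcases eq_or_ne b 0 with rfl | hb
  · exact ⟨![0, 1], by simp, by simp⟩
  · refine ⟨![q.den, -q.num], by simp, ?_⟩
    rw [eq_div_iff hb, Rat.cast_def] at hq
    have : (q.den : ℝ) ≠ 0 := by simp
    field_simp at hq
    simp
    linarith

theorem exists_translate_apply_zero_one_eq_zero (h00 : A 0 0 = 0)
    (hrat : ¬ Irrational (A 0 1 / A 0 2)) :
    ∃ γ : SL(3, ℤ), translate A (γ : SL(3, ℝ)) 0 0 = 0 ∧ translate A (γ : SL(3, ℝ)) 0 1 = 0 := by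
  obtain ⟨v, hv, hAv⟩ := exists_int_linear_eq_zero_of_not_irrational hrat
  obtain ⟨h, γ, hγ⟩ := exists_eq_smul_mulVec_single_fin_two v
  have hdet := γ.det_coe
  rw [det_fin_two] at hdet
  have h0 : h ≠ 0 := by
    rintro rfl
    exact hv (by simpa using hγ)
  have hγ0 : v 0 = h * γ 0 0 := by simpa using congrFun hγ 0
  have hγ1 : v 1 = h * γ 1 0 := by simpa using congrFun hγ 1
  have hlin : A 0 1 * γ 0 0 + A 0 2 * γ 1 0 = 0 := by
    rw [hγ0, hγ1] at hAv
    push_cast at hAv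
    refine (mul_eq_zero.1 (?_ : (h : ℝ) * _ = 0)).resolve_left (by exact_mod_cast h0)
    linear_combination hAv
  obtain ⟨δ, hδ⟩ : ∃ δ : SL(3, ℤ), δ.1 = !![1, 0, 0; 0, γ 0 0, γ 0 1; 0, γ 1 0, γ 1 1] :=
    ⟨⟨_, by simpa [det_fin_three] using hdet⟩, rfl⟩
  refine ⟨δ, ?_, ?_⟩ <;> rw [translate_eq_pullback_intMat, hδ]
  · simp [intMat, pullback_apply, dotProduct, mulVec, Fin.sum_univ_three, h00]
  · simpa [intMat, pullback_apply, dotProduct, mulVec, Fin.sum_univ_three, h00] using hlin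

end SmallValues

/-! ### Ternary forms with an integral zero -/

/-- The matrix of the form `x z + α y² + β y z + γ z²`, to which every nondegenerate ternary form
vanishing at `e₀` and on `e₀ × e₁` is proportional. -/
noncomputable def isotropicNormalForm (α β γ : ℝ) : Matrix (Fin 3) (Fin 3) ℝ :=
  !![0, 0, 1 / 2; 0, α, β / 2; 1 / 2, β / 2, γ]

section IsotropicNormalForm

variable {α β γ δ : ℝ}

theorem isotropicNormalForm_isSymm : (isotropicNormalForm α β γ).IsSymm := by
  ext i j
  fin_cases i <;> fin_cases j <;> rfl

theorem quadForm_isotropicNormalForm (x : Fin 3 → ℝ) :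
    quadForm (isotropicNormalForm α β γ) x =
      x 0 * x 2 + α * x 1 ^ 2 + β * x 1 * x 2 + γ * x 2 ^ 2 := by
  rw [quadForm_fin_three isotropicNormalForm_isSymm]
  simp [isotropicNormalForm]
  ring

theorem hasSmallValues_isotropicNormalForm_of_mod_one
    (h : ∀ ε > 0, ∃ k y : ℤ, k + α * y ^ 2 + β * y + γ ≠ 0 ∧ |k + α * y ^ 2 + β * y + γ| < ε) :
    HasSmallValues (isotropicNormalForm α β γ) := fun ε hε => by
  obtain ⟨k, y, hky⟩ := h ε hε
  exact ⟨![k, y, 1], by simpa [quadForm_isotropicNormalForm, intVec] using hky⟩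

theorem exists_abs_mul_sq_sub_lt (α : ℝ) (hδ : 0 < δ) :
    ∃ h : ℕ, h ≠ 0 ∧ ∃ k : ℤ, |α * h ^ 2 - k| < δ := by
  obtain ⟨N, hN⟩ := exists_nat_gt (2 / δ)
  have hN0 : (0 : ℝ) < N := (by positivity : 0 < 2 / δ).trans hN
  let t (n : ℕ) : ℝ := Int.fract (α * n ^ 2 / 2)
  have hcolor (n : ℕ) : ⌊t n * N⌋₊ < N := by
    rw [Nat.floor_lt (by positivity)]
    exact mul_lt_of_lt_one_left hN0 (Int.fract_lt_one _)
  obtain ⟨a, ha, b, c, hc⟩ := Combinatorics.exists_mono_homothetic_copy (Finset.range 3)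
    fun n : ℕ => (⟨⌊t n * N⌋₊, hcolor n⟩ : Fin N)
  have hmem (s : ℕ) (hs : s ∈ Finset.range 3) :
      (c : ℝ) ≤ t (a * s + b) * N ∧ t (a * s + b) * N < c + 1 := by
    rw [← hc s hs]
    exact ⟨Nat.floor_le (by positivity), Nat.lt_floor_add_one _⟩
  obtain ⟨h0, h0'⟩ := hmem 0 (by simp)
  obtain ⟨h1, h1'⟩ := hmem 1 (by simp)
  obtain ⟨h2, h2'⟩ := hmem 2 (by simp)
  have hdiff : |(t (a * 2 + b) - 2 * t (a * 1 + b) + t (a * 0 + b)) * N| < 2 :=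
    abs_lt.2 ⟨by linarith, by linarith⟩
  rw [abs_mul, abs_of_pos hN0, ← lt_div_iff₀ hN0] at hdiff
  refine ⟨a, ha.ne', ⌊α * (a * 2 + b : ℕ) ^ 2 / 2⌋ - 2 * ⌊α * (a * 1 + b : ℕ) ^ 2 / 2⌋ +
    ⌊α * (a * 0 + b : ℕ) ^ 2 / 2⌋, ?_⟩
  refine lt_of_eq_of_lt (congrArg _ ?_) (hdiff.trans ((div_lt_comm₀ hδ hN0).1 hN))
  simp only [t, Int.fract]
  push_cast
  ring

theorem exists_nat_quadratic_add_int_mem_Ioo {η b : ℝ} (hδ : δ ≤ 1) (hη : η ∈ Ioo 0 δ)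
    (hb : b ∈ Ioo 0 (δ ^ 2)) (u : ℝ) :
    ∃ (j : ℕ) (k : ℤ), k + u + j * η + j ^ 2 * b ∈ Ioo 0 (4 * δ) := by
  obtain ⟨hη0, hηδ⟩ := hη
  obtain ⟨hb0, hbδ⟩ := hb
  have hex : ∃ j : ℕ, (⌊u⌋ : ℝ) + 1 < u + j * η + j ^ 2 * b := by
    obtain ⟨j, hj⟩ := exists_nat_gt (1 / η)
    refine ⟨j, ?_⟩
    rw [div_lt_iff₀ hη0] at hj
    linarith [Int.floor_le u, show 0 ≤ (j : ℝ) ^ 2 * b by positivity]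
  classical
  obtain ⟨i, hi⟩ : ∃ i, Nat.find hex = i + 1 := Nat.exists_eq_succ_of_ne_zero fun h => by
    have := Nat.find_spec hex
    rw [h] at this
    simp only [Nat.cast_zero] at this
    linarith [Int.lt_floor_add_one u]
  have hlt := Nat.find_spec hex
  have hle := not_lt.1 (Nat.find_min hex (m := i) (by lia))
  rw [hi] at hlt
  push_cast at hlt
  have hib : i * b < δ := by
    refine lt_of_pow_lt_pow_left₀ 2 (by linarith) (lt_of_le_of_lt ?_ hbδ)
    have h1 : (i : ℝ) ^ 2 * b ≤ 1 := by
      linarith [Int.floor_le u, show 0 ≤ (i : ℝ) * η by positivity]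
    nlinarith
  refine ⟨i + 1, -(⌊u⌋ + 1), ?_, ?_⟩ <;> push_cast
  · linarith
  · nlinarith

theorem exists_add_quadratic_mem_Ioo (hα : Irrational α) (β γ : ℝ) (hδ0 : 0 < δ) (hδ : δ ≤ 1)
    {h : ℕ} (hh : h ≠ 0) {k : ℤ}
    (hhk : α * h ^ 2 - k ∈ Ioo 0 (δ ^ 2)) :
    ∃ l y : ℤ, l + α * y ^ 2 + β * y + γ ∈ Ioo 0 (4 * δ) := by
  have hirr : Irrational (2 * α * h / 1) := by
    rw [div_one]
    exact (hα.natCast_mul two_ne_zero).mul_natCast hh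
  obtain ⟨m, n, hη⟩ := exists_int_mul_add_mem_Ioo hirr (s := -(β * h)) (t := δ - β * h)
    (by linarith)
  obtain ⟨j, l, hjl⟩ := exists_nat_quadratic_add_int_mem_Ioo (η := m * (2 * α * h) + n * 1 + β * h)
    hδ ⟨by linarith [hη.1], by linarith [hη.2]⟩ hhk (α * m ^ 2 + β * m + γ)
  refine ⟨l + n * j - k * j ^ 2, m + h * j, ?_⟩
  convert hjl using 1
  push_cast
  ring

theorem hasSmallValues_of_irrational_sq (hα : Irrational α) (β γ : ℝ) :
    HasSmallValues (isotropicNormalForm α β γ) := by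
  refine hasSmallValues_isotropicNormalForm_of_mod_one fun ε hε => ?_
  obtain ⟨δ, hδ0, hδ⟩ := exists_between (lt_min one_pos (by positivity : 0 < ε / 4))
  obtain ⟨hδ1, hδε⟩ := lt_min_iff.1 hδ
  obtain ⟨h, hh, k, hhk⟩ := exists_abs_mul_sq_sub_lt α (pow_pos hδ0 2)
  have hne : α * h ^ 2 - k ≠ 0 := by
    have : Irrational (α * (h ^ 2 : ℕ)) := hα.mul_natCast (pow_ne_zero 2 hh)
    exact sub_ne_zero.2 (by simpa using this.ne_int k)
  obtain ⟨hlt, hlt'⟩ := abs_lt.1 hhk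
  rcases hne.lt_or_gt with hneg | hpos
  · obtain ⟨l, y, hy0, hy⟩ := exists_add_quadratic_mem_Ioo hα.neg (-β) (-γ) hδ0 hδ1.le hh (k := -k)
      ⟨by push_cast; linarith, by push_cast; linarith⟩
    refine ⟨-l, y, ?_, abs_lt.2 ⟨?_, ?_⟩⟩
    · refine ne_of_lt ?_
      push_cast
      linarith
    all_goals
      push_cast
      linarith
  · obtain ⟨l, y, hy0, hy⟩ := exists_add_quadratic_mem_Ioo hα β γ hδ0 hδ1.le hh ⟨hpos, hlt'⟩
    exact ⟨l, y, hy0.ne', abs_lt.2 ⟨by linarith, by linarith⟩⟩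

theorem hasSmallValues_of_irrational_linear (α : ℚ) (hβ : Irrational β) (γ : ℝ) :
    HasSmallValues (isotropicNormalForm α β γ) := by
  refine hasSmallValues_isotropicNormalForm_of_mod_one fun ε hε => ?_
  have hirr : Irrational (β * α.den / 1) := by
    rw [div_one]
    exact hβ.mul_natCast α.den_nz
  obtain ⟨n, m, hpos, hlt⟩ := exists_int_mul_add_mem_Ioo hirr (s := -γ) (t := ε - γ) (by linarith)
  have hval : ((m - α.num * α.den * n ^ 2 : ℤ) : ℝ) + α * (α.den * n : ℤ) ^ 2 +
      β * (α.den * n : ℤ) + γ = n * (β * α.den) + m * 1 + γ := by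
    have hα : (α : ℝ) * α.den = α.num := by exact_mod_cast Rat.mul_den_eq_num α
    push_cast
    linear_combination (α.den * n ^ 2 : ℝ) * hα
  exact ⟨m - α.num * α.den * n ^ 2, α.den * n, by rw [hval]; linarith,
    by rw [hval, abs_of_pos] <;> linarith⟩

end IsotropicNormalForm

section OrthogonalSum

/-- The matrix of the orthogonal sum of `r y²` with a binary form in `x` and `z`. -/
def orthogonalSum (r : ℝ) (B : Matrix (Fin 2) (Fin 2) ℝ) : Matrix (Fin 3) (Fin 3) ℝ :=
  !![B 0 0, 0, B 0 1; 0, r, 0; B 1 0, 0, B 1 1]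

theorem quadForm_orthogonalSum (r : ℝ) (B : Matrix (Fin 2) (Fin 2) ℝ) (x : Fin 3 → ℝ) :
    quadForm (orthogonalSum r B) x = r * x 1 ^ 2 + quadForm B ![x 0, x 2] := by
  simp [quadForm, orthogonalSum, dotProduct, mulVec, Fin.sum_univ_three]
  ring

theorem orthogonalSum_isSymm {B : Matrix (Fin 2) (Fin 2) ℝ} (hB : B.IsSymm) (r : ℝ) :
    (orthogonalSum r B).IsSymm := by
  ext i j
  fin_cases i <;> fin_cases j <;> simp [orthogonalSum, hB.apply]

theorem det_orthogonalSum (r : ℝ) (B : Matrix (Fin 2) (Fin 2) ℝ) :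
    (orthogonalSum r B).det = r * B.det := by
  simp [orthogonalSum, det_fin_three, det_fin_two]
  ring

theorem exists_quadForm_eq_zero_of_det_eq {B : Matrix (Fin 2) (Fin 2) ℝ} (hB : B.IsSymm)
    (hdet : B.det = -(1 / 4)) (hrat : ∀ i j, ∃ q : ℚ, B i j = q) :
    ∃ v : Fin 2 → ℤ, v ≠ 0 ∧ quadForm B (intVec v) = 0 := by
  choose q hq using hrat
  obtain ⟨w, hw0, hw⟩ : ∃ w : Fin 2 → ℚ, w ≠ 0 ∧ quadForm B (fun i => (w i : ℝ)) = 0 := by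
    have hqdet : q 0 0 * q 1 1 - q 0 1 ^ 2 = -(1 / 4) := by
      rw [det_fin_two, hB.apply 0 1, hq, hq, hq] at hdet
      have : ((q 0 0 * q 1 1 - q 0 1 ^ 2 : ℚ) : ℝ) = (-(1 / 4) : ℚ) := by
        push_cast
        linarith
      exact_mod_cast this
    have hval (w : Fin 2 → ℚ) : quadForm B (fun i => (w i : ℝ)) =
        ((q 0 0 * w 0 ^ 2 + 2 * q 0 1 * w 0 * w 1 + q 1 1 * w 1 ^ 2 : ℚ) : ℝ) := by
      have h10 : (q 1 0 : ℝ) = q 0 1 := by rw [← hq, ← hq, hB.apply 0 1]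
      simp [quadForm, dotProduct, mulVec, Fin.sum_univ_two, hq, h10]
      ring
    by_cases h : q 0 0 = 0
    · exact ⟨![1, 0], by simp, by simp [hval, h]⟩
    · refine ⟨![1 / 2 - q 0 1, q 0 0], by simp [h], ?_⟩
      rw [hval, Rat.cast_eq_zero]
      simp
      linear_combination q 0 0 * hqdet
  obtain ⟨N, hN, v, hv⟩ := exists_smul_eq_intVec w
  refine ⟨v, ?_, by rw [← hv, quadForm_smul, hw, mul_zero]⟩
  rintro rfl
  refine hw0 (funext fun i => ?_)
  simpa [intVec, hN.ne'] using congrFun hv i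

theorem IsRationalMultiple.of_orthogonalSum {r : ℚ} (hr : r ≠ 0) {B : Matrix (Fin 2) (Fin 2) ℝ}
    (h : IsRationalMultiple (orthogonalSum r B)) (i j : Fin 2) : ∃ q : ℚ, B i j = q := by
  obtain ⟨c, hc, hrat⟩ := h
  have hr' : (r : ℝ) ≠ 0 := by exact_mod_cast hr
  obtain ⟨s, hs⟩ := hrat 1 1
  replace hs : c * r = s := hs
  obtain ⟨k, l, hkl⟩ : ∃ k l, orthogonalSum r B k l = B i j := by
    fin_cases i <;> fin_cases j
    exacts [⟨0, 0, rfl⟩, ⟨0, 2, rfl⟩, ⟨2, 0, rfl⟩, ⟨2, 2, rfl⟩]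
  obtain ⟨t, ht⟩ := hrat k l
  refine ⟨t * r / s, ?_⟩
  push_cast
  rw [← ht, ← hs, hkl]
  field_simp

/-- The matrix of the form `x z`. -/
noncomputable def hyperbolicPlane : Matrix (Fin 2) (Fin 2) ℝ := !![0, 1 / 2; 1 / 2, 0]

theorem hyperbolicPlane_isSymm : hyperbolicPlane.IsSymm := by
  ext i j
  fin_cases i <;> fin_cases j <;> rfl

theorem quadForm_hyperbolicPlane (x : Fin 2 → ℝ) : quadForm hyperbolicPlane x = x 0 * x 1 := by
  simp [quadForm, hyperbolicPlane, dotProduct, mulVec, Fin.sum_univ_two]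
  ring

theorem not_forall_le_abs_orthogonalSum_hyperbolicPlane {r : ℚ} (hr : r ≠ 0) (h : SL(2, ℝ))
    {ε : ℝ} (hε : 0 < ε) : ¬ ∀ v : Fin 3 → ℤ, v ≠ 0 →
      ε ≤ |quadForm (orthogonalSum r (translate hyperbolicPlane h)) (intVec v)| := by
  intro hgap
  have hB := translate_isSymm hyperbolicPlane_isSymm h
  have hdet : (translate hyperbolicPlane h).det = -(1 / 4) := by
    rw [det_translate]
    norm_num [hyperbolicPlane, det_fin_two]
  have hval (x : Fin 2 → ℝ) : ∃ y : Fin 3 → ℝ,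
      quadForm (orthogonalSum r (translate hyperbolicPlane h)) y = x 0 * x 1 := by
    refine ⟨![(h⁻¹.1 *ᵥ x) 0, 0, (h⁻¹.1 *ᵥ x) 1], ?_⟩
    have heta : ![(h⁻¹.1 *ᵥ x) 0, (h⁻¹.1 *ᵥ x) 1] = h⁻¹.1 *ᵥ x := by
      ext i
      fin_cases i <;> rfl
    rw [quadForm_orthogonalSum, ← quadForm_hyperbolicPlane]
    simp only [cons_val_zero, cons_val_one, cons_val, heta, quadForm_translate]
    rw [SL_mulVec_inv_mulVec]
    simp
  obtain ⟨p, hp⟩ := hval ![1, 1]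
  obtain ⟨m, hm⟩ := hval ![1, -1]
  have hrat := isRationalMultiple_of_le_abs_quadForm (orthogonalSum_isSymm hB r)
    (by rw [det_orthogonalSum, hdet]; simpa using hr) ⟨p, by simp [hp]⟩ ⟨m, by simp [hm]⟩ hε hgap
  obtain ⟨v, hv0, hv⟩ := exists_quadForm_eq_zero_of_det_eq hB hdet (hrat.of_orthogonalSum hr)
  have hne : ![v 0, 0, v 1] ≠ 0 := fun h0 => hv0 <| by
    ext i
    fin_cases i
    · exact congrFun h0 0
    · exact congrFun h0 2
  have hzero : quadForm (orthogonalSum r (translate hyperbolicPlane h))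
      (intVec ![v 0, 0, v 1]) = 0 := by
    have heta : ![(v 0 : ℝ), v 1] = intVec v := by
      ext i
      fin_cases i <;> rfl
    rw [quadForm_orthogonalSum]
    simp [intVec, heta, hv]
  have := hgap _ hne
  rw [hzero, abs_zero] at this
  exact hε.not_ge this

/-- The diagonal one-parameter group preserving `x z`, at integral times. -/
noncomputable def hyperbolicFlow (n : ℕ) : SL(2, ℝ) :=
  ⟨!![2 ^ n, 0; 0, (2 ^ n)⁻¹], by simp [det_fin_two]⟩

/-- The change of variables turning `x z` into `x z + t z²`. -/
def shear (t : ℝ) : SL(2, ℝ) := ⟨!![1, t; 0, 1], by simp [det_fin_two]⟩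

theorem hyperbolicFlow_mul_shear_mulVec (n : ℕ) (t : ℝ) (x : Fin 2 → ℝ) :
    ((hyperbolicFlow n * shear t : SL(2, ℝ)) : Matrix (Fin 2) (Fin 2) ℝ) *ᵥ x =
      ![2 ^ n * (x 0 + t * x 1), (2 ^ n)⁻¹ * x 1] := by
  rw [SL_mul_mulVec]
  ext i
  fin_cases i <;> simp [hyperbolicFlow, shear, mulVec, dotProduct, Fin.sum_univ_two]

theorem translate_hyperbolicPlane_hyperbolicFlow (n : ℕ) :
    translate hyperbolicPlane (hyperbolicFlow n) = hyperbolicPlane := by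
  ext i j
  fin_cases i <;> fin_cases j <;>
    simp [translate, pullback_apply, hyperbolicFlow, hyperbolicPlane, dotProduct, mulVec,
      Fin.sum_univ_two]
  all_goals field_simp

theorem isotropicNormalForm_eq_orthogonalSum (α γ : ℝ) :
    isotropicNormalForm α 0 γ = orthogonalSum α (translate hyperbolicPlane (shear γ)) := by
  ext i j
  fin_cases i <;> fin_cases j <;>
    simp [isotropicNormalForm, orthogonalSum, translate, pullback_apply, shear, hyperbolicPlane,
      dotProduct, mulVec, Fin.sum_univ_two]
  ring

variable {ε t : ℝ}

theorem min_le_quadForm_hyperbolicFlow_mul_shear (n : ℕ)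
    (hgap : ∀ v : Fin 2 → ℤ, v 1 ≠ 0 → ε ≤ |(v 0 + t * v 1) * v 1|) {v : Fin 2 → ℤ} (hv : v ≠ 0) :
    min (2 * ε) 1 ≤ quadForm (translate 1 (hyperbolicFlow n * shear t)) (intVec v) := by
  have hval : quadForm (translate 1 (hyperbolicFlow n * shear t)) (intVec v) =
      (2 ^ n * (v 0 + t * v 1)) ^ 2 + ((2 ^ n)⁻¹ * v 1) ^ 2 := by
    rw [quadForm_translate, hyperbolicFlow_mul_shear_mulVec, quadForm_one]
    simp [intVec]
  rw [hval]
  by_cases h1 : v 1 = 0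
  · have h0 : v 0 ≠ 0 := fun h0 => hv <| by
      ext i
      fin_cases i <;> assumption
    have hv0 : (1 : ℝ) ≤ (v 0 : ℝ) ^ 2 := by
      exact_mod_cast Int.add_one_le_of_lt (by positivity : 0 < v 0 ^ 2)
    refine (min_le_right _ _).trans ?_
    simpa [h1, mul_pow] using one_le_mul_of_one_le_of_one_le
      (one_le_pow₀ (one_le_pow₀ one_le_two)) hv0
  · have hprod : (v 0 + t * v 1) * v 1 = 2 ^ n * (v 0 + t * v 1) * ((2 ^ n)⁻¹ * v 1) := by
      field_simp
    have hle := hgap v h1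
    rw [hprod, abs_mul] at hle
    refine (min_le_left _ _).trans ?_
    rw [← sq_abs (2 ^ n * (v 0 + t * v 1)), ← sq_abs ((2 ^ n)⁻¹ * (v 1 : ℝ))]
    linarith [two_mul_le_add_sq |2 ^ n * (v 0 + t * v 1)| |(2 ^ n)⁻¹ * (v 1 : ℝ)|]

theorem exists_tendsto_hyperbolicFlow_mul_shear (hε : 0 < ε)
    (hgap : ∀ v : Fin 2 → ℤ, v 1 ≠ 0 → ε ≤ |(v 0 + t * v 1) * v 1|) :
    ∃ (φ : ℕ → ℕ) (γ : ℕ → SL(2, ℤ)) (h : SL(2, ℝ)), Tendsto φ atTop atTop ∧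
      Tendsto (fun n => hyperbolicFlow (φ n) * shear t * (γ n : SL(2, ℝ))) atTop (𝓝 h) := by
  obtain ⟨K, hK, hcover⟩ := exists_isCompact_forall_mul_mem_fin_two
    (ε := min (2 * ε) 1) (by positivity)
  choose γ hγ using fun n => hcover (hyperbolicFlow n * shear t) fun v hv =>
    min_le_quadForm_hyperbolicFlow_mul_shear n hgap hv
  obtain ⟨h, -, φ, hφ, hlim⟩ := hK.tendsto_subseq hγ
  exact ⟨φ, γ ∘ φ, h, hφ.tendsto_atTop, hlim⟩

theorem eventually_mulVec_one_ne_zero {φ : ℕ → ℕ} {γ : ℕ → SL(2, ℤ)} {h : SL(2, ℝ)}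
    (hφ : Tendsto φ atTop atTop)
    (hlim : Tendsto (fun n => hyperbolicFlow (φ n) * shear t * (γ n : SL(2, ℝ))) atTop (𝓝 h))
    {v : Fin 2 → ℤ} (hv : v ≠ 0) : ∀ᶠ n in atTop, ((γ n).1 *ᵥ v) 1 ≠ 0 := by
  have hcoord : Tendsto (fun n => |(2 : ℝ) ^ φ n *
      (intVec ((γ n).1 *ᵥ v) 0 + t * intVec ((γ n).1 *ᵥ v) 1)|) atTop
      (𝓝 |(h.1 *ᵥ intVec v) 0|) := by
    have hcont : Continuous fun g : SL(2, ℝ) =>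
        |((g : Matrix (Fin 2) (Fin 2) ℝ) *ᵥ intVec v) 0| := by fun_prop
    refine ((hcont.tendsto h).comp hlim).congr fun n => ?_
    rw [Function.comp_apply, SL_mul_mulVec, SL_mulVec_intVec,
      hyperbolicFlow_mul_shear_mulVec]
    rfl
  have hpow : Tendsto (fun n => (2 : ℝ) ^ φ n) atTop atTop :=
    (tendsto_pow_atTop_atTop_of_one_lt one_lt_two).comp hφ
  filter_upwards [hcoord.eventually_lt_const (lt_add_one _), hpow.eventually_ge_atTop
    (|(h.1 *ᵥ intVec v) 0| + 1)] with n hlt hge h1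
  have h0 : ((γ n).1 *ᵥ v) 0 ≠ 0 := fun h0 => SL_mulVec_ne_zero (γ n) hv <| by
    ext i
    fin_cases i <;> assumption
  have habs : (1 : ℝ) ≤ |(((γ n).1 *ᵥ v) 0 : ℝ)| := by exact_mod_cast Int.one_le_abs h0
  simp only [intVec, h1, Int.cast_zero, mul_zero, add_zero, abs_mul, abs_pow, Nat.abs_ofNat] at hlt
  exact hlt.not_ge (hge.trans (le_mul_of_one_le_right (by positivity) habs))

theorem mul_int_ne_zero_of_irrational (ht : Irrational t) {a b c : ℤ} {r : ℚ} (hc : c ≠ 0) :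
    r * b ^ 2 + (a + t * c) * c ≠ 0 := fun h => by
  have hirr := (((ht.mul_intCast hc).intCast_add a).mul_intCast hc).ratCast_add (r * b ^ 2)
  refine hirr.ne_zero ?_
  push_cast
  exact h

theorem quadForm_isotropicNormalForm_mulVec (r t : ℝ) (n : ℕ) (γ : SL(2, ℤ)) (k : ℤ)
    (w : Fin 2 → ℤ) :
    quadForm (isotropicNormalForm r 0 t) (intVec ![(γ.1 *ᵥ w) 0, k, (γ.1 *ᵥ w) 1]) =
      r * k ^ 2 + quadForm (translate hyperbolicPlane (hyperbolicFlow n * shear t * (γ : SL(2, ℝ))))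
        (intVec w) := by
  have heta (w : Fin 2 → ℤ) :
      ![intVec ![w 0, k, w 1] 0, intVec ![w 0, k, w 1] 2] = intVec w := by
    ext i
    fin_cases i <;> rfl
  rw [translate_mul, translate_mul, translate_hyperbolicPlane_hyperbolicFlow,
    isotropicNormalForm_eq_orthogonalSum, quadForm_orthogonalSum, heta, ← SL_mulVec_intVec,
    ← quadForm_translate]
  rfl

theorem quadForm_isotropicNormalForm_ne_zero (ht : Irrational t) {r : ℚ} (hr : r ≠ 0)
    {v : Fin 3 → ℤ} (hv : v 1 ≠ 0 ∨ v 2 ≠ 0) (hv2 : v 2 = 0 → v 0 = 0) :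
    quadForm (isotropicNormalForm r 0 t) (intVec v) ≠ 0 := by
  rw [quadForm_isotropicNormalForm]
  by_cases h2 : v 2 = 0
  · have h1 : v 1 ≠ 0 := hv.resolve_right (not_not.2 h2)
    simp [intVec, h2, hv2 h2, hr, h1]
  · convert mul_int_ne_zero_of_irrational ht (a := v 0) (b := v 1) (r := r) h2 using 1
    simp only [intVec]
    ring

theorem hasSmallValues_of_irrational_const {r : ℚ} (hr : r ≠ 0) (ht : Irrational t) :
    HasSmallValues (isotropicNormalForm r 0 t) := by
  by_contra hsmall
  simp only [HasSmallValues, not_forall, not_exists, not_and, not_lt, exists_prop] at hsmall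
  obtain ⟨ε, hε, hgap⟩ := hsmall
  obtain ⟨φ, γ, h, hφ, hlim⟩ := exists_tendsto_hyperbolicFlow_mul_shear hε fun v hv => by
    have hval : quadForm (isotropicNormalForm r 0 t) (intVec ![v 0, 0, v 1]) =
        (v 0 + t * v 1) * v 1 := by
      rw [quadForm_isotropicNormalForm]
      simp [intVec]
      ring
    rw [← hval]
    refine hgap _ ?_
    rw [hval]
    simpa using mul_int_ne_zero_of_irrational ht (a := v 0) (b := 0) (r := r) hv
  refine not_forall_le_abs_orthogonalSum_hyperbolicPlane hr h hε fun v hv => ?_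
  have heta : ![intVec v 0, intVec v 2] = intVec ![v 0, v 2] := by
    ext i
    fin_cases i <;> rfl
  rw [quadForm_orthogonalSum, heta]
  have hcont : Continuous fun g : SL(2, ℝ) =>
      |r * intVec v 1 ^ 2 + quadForm (translate hyperbolicPlane g) (intVec ![v 0, v 2])| := by
    fun_prop
  have hsecond : ∀ᶠ n in atTop, ((γ n).1 *ᵥ ![v 0, v 2]) 1 = 0 → ![v 0, v 2] = 0 := by
    by_cases hw : ![v 0, v 2] = 0
    · exact .of_forall fun n _ => hw
    · filter_upwards [eventually_mulVec_one_ne_zero hφ hlim hw] with n hn h0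
      exact absurd h0 hn
  refine ge_of_tendsto ((hcont.tendsto h).comp hlim) (hsecond.mono fun n hn => ?_)
  have hle := hgap ![((γ n).1 *ᵥ ![v 0, v 2]) 0, v 1, ((γ n).1 *ᵥ ![v 0, v 2]) 1] <|
    quadForm_isotropicNormalForm_ne_zero ht hr ?_ fun h0 => ?_
  · rwa [quadForm_isotropicNormalForm_mulVec r t (φ n)] at hle
  · by_contra! h0
    obtain ⟨h1, h2⟩ := h0
    have hw := hn h2
    refine hv (funext fun i => ?_)
    fin_cases i
    exacts [congrFun hw 0, h1, congrFun hw 1]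
  · simp [hn h0]

end OrthogonalSum

section IntegralZero

theorem pullback_isotropicNormalForm (α γ : ℝ) (b : ℚ) :
    pullback (isotropicNormalForm α b γ) (intMat !![1, -b.num, 0; 0, (b.den : ℤ), 0; 0, 0, 1]) =
      isotropicNormalForm (α * b.den ^ 2) 0 γ := by
  have hb : (b : ℝ) * b.den = b.num := by exact_mod_cast b.mul_den_eq_num
  ext i j
  fin_cases i <;> fin_cases j <;>
    simp [isotropicNormalForm, pullback_apply, intMat, dotProduct, mulVec, Fin.sum_univ_three]
  · ring
  all_goals linear_combination (1 / 2) * hb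

theorem hasSmallValues_isotropicNormalForm {α β γ : ℝ} (hα : α ≠ 0)
    (hirr : Irrational α ∨ Irrational β ∨ Irrational γ) :
    HasSmallValues (isotropicNormalForm α β γ) := by
  by_cases hαirr : Irrational α
  · exact hasSmallValues_of_irrational_sq hαirr β γ
  obtain ⟨a, rfl⟩ := not_not.1 hαirr
  by_cases hβirr : Irrational β
  · exact hasSmallValues_of_irrational_linear a hβirr γ
  obtain ⟨b, rfl⟩ := not_not.1 hβirr
  have hγirr := (hirr.resolve_left hαirr).resolve_left hβirr
  refine HasSmallValues.of_pullback_intMat (P := !![1, -b.num, 0; 0, (b.den : ℤ), 0; 0, 0, 1]) ?_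
  have ha : a * (b.den : ℚ) ^ 2 ≠ 0 := mul_ne_zero (by exact_mod_cast hα) (by simp)
  rw [pullback_isotropicNormalForm]
  exact_mod_cast hasSmallValues_of_irrational_const ha hγirr

variable {A : Matrix (Fin 3) (Fin 3) ℝ}

theorem hasSmallValues_of_apply_zero_one_eq_zero (hA : A.IsSymm) (hdet : A.det ≠ 0)
    (h00 : A 0 0 = 0) (h01 : A 0 1 = 0) (hirr : ¬ IsRationalMultiple A) : HasSmallValues A := by
  have hdet' : A.det = -(A 0 2 ^ 2 * A 1 1) := by
    rw [det_fin_three, h00, h01, hA.apply 0 2, hA.apply 0 1, h01]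
    ring
  have h02 : A 0 2 ≠ 0 := fun h => hdet (by simp [hdet', h])
  have h11 : A 1 1 ≠ 0 := fun h => hdet (by simp [hdet', h])
  set c := (2 * A 0 2)⁻¹
  have hc : c ≠ 0 := by positivity
  have hcA : c • A = isotropicNormalForm (c * A 1 1) (2 * (c * A 1 2)) (c * A 2 2) := by
    ext i j
    fin_cases i <;> fin_cases j <;>
      simp [isotropicNormalForm, h00, h01, hA.apply 0 1, hA.apply 0 2, hA.apply 1 2, c]
    all_goals field_simp
  refine HasSmallValues.of_smul hc ?_
  rw [hcA]
  refine hasSmallValues_isotropicNormalForm (mul_ne_zero hc h11) ?_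
  by_contra! hrat
  simp only [Irrational, not_not] at hrat
  obtain ⟨⟨p, hp⟩, ⟨q, hq⟩, ⟨r, hr⟩⟩ := hrat
  refine hirr ⟨c, hc, fun i j => ?_⟩
  rw [← smul_eq_mul, ← Matrix.smul_apply, hcA, ← hp, ← hq, ← hr]
  refine ⟨!![0, 0, 1 / 2; 0, p, q / 2; 1 / 2, q / 2, r] i j, ?_⟩
  fin_cases i <;> fin_cases j <;> simp [isotropicNormalForm]

theorem hasSmallValues_of_apply_zero_eq_zero (hA : A.IsSymm) (hdet : A.det ≠ 0)
    (h00 : A 0 0 = 0) (hirr : ¬ IsRationalMultiple A) : HasSmallValues A := by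
  by_cases h : Irrational (A 0 1 / A 0 2)
  · exact hasSmallValues_of_irrational hA h00 h
  · obtain ⟨γ, hγ0, hγ1⟩ := exists_translate_apply_zero_one_eq_zero h00 h
    exact (hasSmallValues_of_apply_zero_one_eq_zero (translate_isSymm hA _)
      (by rwa [det_translate]) hγ0 hγ1 (mt isRationalMultiple_of_translate hirr)).of_translate

theorem hasSmallValues_of_quadForm_eq_zero (hA : A.IsSymm) (hdet : A.det ≠ 0)
    {v : Fin 3 → ℤ} (hv : v ≠ 0) (hAv : quadForm A (intVec v) = 0)
    (hirr : ¬ IsRationalMultiple A) : HasSmallValues A := by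
  obtain ⟨h, γ, rfl⟩ := exists_eq_smul_mulVec_single_fin_three v
  have h0 : (h : ℝ) ≠ 0 := by
    rw [Int.cast_ne_zero]
    rintro rfl
    simp at hv
  rw [quadForm_intVec_smul] at hAv
  refine (hasSmallValues_of_apply_zero_eq_zero (translate_isSymm hA _) (by rwa [det_translate])
    ?_ (mt isRationalMultiple_of_translate hirr)).of_translate (γ := γ)
  rw [translate_apply_self]
  exact (mul_eq_zero.1 hAv).resolve_left (pow_ne_zero 2 h0)

theorem hasSmallValues (hA : A.IsSymm) (hdet : A.det ≠ 0) (hpos : ∃ x, 0 < quadForm A x)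
    (hneg : ∃ x, quadForm A x < 0) (hirr : ¬ IsRationalMultiple A) : HasSmallValues A := by
  by_cases hzero : ∃ v : Fin 3 → ℤ, v ≠ 0 ∧ quadForm A (intVec v) = 0
  · obtain ⟨v, hv, hAv⟩ := hzero
    exact hasSmallValues_of_quadForm_eq_zero hA hdet hv hAv hirr
  · push Not at hzero
    intro ε hε
    by_contra! hgap
    exact hirr (isRationalMultiple_of_le_abs_quadForm hA hdet hpos hneg hε fun v hv =>
      hgap v (hzero v hv))

end IntegralZero

/-! ### Small values of both signs -/

section BothSigns

theorem exists_int_sq_mul_mem_Ioc {e r : ℝ} (hr : 0 < r) (hre : r ≤ e) :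
    ∃ k : ℤ, (k : ℝ) ^ 2 * r ∈ Ioc e (4 * e) := by
  obtain ⟨n, hle, hlt⟩ := exists_nat_pow_near ((one_le_div hr).2 hre) (by norm_num : (1 : ℝ) < 4)
  rw [le_div_iff₀ hr] at hle
  rw [div_lt_iff₀ hr] at hlt
  have hsq : ((2 ^ (n + 1) : ℤ) : ℝ) ^ 2 = 4 ^ (n + 1) := by
    push_cast
    rw [← pow_mul, mul_comm, pow_mul]
    norm_num
  refine ⟨2 ^ (n + 1), by rwa [hsq], ?_⟩
  rw [hsq, pow_succ]
  linarith

theorem exists_int_add_sq_mem_Icc (l : ℝ) : ∃ x : ℤ, (x + l) ^ 2 ∈ Icc (1 / 4) 1 := by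
  obtain ⟨hlo, hhi⟩ := abs_le.1 (abs_sub_round l)
  rcases le_total 0 (l - round l) with h | h
  · refine ⟨-round l - 1, ?_, ?_⟩ <;> push_cast <;> nlinarith
  · refine ⟨-round l + 1, ?_, ?_⟩ <;> push_cast <;> nlinarith

theorem exists_int_mul_sq_sub_mem_Ico {e r : ℝ} (he : 0 < e) (her : e ≤ r) (l : ℝ) :
    ∃ x : ℤ, e * (x + l) ^ 2 - r ∈ Ico (-(2 * √(e * r))) 0 := by
  set s := √(r / e)
  have hs : 1 ≤ s := Real.one_le_sqrt.2 ((one_le_div he).2 her)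
  have hr : r = e * s ^ 2 := by
    rw [Real.sq_sqrt (div_nonneg (he.le.trans her) he.le)]
    field_simp
  have hsqrt : √(e * r) = e * s := by
    rw [hr, ← mul_assoc, ← sq, ← mul_pow, Real.sqrt_sq (by positivity)]
  obtain ⟨x, ⟨hlo, hhi⟩, -⟩ := existsUnique_add_zsmul_mem_Ico one_pos l (s - 1)
  rw [zsmul_eq_mul, mul_one, add_comm] at hlo hhi
  have hfactor : e * (x + l) ^ 2 - r = -(e * ((s - (x + l)) * (s + (x + l)))) := by
    rw [hr]
    ring
  refine ⟨x, ?_, ?_⟩ <;> rw [hfactor]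
  · rw [hsqrt, neg_le_neg_iff]
    have : (s - (x + l)) * (s + (x + l)) ≤ 1 * (2 * s) :=
      mul_le_mul (by linarith) (by linarith) (by linarith) zero_le_one
    linarith [mul_le_mul_of_nonneg_left this he.le]
  · exact neg_neg_of_pos (mul_pos he (mul_pos (by linarith) (by linarith)))

section Binary

variable {B : Matrix (Fin 2) (Fin 2) ℝ}

theorem quadForm_fin_two_eq_add_sq (hB : B.IsSymm) (h00 : B 0 0 ≠ 0) (x : Fin 2 → ℝ) :
    quadForm B x = B 0 0 * (x 0 + B 0 1 / B 0 0 * x 1) ^ 2 + B.det / B 0 0 * x 1 ^ 2 := by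
  simp only [quadForm, dotProduct, mulVec, Fin.sum_univ_two, det_fin_two, hB.apply 0 1]
  field_simp
  ring

theorem exists_quadForm_mem_Ico_of_det_lt (hB : B.IsSymm) (h00 : B 0 0 < 0) (hdet : B.det ≠ 0)
    (hlt : 20 * |B.det| < B 0 0 ^ 2) :
    ∃ v : Fin 2 → ℤ, quadForm B (intVec v) ∈ Ico (19 / 20 * B 0 0) 0 := by
  have hd : |B.det / B 0 0| < -B 0 0 / 20 := by
    rw [abs_div, abs_of_neg h00, div_lt_iff₀ (neg_pos.2 h00)]
    linarith
  simp only [quadForm_fin_two_eq_add_sq hB h00.ne, intVec]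
  set d := B.det / B 0 0
  rcases lt_or_gt_of_ne (div_ne_zero hdet h00.ne : d ≠ 0) with hneg | hpos
  · refine ⟨![-round (B 0 1 / B 0 0), 1], ?_⟩
    have hu : (B 0 1 / B 0 0 - round (B 0 1 / B 0 0)) ^ 2 ≤ (1 / 2) ^ 2 :=
      sq_le_sq.2 ((abs_sub_round _).trans_eq (by norm_num))
    rw [abs_of_neg hneg] at hd
    simp only [cons_val_zero, cons_val_one, Int.cast_neg, Int.cast_one, mul_one, one_pow,
      neg_add_eq_sub]
    constructor <;> nlinarith
  · rw [abs_of_pos hpos] at hd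
    obtain ⟨k, hklo, hkhi⟩ := exists_int_sq_mul_mem_Ioc hpos hd.le
    obtain ⟨x, hxlo, hxhi⟩ := exists_int_add_sq_mem_Icc (B 0 1 / B 0 0 * k)
    refine ⟨![x, k], ?_⟩
    simp only [cons_val_zero, cons_val_one]
    constructor <;> nlinarith

theorem exists_forall_mem_mul_lt {S : Set ℝ} (hS : S.Nonempty) {L c : ℝ} (hL : 0 < L)
    (hLS : ∀ x ∈ S, L ≤ x) (hc : c < 1) : ∃ m ∈ S, ∀ x ∈ S, c * m < x := by
  have hinf : 0 < sInf S := hL.trans_le (le_csInf hS hLS)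
  rcases le_or_gt c 0 with hc0 | hc0
  · obtain ⟨m, hm⟩ := hS
    exact ⟨m, hm, fun x hx => (mul_nonpos_of_nonpos_of_nonneg hc0
      (hL.le.trans (hLS m hm))).trans_lt (hL.trans_le (hLS x hx))⟩
  · obtain ⟨m, hm, hlt⟩ := exists_lt_of_csInf_lt hS
      ((lt_div_iff₀ hc0).2 (mul_lt_of_lt_one_right hinf hc))
    refine ⟨m, hm, fun x hx => ?_⟩
    rw [lt_div_iff₀ hc0] at hlt
    linarith [csInf_le ⟨L, hLS⟩ hx]

theorem exists_quadForm_neg_sq_le (hB : B.IsSymm) (hdet : B.det ≠ 0)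
    (hneg : ∃ v : Fin 2 → ℤ, quadForm B (intVec v) < 0) :
    ∃ v : Fin 2 → ℤ, quadForm B (intVec v) < 0 ∧
      quadForm B (intVec v) ^ 2 ≤ 20 * |B.det| := by
  by_contra! hlarge
  obtain ⟨_, ⟨v, hv, rfl⟩, hmin⟩ := exists_forall_mem_mul_lt (c := 19 / 20) (L := √(20 * |B.det|))
    (S := {m | ∃ v : Fin 2 → ℤ, quadForm B (intVec v) < 0 ∧ -quadForm B (intVec v) = m})
    (let ⟨v, hv⟩ := hneg; ⟨_, v, hv, rfl⟩) (by positivity)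
    (fun _ ⟨v, hv, hm⟩ => hm ▸ (Real.sqrt_le_left (by linarith)).2
      (by simpa using (hlarge v hv).le))
    (by norm_num)
  obtain ⟨h, γ, rfl⟩ := exists_eq_smul_mulVec_single_fin_two v
  rw [quadForm_intVec_smul, ← translate_apply_self] at hv hmin
  have hh : (1 : ℝ) ≤ (h : ℝ) ^ 2 := by
    have h0 : h ≠ 0 := by
      rintro rfl
      simp at hv
    exact_mod_cast Int.add_one_le_of_lt (by positivity : 0 < h ^ 2)
  have hb : translate B (γ : SL(2, ℝ)) 0 0 < 0 := neg_of_mul_neg_right hv (by positivity)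
  obtain ⟨w, hle, hw⟩ := exists_quadForm_mem_Ico_of_det_lt (translate_isSymm hB _) hb
    (by rwa [det_translate]) (by
      rw [det_translate, translate_apply_self]
      exact hlarge _ (by rwa [← translate_apply_self]))
  rw [quadForm_translate, SL_mulVec_intVec] at hle hw
  have := hmin _ ⟨_, hw, rfl⟩
  nlinarith

end Binary

section Ternary

variable {B : Matrix (Fin 3) (Fin 3) ℝ}

/-- The Schur complement of the upper left entry: the matrix of the binary form obtained from `B`
by completing the square in the first variable. -/
noncomputable def schurComplement (B : Matrix (Fin 3) (Fin 3) ℝ) : Matrix (Fin 2) (Fin 2) ℝ :=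
  of fun i j => B i.succ j.succ - B 0 i.succ * B 0 j.succ / B 0 0

theorem schurComplement_isSymm (hB : B.IsSymm) : (schurComplement B).IsSymm := by
  ext i j
  simp only [schurComplement, transpose_apply, of_apply, hB.apply i.succ j.succ, mul_comm]

theorem quadForm_eq_add_schurComplement (hB : B.IsSymm) (h00 : B 0 0 ≠ 0) (x : Fin 3 → ℝ) :
    quadForm B x = B 0 0 * (x 0 + (B 0 1 * x 1 + B 0 2 * x 2) / B 0 0) ^ 2 +
      quadForm (schurComplement B) ![x 1, x 2] := by
  rw [quadForm_fin_three hB]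
  simp [quadForm, schurComplement, dotProduct, mulVec, Fin.sum_univ_two, hB.apply 1 2]
  field_simp
  ring

theorem det_eq_mul_det_schurComplement (hB : B.IsSymm) (h00 : B 0 0 ≠ 0) :
    B.det = B 0 0 * (schurComplement B).det := by
  rw [det_fin_three, det_fin_two, hB.apply 0 1, hB.apply 0 2, hB.apply 1 2]
  simp [schurComplement, hB.apply 1 2]
  field_simp
  ring

theorem exists_quadForm_schurComplement_neg (hB : B.IsSymm) (h00 : 0 < B 0 0)
    (hneg : ∃ x, quadForm B x < 0) :
    ∃ v : Fin 2 → ℤ, quadForm (schurComplement B) (intVec v) < 0 := by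
  obtain ⟨x, hx⟩ := hneg
  refine exists_intVec_mem_of_isOpen_cone (W := {y | quadForm (schurComplement B) y < 0})
    (isOpen_lt (by fun_prop) continuous_const) ⟨![x 1, x 2], ?_⟩ fun y hy c hc => ?_
  · rw [quadForm_eq_add_schurComplement hB h00.ne'] at hx
    exact (le_add_of_nonneg_left (by positivity)).trans_lt hx
  · rw [mem_ofPred_eq, quadForm_smul]
    exact mul_neg_of_pos_of_neg (by positivity) hy

theorem exists_int_sq_mul_mem_Icc {e r : ℝ} (he : 0 < e) (hr : 0 < r) :
    ∃ k : ℤ, (k : ℝ) ^ 2 * r ∈ Icc e (r + 4 * e) := by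
  rcases le_total r e with h | h
  · obtain ⟨k, hlo, hhi⟩ := exists_int_sq_mul_mem_Ioc hr h
    exact ⟨k, hlo.le, by linarith⟩
  · exact ⟨1, by constructor <;> norm_num <;> linarith⟩

theorem exists_quadForm_neg_sq_le_of_apply_zero_pos (hB : B.IsSymm) (hdet : B.det ≠ 0)
    (h00 : 0 < B 0 0) (hneg : ∃ x, quadForm B x < 0) :
    ∃ v : Fin 3 → ℤ, quadForm B (intVec v) < 0 ∧
      quadForm B (intVec v) ^ 2 ≤ 4 * √(20 * |B.det| * B 0 0) + 16 * B 0 0 ^ 2 := by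
  set e := B 0 0
  have hdet' := det_eq_mul_det_schurComplement hB h00.ne'
  obtain ⟨v, hv, hsmall⟩ := exists_quadForm_neg_sq_le (schurComplement_isSymm hB)
    (right_ne_zero_of_mul (hdet' ▸ hdet)) (exists_quadForm_schurComplement_neg hB h00 hneg)
  set r := -quadForm (schurComplement B) (intVec v)
  obtain ⟨k, hek, hkr⟩ := exists_int_sq_mul_mem_Icc (r := r) h00 (neg_pos.2 hv)
  obtain ⟨x, hlo, hhi⟩ := exists_int_mul_sq_sub_mem_Ico h00 hek
    ((B 0 1 * (k * v 0) + B 0 2 * (k * v 1)) / e)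
  have hval : quadForm B (intVec ![x, k * v 0, k * v 1]) =
      e * (x + (B 0 1 * (k * v 0) + B 0 2 * (k * v 1)) / e) ^ 2 - k ^ 2 * r := by
    have heta : ![intVec ![x, k * v 0, k * v 1] 1, intVec ![x, k * v 0, k * v 1] 2] =
        (k : ℝ) • intVec v := by
      ext i
      fin_cases i <;> simp [intVec]
    rw [quadForm_eq_add_schurComplement hB h00.ne', heta, quadForm_smul]
    simp [intVec, r, e]
  refine ⟨![x, k * v 0, k * v 1], hval ▸ hhi, ?_⟩
  have her : e * r ≤ √(20 * |B.det| * e) := by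
    refine Real.le_sqrt_of_sq_le ?_
    rw [hdet', abs_mul, abs_of_pos h00]
    have : r ^ 2 ≤ 20 * |(schurComplement B).det| := by simpa only [r, neg_sq] using hsmall
    nlinarith [mul_le_mul_of_nonneg_left this (sq_nonneg e)]
  calc quadForm B (intVec ![x, k * v 0, k * v 1]) ^ 2
      ≤ (2 * √(e * (k ^ 2 * r))) ^ 2 := by
        rw [hval]
        exact sq_le_sq' hlo (hhi.le.trans (by positivity))
    _ = 4 * (e * (k ^ 2 * r)) := by
        rw [mul_pow, Real.sq_sqrt (mul_nonneg h00.le (h00.le.trans hek))]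
        norm_num
    _ ≤ 4 * √(20 * |B.det| * e) + 16 * e ^ 2 := by nlinarith

end Ternary

section Signs

variable {ι : Type*} [Fintype ι]

theorem quadForm_neg_left (A : Matrix ι ι ℝ) (x : ι → ℝ) : quadForm (-A) x = -quadForm A x := by
  rw [← neg_one_smul ℝ A, quadForm_smul_left, neg_one_mul]

/-- The form takes arbitrarily small positive values at integral vectors. -/
def HasSmallPosValues (A : Matrix ι ι ℝ) : Prop :=
  ∀ ε > 0, ∃ v : ι → ℤ, quadForm A (intVec v) ∈ Ioo 0 ε

theorem HasSmallValues.hasSmallPosValues_or_neg {A : Matrix ι ι ℝ} (h : HasSmallValues A) :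
    HasSmallPosValues A ∨ HasSmallPosValues (-A) := by
  by_contra! hneither
  simp only [HasSmallPosValues, not_forall, not_exists, exists_prop] at hneither
  obtain ⟨⟨δ, hδ, hpos⟩, ε, hε, hneg⟩ := hneither
  obtain ⟨v, hv0, hv⟩ := h (min δ ε) (lt_min hδ hε)
  rw [lt_min_iff] at hv
  rcases hv0.lt_or_gt with hlt | hgt
  · exact hneg v ⟨by rwa [quadForm_neg_left, neg_pos],
      by rw [quadForm_neg_left, ← abs_of_neg hlt]; exact hv.2⟩
  · exact hpos v ⟨hgt, by rw [← abs_of_pos hgt]; exact hv.1⟩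

variable {A : Matrix (Fin 3) (Fin 3) ℝ}

theorem HasSmallPosValues.exists_translate_apply_zero_mem_Ioo (h : HasSmallPosValues A) {δ : ℝ}
    (hδ : 0 < δ) : ∃ γ : SL(3, ℤ), translate A (γ : SL(3, ℝ)) 0 0 ∈ Ioo 0 δ := by
  obtain ⟨v, hpos, hlt⟩ := h δ hδ
  obtain ⟨k, γ, rfl⟩ := exists_eq_smul_mulVec_single_fin_three v
  rw [quadForm_intVec_smul, ← translate_apply_self] at hpos hlt
  have hk : (1 : ℝ) ≤ (k : ℝ) ^ 2 := by
    have h0 : k ≠ 0 := by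
      rintro rfl
      simp at hpos
    exact_mod_cast Int.add_one_le_of_lt (by positivity : 0 < k ^ 2)
  have hb := pos_of_mul_pos_right hpos (by positivity)
  exact ⟨γ, hb, (le_mul_of_one_le_left hb.le hk).trans_lt hlt⟩

theorem HasSmallPosValues.neg (h : HasSmallPosValues A) (hA : A.IsSymm) (hdet : A.det ≠ 0)
    (hneg : ∃ x, quadForm A x < 0) : HasSmallPosValues (-A) := fun ε hε => by
  have hcont : Continuous fun e => 4 * √(20 * |A.det| * e) + 16 * e ^ 2 := by fun_prop
  obtain ⟨δ, hδ, hsmall⟩ := Metric.eventually_nhds_iff.1 <| (hcont.tendsto 0).eventually_lt_const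
    (by simpa using pow_pos hε 2)
  obtain ⟨γ, hpos, hlt⟩ := h.exists_translate_apply_zero_mem_Ioo hδ
  obtain ⟨x, hx⟩ := hneg
  obtain ⟨v, hv, hle⟩ := exists_quadForm_neg_sq_le_of_apply_zero_pos (translate_isSymm hA _)
    (by rwa [det_translate]) hpos ⟨(γ⁻¹ : SL(3, ℝ)).1 *ᵥ x, by
      rwa [quadForm_translate, SL_mulVec_inv_mulVec]⟩
  rw [quadForm_translate, SL_mulVec_intVec] at hv hle
  rw [det_translate] at hle
  refine ⟨γ.1 *ᵥ v, ?_, ?_⟩ <;> rw [quadForm_neg_left]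
  · exact neg_pos.2 hv
  · refine lt_of_pow_lt_pow_left₀ 2 hε.le ?_
    rw [neg_sq]
    exact hle.trans_lt (hsmall (by rwa [Real.dist_eq, sub_zero, abs_of_pos hpos]))

end Signs

theorem HasSmallPosValues.exists_abs_quadForm_sub_lt {ι : Type*} [Fintype ι] {A : Matrix ι ι ℝ}
    (h : HasSmallPosValues A) {t δ : ℝ} (ht : 0 < t) (hδ : 0 < δ) :
    ∃ v : ι → ℤ, |quadForm A (intVec v) - t| < δ := by
  obtain ⟨v, hpos, hlt⟩ := h (min t (δ ^ 2 / (4 * t))) (by positivity)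
  rw [lt_min_iff, lt_div_iff₀ (by positivity)] at hlt
  obtain ⟨k, hlo, hhi⟩ := exists_int_mul_sq_sub_mem_Ico hpos hlt.1.le 0
  refine ⟨k • v, ?_⟩
  have hsqrt : √(quadForm A (intVec v) * t) < δ / 2 :=
    (Real.sqrt_lt' (half_pos hδ)).2 (by linarith)
  rw [quadForm_intVec_smul, mul_comm, ← add_zero (k : ℝ), abs_of_neg hhi]
  linarith

theorem exists_abs_quadForm_sub_lt {A : Matrix (Fin 3) (Fin 3) ℝ} (hA : A.IsSymm)
    (hdet : A.det ≠ 0) (hpos : ∃ x, 0 < quadForm A x) (hneg : ∃ x, quadForm A x < 0)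
    (hirr : ¬ IsRationalMultiple A) (t : ℝ) {δ : ℝ} (hδ : 0 < δ) :
    ∃ v : Fin 3 → ℤ, |quadForm A (intVec v) - t| < δ := by
  obtain ⟨hP, hN⟩ : HasSmallPosValues A ∧ HasSmallPosValues (-A) := by
    rcases (hasSmallValues hA hdet hpos hneg hirr).hasSmallPosValues_or_neg with h | h
    · exact ⟨h, h.neg hA hdet hneg⟩
    · refine ⟨?_, h⟩
      rw [← neg_neg A]
      exact h.neg hA.neg (by simpa [det_neg] using hdet) (by simpa [quadForm_neg_left] using hpos)
  rcases lt_trichotomy t 0 with ht | rfl | ht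
  · obtain ⟨v, hv⟩ := hN.exists_abs_quadForm_sub_lt (neg_pos.2 ht) hδ
    exact ⟨v, by rwa [quadForm_neg_left, neg_sub_neg, abs_sub_comm] at hv⟩
  · exact ⟨(0 : ℤ) • 0, by rw [quadForm_intVec_smul]; simpa using hδ⟩
  · exact hP.exists_abs_quadForm_sub_lt ht hδ

end BothSigns

/-! ### Reduction to three variables -/

section Reduction

theorem exists_intMat_mem_of_isOpen_cone {ι κ : Type*} [Finite ι] [Finite κ]
    {W : Set (Matrix ι κ ℝ)} (hW : IsOpen W) (hne : W.Nonempty)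
    (hcone : ∀ P ∈ W, ∀ c : ℝ, 0 < c → c • P ∈ W) : ∃ P : Matrix ι κ ℤ, intMat P ∈ W := by
  let e : (ι × κ → ℝ) → Matrix ι κ ℝ := fun f => of (Function.curry f)
  obtain ⟨P, hP⟩ := hne
  have he : Continuous e := continuous_pi fun i => continuous_pi fun j =>
    continuous_apply (i, j)
  obtain ⟨v, hv⟩ := exists_intVec_mem_of_isOpen_cone (hW.preimage he) ⟨Function.uncurry P, hP⟩
    fun w hw c hc => hcone _ hw c hc
  exact ⟨of (Function.curry v), hv⟩

theorem IsRationalMultiple.mem_range_cast_div {ι : Type*} {Q : Matrix ι ι ℝ}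
    (hQ : IsRationalMultiple Q) (i j k l : ι) : Q i j / Q k l ∈ range ((↑) : ℚ → ℝ) := by
  obtain ⟨c, hc, hq⟩ := hQ
  obtain ⟨p, hp⟩ := hq i j
  obtain ⟨q, hq⟩ := hq k l
  exact ⟨p / q, by rw [Rat.cast_div, ← hp, ← hq, mul_div_mul_left _ _ hc]⟩

variable {ι : Type*} [Fintype ι] {A : Matrix ι ι ℝ}

theorem isRationalMultiple_of_forall_mem_range_cast (hA : A.IsSymm)
    (h : ∀ v : ι → ℤ, quadForm A (intVec v) ∈ range ((↑) : ℚ → ℝ)) : IsRationalMultiple A := by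
  classical
  refine ⟨1, one_ne_zero, fun i j => ?_⟩
  obtain ⟨p, hp⟩ := h (Pi.single i 1)
  obtain ⟨q, hq⟩ := h (Pi.single j 1)
  obtain ⟨r, hr⟩ := h (Pi.single i 1 + Pi.single j 1)
  refine ⟨(r - p - q) / 2, ?_⟩
  rw [intVec_add, quadForm_add hA, ← hp, ← hq, intVec_single, intVec_single, mulVec_single,
    single_dotProduct] at hr
  simp only [Int.cast_one, MulOpposite.op_one, Pi.smul_apply, col_apply, one_smul,
    one_mul] at hr
  push_cast
  linarith

theorem eventually_smul_add_mem_of_isOpen_cone {E : Type*} [AddCommGroup E] [Module ℝ E]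
    [TopologicalSpace E] [ContinuousAdd E] [ContinuousSMul ℝ E] {W : Set E} (hW : IsOpen W)
    (hcone : ∀ w ∈ W, ∀ c : ℝ, 0 < c → c • w ∈ W) {p : E} (hp : p ∈ W) (x : E) :
    ∀ᶠ c : ℝ in atTop, c • p + x ∈ W := by
  have hlim : Tendsto (fun c : ℝ => p + c⁻¹ • x) atTop (𝓝 p) := by
    simpa using ((tendsto_inv_atTop_zero (𝕜 := ℝ)).smul (tendsto_const_nhds (x := x))).const_add
      p
  filter_upwards [hlim.eventually_mem (hW.mem_nhds hp), eventually_gt_atTop 0] with c hmem hc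
  simpa [smul_add, smul_smul, hc.ne'] using hcone _ hmem c hc

theorem exists_intVec_mem_irrational_quadForm (hA : A.IsSymm) (hirr : ¬ IsRationalMultiple A)
    {W : Set (ι → ℝ)} (hW : IsOpen W) (hne : W.Nonempty)
    (hcone : ∀ w ∈ W, ∀ c : ℝ, 0 < c → c • w ∈ W) :
    ∃ v : ι → ℤ, intVec v ∈ W ∧ Irrational (quadForm A (intVec v)) := by
  by_contra! hrat
  simp only [Irrational, not_not] at hrat
  obtain ⟨p, hp⟩ := exists_intVec_mem_of_isOpen_cone hW hne hcone
  refine hirr (isRationalMultiple_of_forall_mem_range_cast hA fun x => ?_)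
  obtain ⟨N, hadd, hsub⟩ := (tendsto_natCast_atTop_atTop.eventually
    ((eventually_smul_add_mem_of_isOpen_cone hW hcone hp (intVec x)).and
      (eventually_smul_add_mem_of_isOpen_cone hW hcone hp (-intVec x)))).exists
  have hvec (y : ι → ℤ) : (N : ℝ) • intVec p + intVec y = intVec (N • p + y) := by
    ext i
    simp [intVec]
  have hneg : -intVec x = intVec (-x) := by
    ext i
    simp [intVec]
  rw [hneg, hvec] at hsub
  rw [hvec] at hadd
  obtain ⟨q, hq⟩ := hrat p hp
  obtain ⟨r, hr⟩ := hrat _ hadd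
  obtain ⟨s, hs⟩ := hrat _ hsub
  rw [← hvec, quadForm_add hA] at hr
  rw [← hvec, ← hneg, ← neg_one_smul ℝ (intVec x), quadForm_add hA, quadForm_smul A (-1),
    mulVec_smul, dotProduct_smul, smul_eq_mul] at hs
  rw [quadForm_smul, ← hq] at hr hs
  refine ⟨(r + s) / 2 - N ^ 2 * q, ?_⟩
  push_cast
  linarith

/-- The triples of vectors on which `A` restricts to a nondegenerate indefinite ternary form that
is positive on the first vector and negative on the second one. -/
def indefiniteTriples (A : Matrix ι ι ℝ) : Set (Matrix ι (Fin 3) ℝ) :=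
  {P | 0 < pullback A P 0 0 ∧ pullback A P 1 1 < 0 ∧ (pullback A P).det ≠ 0}

theorem isOpen_indefiniteTriples (A : Matrix ι ι ℝ) : IsOpen (indefiniteTriples A) := by
  have hcont : Continuous (pullback A : Matrix ι (Fin 3) ℝ → Matrix (Fin 3) (Fin 3) ℝ) := by
    fun_prop
  exact (isOpen_lt continuous_const (hcont.matrix_elem 0 0)).inter
    ((isOpen_lt (hcont.matrix_elem 1 1) continuous_const).inter
      (isOpen_ne_fun hcont.matrix_det continuous_const))

theorem mul_diagonal_mem_indefiniteTriples {P : Matrix ι (Fin 3) ℝ}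
    (hP : P ∈ indefiniteTriples A) {d : Fin 3 → ℝ} (hd : ∀ i, 0 < d i) :
    P * diagonal d ∈ indefiniteTriples A := by
  obtain ⟨h0, h1, hdet⟩ := hP
  have hdiag (i : Fin 3) : pullback A (P * diagonal d) i i = d i ^ 2 * pullback A P i i := by
    rw [pullback_mul, pullback, diagonal_transpose, mul_diagonal, diagonal_mul]
    ring
  refine ⟨?_, ?_, ?_⟩
  · rw [hdiag]
    exact mul_pos (pow_pos (hd 0) 2) h0
  · rw [hdiag]
    exact mul_neg_of_pos_of_neg (pow_pos (hd 1) 2) h1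
  · rw [pullback_mul, det_pullback, det_diagonal]
    exact mul_ne_zero (pow_ne_zero 2 (Finset.prod_ne_zero_iff.2 fun i _ => (hd i).ne')) hdet

theorem isOpen_setOf_updateCol_mem_indefiniteTriples (P : Matrix ι (Fin 3) ℝ) :
    IsOpen {a | P.updateCol 0 a ∈ indefiniteTriples A} :=
  (isOpen_indefiniteTriples A).preimage (continuous_const.matrix_updateCol 0 continuous_id)

theorem updateCol_smul_mem_indefiniteTriples {P : Matrix ι (Fin 3) ℝ} {a : ι → ℝ}
    (ha : P.updateCol 0 a ∈ indefiniteTriples A) {c : ℝ} (hc : 0 < c) :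
    P.updateCol 0 (c • a) ∈ indefiniteTriples A := by
  have hmul : P.updateCol 0 (c • a) = P.updateCol 0 a * diagonal ![c, 1, 1] := by
    ext i j
    fin_cases j <;> simp [mul_comm]
  rw [hmul]
  exact mul_diagonal_mem_indefiniteTriples ha fun j => by fin_cases j <;> simp [hc]

theorem pullback_submatrix_id {κ μ : Type*} (A : Matrix ι ι ℝ) (U : Matrix ι κ ℝ) (f : μ → κ) :
    pullback A (U.submatrix id f) = (pullback A U).submatrix f f := by
  ext a b
  rw [pullback_apply, submatrix_apply, pullback_apply]
  rfl

variable [DecidableEq ι]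

theorem exists_pullback_eq_diagonal (hA : A.IsSymm) :
    ∃ (U : Matrix ι ι ℝ) (d : ι → ℝ), IsUnit U ∧ pullback A U = diagonal d := by
  have hH : A.IsHermitian := by
    rw [IsHermitian, conjTranspose_eq_transpose_of_trivial, hA.eq]
  exact ⟨hH.eigenvectorUnitary, hH.eigenvalues, Unitary.isUnit_coe, by
    simpa [pullback, star_eq_conjTranspose] using
      IsHermitian.conjStarAlgAut_star_eigenvectorUnitary hH⟩

theorem quadForm_diagonal (d x : ι → ℝ) : quadForm (diagonal d) x = ∑ i, d i * x i ^ 2 := by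
  simp only [quadForm, dotProduct, mulVec_diagonal]
  exact Finset.sum_congr rfl fun i _ => by ring

theorem exists_pos_neg_of_quadForm_diagonal {d x y : ι → ℝ} (hx : 0 < quadForm (diagonal d) x)
    (hy : quadForm (diagonal d) y < 0) : (∃ i, 0 < d i) ∧ ∃ j, d j < 0 := by
  rw [quadForm_diagonal] at hx hy
  obtain ⟨i, -, hi⟩ := Finset.exists_lt_of_sum_lt (f := 0) (Finset.sum_const_zero.trans_lt hx)
  obtain ⟨j, -, hj⟩ := Finset.exists_lt_of_sum_lt (g := 0) (hy.trans_eq Finset.sum_const_zero.symm)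
  exact ⟨⟨i, pos_of_mul_pos_left hi (sq_nonneg _)⟩, ⟨j, neg_of_mul_neg_left hj (sq_nonneg _)⟩⟩

theorem indefiniteTriples_nonempty (hn : 3 ≤ Fintype.card ι) (hA : A.IsSymm)
    (hdet : A.det ≠ 0) (hpos : ∃ x, 0 < quadForm A x) (hneg : ∃ x, quadForm A x < 0) :
    (indefiniteTriples A).Nonempty := by
  obtain ⟨U, d, hU, hd⟩ := exists_pullback_eq_diagonal hA
  obtain ⟨x, hx⟩ := hpos
  obtain ⟨y, hy⟩ := hneg
  obtain ⟨x, rfl⟩ := mulVec_surjective_iff_isUnit.2 hU x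
  obtain ⟨y, rfl⟩ := mulVec_surjective_iff_isUnit.2 hU y
  rw [← quadForm_pullback, hd] at hx hy
  obtain ⟨⟨i, hi⟩, j, hj⟩ := exists_pos_neg_of_quadForm_diagonal hx hy
  have hij : i ≠ j := fun h => lt_asymm hi (h ▸ hj)
  obtain ⟨k, -, hk⟩ := Finset.exists_mem_notMem_of_card_lt_card
    (s := {i, j}) (t := Finset.univ) (Finset.card_le_two.trans_lt hn)
  rw [Finset.mem_insert, Finset.mem_singleton, not_or] at hk
  have hinj : Function.Injective ![i, j, k] := by
    intro a b
    fin_cases a <;> fin_cases b <;> simp [hij, hij.symm, hk.1, hk.2, Ne.symm hk.1, Ne.symm hk.2]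
  have hprod : ∏ l, d l ≠ 0 := by
    rw [← det_diagonal, ← hd, det_pullback]
    exact mul_ne_zero (pow_ne_zero 2 ((isUnit_iff_isUnit_det U).1 hU).ne_zero) hdet
  have hdk : d k ≠ 0 := Finset.prod_ne_zero_iff.1 hprod k (Finset.mem_univ k)
  refine ⟨U.submatrix id ![i, j, k], ?_⟩
  rw [indefiniteTriples, mem_ofPred_eq, pullback_submatrix_id, hd, submatrix_diagonal _ _ hinj,
    det_diagonal, Fin.prod_univ_three]
  simpa [hi, hj, hi.ne', hj.ne] using hdk

theorem exists_int_indefiniteTriple (hn : 3 ≤ Fintype.card ι) (hA : A.IsSymm)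
    (hdet : A.det ≠ 0) (hpos : ∃ x, 0 < quadForm A x) (hneg : ∃ x, quadForm A x < 0)
    (hirr : ¬ IsRationalMultiple A) :
    ∃ P : Matrix ι (Fin 3) ℤ, intMat P ∈ indefiniteTriples A ∧
      ¬ IsRationalMultiple (pullback A (intMat P)) := by
  obtain ⟨P, hP⟩ := exists_intMat_mem_of_isOpen_cone (isOpen_indefiniteTriples A)
    (indefiniteTriples_nonempty hn hA hdet hpos hneg) fun P hP c hc => by
      simpa [← smul_one_eq_diagonal] using
        mul_diagonal_mem_indefiniteTriples hP (d := fun _ => c) fun _ => hc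
  have hP11 : pullback A (intMat P) 1 1 ≠ 0 := hP.2.1.ne
  set r := (pullback A (intMat P) 1 1)⁻¹ with hr
  have hrA : ¬ IsRationalMultiple (r • A) := fun h => hirr <| by
    simpa [smul_smul, r, hP11] using h.smul hP11
  have hcol : (intMat P).updateCol 0 (fun i => intMat P i 0) ∈ indefiniteTriples A := by
    rwa [updateCol_eq_self]
  obtain ⟨v, hv, hvirr⟩ := exists_intVec_mem_irrational_quadForm (hA.smul r) hrA
    (isOpen_setOf_updateCol_mem_indefiniteTriples (A := A) (intMat P))
    ⟨_, hcol⟩ fun a ha c hc => updateCol_smul_mem_indefiniteTriples ha hc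
  have hPv : intMat (P.updateCol 0 v) = (intMat P).updateCol 0 (intVec v) := map_updateCol _
  have h00 : pullback A (intMat (P.updateCol 0 v)) 0 0 = quadForm A (intVec v) := by
    have hcol0 : ((intMat P).updateCol 0 (intVec v)).col 0 = intVec v := by
      ext i
      simp
    rw [pullback_apply, hPv, hcol0, quadForm]
  have h11 : pullback A (intMat (P.updateCol 0 v)) 1 1 = pullback A (intMat P) 1 1 := by
    have hcol1 : ((intMat P).updateCol 0 (intVec v)).col 1 = (intMat P).col 1 := by
      ext i
      simp
    rw [pullback_apply, pullback_apply, hPv, hcol1]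
  refine ⟨P.updateCol 0 v, hPv ▸ hv, fun h => hvirr ?_⟩
  rw [quadForm_smul_left, hr, mul_comm, ← div_eq_mul_inv, ← h00, ← h11]
  exact h.mem_range_cast_div 0 0 1 1

end Reduction

end Oppenheim

theorem oppenheim_conjecture (n : ℕ) (hn : 3 ≤ n)
    (A : Matrix (Fin n) (Fin n) ℝ) (hA : A.IsSymm) (hA0 : A ≠ 0)
    (hdet : A.det ≠ 0)
    (hpos : ∃ x : Fin n → ℝ, 0 < x ⬝ᵥ A.mulVec x)
    (hneg : ∃ x : Fin n → ℝ, x ⬝ᵥ A.mulVec x < 0)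
    (hirr : ¬ ∃ c : ℝ, c ≠ 0 ∧ ∀ i j, ∃ q : ℚ, c * A i j = (q : ℝ)) :
    Dense {y : ℝ | ∃ x : Fin n → ℤ,
      y = (fun i => (x i : ℝ)) ⬝ᵥ A.mulVec (fun i => (x i : ℝ))} := by
  obtain ⟨P, ⟨h0, h1, hP⟩, hPirr⟩ :=
    Oppenheim.exists_int_indefiniteTriple (by simpa using hn) hA hdet hpos hneg hirr
  refine Metric.dense_iff.2 fun t δ hδ => ?_
  obtain ⟨v, hv⟩ := Oppenheim.exists_abs_quadForm_sub_lt (Oppenheim.pullback_isSymm hA _) hP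
    ⟨Pi.single 0 1, by simpa [Oppenheim.quadForm_single] using h0⟩
    ⟨Pi.single 1 1, by simpa [Oppenheim.quadForm_single] using h1⟩ hPirr t hδ
  rw [Oppenheim.quadForm_pullback_intMat] at hv
  exact ⟨_, hv, P *ᵥ v, rfl⟩
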